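/- arXiv:2509.04568 — 4 statements merged into one kernel-verified Lean document; each statement's English description precedes it below -/
import Mathlib

section
/- For all integers d, k with 1 < k < d and all n, m ≥ 1, the numbers of (d,k)-self-avoiding manifolds satisfy the pseudo-superadditivity c^SAM_{(d,k),n} · c^SAM_{(d,k),m} ≤ c^SAM_{(d,k), n+m+2(k²+3k−1)}. -/
open Filter

/-- A `k`-face of the hypercubic lattice `ℤ^d`: an orientation set `S ⊆ {1,…,d}`
together with a base vertex `v ∈ ℤ^d`. -/
abbrev Face (d : ℕ) := Finset (Fin d) × (Fin d → ℤ)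

/-- The boundary `(k-1)`-edges of a `k`-face `(S, v)`: the `(k-1)`-faces
`(S \ {i}, v)` and `(S \ {i}, v + e_i)` for `i ∈ S`. -/
def faceEdges {d : ℕ} (f : Face d) : Finset (Face d) :=
  f.1.biUnion fun i =>
    {(f.1.erase i, f.2), (f.1.erase i, f.2 + Pi.single i 1)}

/-- Two faces are adjacent if they are distinct and share a common boundary edge. -/
def FaceAdj {d : ℕ} (f g : Face d) : Prop :=
  f ≠ g ∧ ∃ e, e ∈ faceEdges f ∧ e ∈ faceEdges g

/-- A set of faces is connected with respect to adjacency. -/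
def ConnectedFaces {d : ℕ} (M : Finset (Face d)) : Prop :=
  ∀ f ∈ M, ∀ g ∈ M, Relation.ReflTransGen (fun a b => a ∈ M ∧ b ∈ M ∧ FaceAdj a b) f g

/-- A `(d,k)`-self-avoiding manifold of `k`-area `n`: a connected set of `n` `k`-faces
such that every `(k-1)`-edge bounds at most two of its `k`-faces. -/
def IsSAM (d k n : ℕ) (M : Finset (Face d)) : Prop :=
  M.card = n ∧ (∀ f ∈ M, f.1.card = k) ∧ ConnectedFaces M ∧
    ∀ e : Face d, (M.filter fun f => e ∈ faceEdges f).card ≤ 2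

/-- A closed `(d,k)`-self-avoiding manifold: every boundary edge of every face
is shared by exactly two faces. -/
def IsClosedSAM (d k n : ℕ) (M : Finset (Face d)) : Prop :=
  IsSAM d k n M ∧ ∀ f ∈ M, ∀ e ∈ faceEdges f,
    (M.filter fun g => e ∈ faceEdges g).card = 2

/-- A `(d,k)`-fixed polyominoid of `k`-area `n`: a connected set of `n` `k`-faces. -/
def IsXD (d k n : ℕ) (M : Finset (Face d)) : Prop :=
  M.card = n ∧ (∀ f ∈ M, f.1.card = k) ∧ ConnectedFaces M

/-- Translation of a face by a lattice vector. -/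
def translateFace {d : ℕ} (t : Fin d → ℤ) (f : Face d) : Face d := (f.1, f.2 + t)

/-- Two sets of faces are translation-equivalent. -/
def TransEquiv {d : ℕ} (A B : Finset (Face d)) : Prop :=
  ∃ t : Fin d → ℤ, A.image (translateFace t) = B

/-- The number of `(d,k)`-self-avoiding manifolds of `k`-area `n`, up to translation. -/
noncomputable def samCount (d k n : ℕ) : ℕ :=
  Nat.card (Quot fun A B : {M : Finset (Face d) // IsSAM d k n M} =>
    TransEquiv A.val B.val)

/-- The number of closed `(d,k)`-self-avoiding manifolds of `k`-area `n`, up to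
translation. -/
noncomputable def closedSamCount (d k n : ℕ) : ℕ :=
  Nat.card (Quot fun A B : {M : Finset (Face d) // IsClosedSAM d k n M} =>
    TransEquiv A.val B.val)

/-- The number of `(d,k)`-fixed polyominoids of `k`-area `n`, up to translation. -/
noncomputable def xdCount (d k n : ℕ) : ℕ :=
  Nat.card (Quot fun A B : {M : Finset (Face d) // IsXD d k n M} =>
    TransEquiv A.val B.val)

namespace SAMAux

variable {d : ℕ}

theorem mem_edges {e f : Face d} : e ∈ faceEdges f ↔
    ∃ i ∈ f.1, e.1 = f.1.erase i ∧ (e.2 = f.2 ∨ e.2 = f.2 + Pi.single i 1) := by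
  unfold faceEdges
  simp only [Finset.mem_biUnion, Finset.mem_insert, Finset.mem_singleton, Prod.ext_iff]
  constructor
  · rintro ⟨i, hi, h | h⟩
    · exact ⟨i, hi, h.1, Or.inl h.2⟩
    · exact ⟨i, hi, h.1, Or.inr h.2⟩
  · rintro ⟨i, hi, h, h' | h'⟩
    · exact ⟨i, hi, Or.inl ⟨h, h'⟩⟩
    · exact ⟨i, hi, Or.inr ⟨h, h'⟩⟩

def lev (z : Fin d) (f : Face d) : ℤ := 2 * f.2 z + if z ∈ f.1 then 1 else 0

theorem lev_edge {z : Fin d} {e f : Face d} (h : e ∈ faceEdges f) :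
    (lev z e = lev z f ∧ (z ∈ e.1 ↔ z ∈ f.1)) ∨
    (z ∈ f.1 ∧ z ∉ e.1 ∧ e.1 = f.1.erase z ∧
      ((lev z e = lev z f - 1 ∧ e.2 = f.2) ∨
       (lev z e = lev z f + 1 ∧ e.2 = f.2 + Pi.single z 1))) := by
  obtain ⟨i, hi, h1, h2⟩ := mem_edges.1 h
  by_cases hz : z = i
  · subst hz
    right
    refine ⟨hi, by simp [h1], h1, ?_⟩
    rcases h2 with h2 | h2
    · left; simp [lev, h1, h2, hi]
    · right; simp [lev, h1, h2, hi]; ring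
  · left
    have : z ∈ e.1 ↔ z ∈ f.1 := by simp [h1, hz]
    refine ⟨?_, this⟩
    have h3 : e.2 z = f.2 z := by
      rcases h2 with h2 | h2 <;> simp [h2, hz]
    simp [lev, this, h3]

theorem lev_flat {z : Fin d} {f : Face d} (h : z ∉ f.1) : lev z f = 2 * f.2 z := by
  simp [lev, h]

theorem lev_vert {z : Fin d} {f : Face d} (h : z ∈ f.1) : lev z f = 2 * f.2 z + 1 := by
  simp [lev, h]

theorem lev_edge_le {z : Fin d} {e f E : Face d} (h : e ∈ faceEdges f) (hE : z ∉ E.1)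
    (hl : lev z f ≤ lev z E) : lev z e ≤ lev z E := by
  rcases lev_edge (z := z) h with h1 | h1
  · omega
  · have := lev_vert h1.1
    have := lev_flat hE
    rcases h1.2.2.2 with h2 | h2 <;> omega

abbrev AdjIn (M : Finset (Face d)) (a b : Face d) : Prop := a ∈ M ∧ b ∈ M ∧ FaceAdj a b

theorem adjIn_symm {M : Finset (Face d)} {a b : Face d} (h : AdjIn M a b) : AdjIn M b a := by
  obtain ⟨h1, h2, h3, e, h4, h5⟩ := h
  exact ⟨h2, h1, h3.symm, e, h5, h4⟩

theorem reach_symm {M : Finset (Face d)} {a b : Face d}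
    (h : Relation.ReflTransGen (AdjIn M) a b) : Relation.ReflTransGen (AdjIn M) b a := by
  induction h with
  | refl => exact .refl
  | tail _ h ih => exact .head (adjIn_symm h) ih

theorem reach_lift {M N : Finset (Face d)} (φ : Face d → Face d)
    (hφ : ∀ a b, AdjIn M a b → AdjIn N (φ a) (φ b)) {a b : Face d}
    (h : Relation.ReflTransGen (AdjIn M) a b) : Relation.ReflTransGen (AdjIn N) (φ a) (φ b) := by
  induction h with
  | refl => exact .refl
  | tail _ h ih => exact .tail ih (hφ _ _ h)

theorem reach_mono {M N : Finset (Face d)} (hMN : M ⊆ N) {a b : Face d}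
    (h : Relation.ReflTransGen (AdjIn M) a b) : Relation.ReflTransGen (AdjIn N) a b :=
  reach_lift id (fun _ _ h => ⟨hMN h.1, hMN h.2.1, h.2.2⟩) h

theorem conn_of_hub {M : Finset (Face d)} (c : Face d)
    (h : ∀ f ∈ M, Relation.ReflTransGen (AdjIn M) f c) : ConnectedFaces M := by
  intro f hf g hg
  exact (h f hf).trans (reach_symm (h g hg))

def Good (k : ℕ) (M : Finset (Face d)) : Prop :=
  (∀ f ∈ M, f.1.card = k) ∧ ConnectedFaces M ∧
    ∀ e : Face d, (M.filter fun f => e ∈ faceEdges f).card ≤ 2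

theorem good_singleton {k : ℕ} {g : Face d} (h : g.1.card = k) : Good k {g} := by
  refine ⟨by simpa using h, ?_, ?_⟩
  · intro a ha b hb
    simp only [Finset.mem_singleton] at ha hb
    subst ha; subst hb
    exact .refl
  · intro e
    exact (Finset.card_filter_le _ _).trans (by simp)

theorem glue {k : ℕ} {X Y : Finset (Face d)} {E : Face d} (hX : Good k X) (hY : Good k Y)
    (hd : Disjoint X Y) (hXE : (X.filter fun f => E ∈ faceEdges f).card = 1)
    (hYE : (Y.filter fun f => E ∈ faceEdges f).card = 1)
    (hc : ∀ f ∈ X, ∀ g ∈ Y, ∀ e, e ∈ faceEdges f → e ∈ faceEdges g → e = E) :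
    Good k (X ∪ Y) := by
  refine ⟨?_, ?_, ?_⟩
  · intro f hf
    rcases Finset.mem_union.1 hf with h | h
    · exact hX.1 f h
    · exact hY.1 f h
  · obtain ⟨a, ha⟩ := Finset.card_eq_one.1 hXE
    obtain ⟨b, hb⟩ := Finset.card_eq_one.1 hYE
    have ha' : a ∈ X ∧ E ∈ faceEdges a := by
      have : a ∈ (X.filter fun f => E ∈ faceEdges f) := by simp [ha]
      simpa using this
    have hb' : b ∈ Y ∧ E ∈ faceEdges b := by
      have : b ∈ (Y.filter fun f => E ∈ faceEdges f) := by simp [hb]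
      simpa using this
    have hab : a ≠ b := fun h => Finset.disjoint_left.1 hd ha'.1 (h ▸ hb'.1)
    apply conn_of_hub a
    intro f hf
    rcases Finset.mem_union.1 hf with h | h
    · exact reach_mono Finset.subset_union_left (hX.2.1 f h a ha'.1)
    · refine (reach_mono Finset.subset_union_right (hY.2.1 f h b hb'.1)).trans ?_
      exact .single ⟨Finset.mem_union_right _ hb'.1, Finset.mem_union_left _ ha'.1, hab.symm,
        E, hb'.2, ha'.2⟩
  · intro e
    rw [Finset.filter_union]
    by_cases he : e = E
    · subst he
      refine (Finset.card_union_le _ _).trans ?_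
      omega
    · by_cases h0 : (X.filter fun f => e ∈ faceEdges f) = ∅
      · rw [h0, Finset.empty_union]; exact hY.2.2 e
      · obtain ⟨f, hf⟩ := Finset.nonempty_iff_ne_empty.2 h0
        have : (Y.filter fun f => e ∈ faceEdges f) = ∅ := by
          apply Finset.filter_eq_empty_iff.2
          intro g hg hge
          rw [Finset.mem_filter] at hf
          exact he (hc f hf.1 g hg e hf.2 hge)
        rw [this, Finset.union_empty]; exact hX.2.2 e

structure Cap (k : ℕ) (z : Fin d) (X : Finset (Face d)) (E : Face d) : Prop where
  good : Good k X
  lev_le : ∀ f ∈ X, lev z f ≤ lev z E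
  card : E.1.card + 1 = k
  flat : z ∉ E.1
  mult : (X.filter fun f => E ∈ faceEdges f).card = 1

structure CleanCap (k : ℕ) (z : Fin d) (X : Finset (Face d)) (E : Face d) : Prop
    extends Cap k z X E where
  lt : ∀ f ∈ X, lev z f < lev z E
  clean : ∀ f ∈ X, ∀ e ∈ faceEdges f, lev z e = lev z E → e = E

theorem vert_step {k : ℕ} {z : Fin d} {X : Finset (Face d)} {E : Face d} (h : Cap k z X E) :
    ∃ X' E', CleanCap k z X' E' ∧ E'.1 = E.1 ∧ X ⊆ X' ∧
      (∀ f ∈ X', f ∉ X → lev z E ≤ lev z f) ∧ lev z E ≤ lev z E' ∧ X'.card = X.card + 1 := by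
  set g : Face d := (insert z E.1, E.2) with hg
  set E' : Face d := (E.1, E.2 + Pi.single z 1) with hE'
  have hfl := h.flat
  have lE := lev_flat hfl
  have lg : lev z g = lev z E + 1 := by rw [lE]; simp [lev, hg]
  have lE' : lev z E' = lev z E + 2 := by
    rw [lE, lev_flat (f := E') hfl]; simp [hE']; ring
  have Eg : E ∈ faceEdges g :=
    mem_edges.2 ⟨z, by simp [hg], by simp [hg, Finset.erase_insert hfl], Or.inl rfl⟩
  have E'g : E' ∈ faceEdges g :=
    mem_edges.2 ⟨z, by simp [hg], by simp [hg, hE', Finset.erase_insert hfl], Or.inr rfl⟩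
  have gX : g ∉ X := fun hgX => by have := h.lev_le g hgX; omega
  have hd : Disjoint X {g} := by simpa using gX
  have hgood : Good k (X ∪ {g}) := by
    refine glue (E := E) h.good (good_singleton ?_) hd h.mult ?_ ?_
    · simp [hg, Finset.card_insert_of_notMem hfl, h.card]
    · simp [Finset.filter_singleton, Eg]
    · intro f hf g' hg' e hef heg
      rw [Finset.mem_singleton] at hg'
      subst hg'
      have h1 := lev_edge_le hef hfl (h.lev_le f hf)
      rcases lev_edge (z := z) heg with h2 | h2
      · omega
      · rcases h2.2.2.2 with h3 | h3
        · refine Prod.ext ?_ h3.2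
          rw [h2.2.2.1]; exact Finset.erase_insert hfl
        · omega
  refine ⟨X ∪ {g}, E', ⟨⟨hgood, ?_, h.card, hfl, ?_⟩, ?_, ?_⟩, rfl, Finset.subset_union_left,
    ?_, by omega, by rw [Finset.card_union_of_disjoint hd]; simp⟩
  · intro f hf
    rcases Finset.mem_union.1 hf with hf | hf
    · have := h.lev_le f hf; omega
    · rw [Finset.mem_singleton] at hf; subst hf; omega
  · rw [Finset.card_eq_one]
    refine ⟨g, ?_⟩
    ext f
    simp only [Finset.mem_filter, Finset.mem_union, Finset.mem_singleton]
    constructor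
    · rintro ⟨hf | hf, he⟩
      · have := lev_edge_le he hfl (h.lev_le f hf)
        omega
      · exact hf
    · rintro rfl
      exact ⟨Or.inr rfl, E'g⟩
  · intro f hf
    rcases Finset.mem_union.1 hf with hf | hf
    · have := h.lev_le f hf; omega
    · rw [Finset.mem_singleton] at hf; subst hf; omega
  · intro f hf e he hl
    rcases Finset.mem_union.1 hf with hf | hf
    · have := lev_edge_le he hfl (h.lev_le f hf)
      omega
    · rw [Finset.mem_singleton] at hf; subst hf
      rcases lev_edge (z := z) he with h2 | h2
      · omega
      · rcases h2.2.2.2 with h3 | h3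
        · omega
        · refine Prod.ext ?_ h3.2
          rw [h2.2.2.1]; exact Finset.erase_insert hfl
  · intro f hf hfX
    rcases Finset.mem_union.1 hf with hf | hf
    · exact absurd hf hfX
    · rw [Finset.mem_singleton] at hf; subst hf; omega

theorem exch_step {k : ℕ} {z : Fin d} {X : Finset (Face d)} {E : Face d} (h : CleanCap k z X E)
    {i j : Fin d} (hi : i ∈ E.1) (hj : j ∉ E.1) (hjz : j ≠ z) :
    ∃ X' E', Cap k z X' E' ∧ E'.1 = (insert j E.1).erase i ∧ X ⊆ X' ∧
      (∀ f ∈ X', f ∉ X → lev z E ≤ lev z f) ∧ lev z E ≤ lev z E' ∧ X'.card = X.card + 1 := by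
  set g : Face d := (insert j E.1, E.2) with hg
  set E' : Face d := ((insert j E.1).erase i, E.2) with hE'
  have hfl := h.flat
  have zg : z ∉ g.1 := by simp [hg, hfl, hjz.symm]
  have zE' : z ∉ E'.1 := by simp [hE', hfl, hjz.symm]
  have lE := lev_flat hfl
  have lg : lev z g = lev z E := by rw [lE, lev_flat zg]
  have lE' : lev z E' = lev z E := by rw [lE, lev_flat zE']
  have Eg : E ∈ faceEdges g :=
    mem_edges.2 ⟨j, by simp [hg], by simp [hg, Finset.erase_insert hj], Or.inl rfl⟩
  have E'g : E' ∈ faceEdges g :=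
    mem_edges.2 ⟨i, by simp [hg, hi], by simp [hg, hE'], Or.inl rfl⟩
  have EE' : E' ≠ E := by
    intro hh
    have : i ∈ E'.1 := by rw [hh]; exact hi
    simp [hE'] at this
  have gX : g ∉ X := fun hgX => by have := h.lt g hgX; omega
  have hd : Disjoint X {g} := by simpa using gX
  have hgood : Good k (X ∪ {g}) := by
    refine glue (E := E) h.good (good_singleton ?_) hd h.mult ?_ ?_
    · simp [hg, Finset.card_insert_of_notMem hj, h.card]
    · simp [Finset.filter_singleton, Eg]
    · intro f hf g' hg' e hef heg
      rw [Finset.mem_singleton] at hg'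
      subst hg'
      rcases lev_edge (z := z) heg with h2 | h2
      · exact h.clean f hf e hef (by omega)
      · exact absurd h2.1 zg
  refine ⟨X ∪ {g}, E', ⟨hgood, ?_, ?_, zE', ?_⟩, rfl, Finset.subset_union_left,
    ?_, by omega, by rw [Finset.card_union_of_disjoint hd]; simp⟩
  · intro f hf
    rcases Finset.mem_union.1 hf with hf | hf
    · have := h.lev_le f hf; omega
    · rw [Finset.mem_singleton] at hf; subst hf; omega
  · have h1 := h.card
    have : (insert j E.1).card = E.1.card + 1 := Finset.card_insert_of_notMem hj
    have h2 := Finset.card_erase_add_one (s := insert j E.1) (a := i) (by simp [hi])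
    simp only [hE']
    omega
  · rw [Finset.card_eq_one]
    refine ⟨g, ?_⟩
    ext f
    simp only [Finset.mem_filter, Finset.mem_union, Finset.mem_singleton]
    constructor
    · rintro ⟨hf | hf, he⟩
      · exact absurd (h.clean f hf E' he lE') EE'
      · exact hf
    · rintro rfl
      exact ⟨Or.inr rfl, E'g⟩
  · intro f hf hfX
    rcases Finset.mem_union.1 hf with hf | hf
    · exact absurd hf hfX
    · rw [Finset.mem_singleton] at hf; subst hf; omega

theorem connect {k : ℕ} {z : Fin d} (R : Finset (Fin d)) (hR : R.card + 1 = k) (hRz : z ∉ R)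
    (c : ℕ) : ∀ (X : Finset (Face d)) (E : Face d), Cap k z X E → (E.1 \ R).card = c →
    ∃ X' E', CleanCap k z X' E' ∧ E'.1 = R ∧ X ⊆ X' ∧
      (∀ f ∈ X', f ∉ X → lev z E ≤ lev z f) ∧ lev z E ≤ lev z E' ∧
      X'.card = X.card + (2 * c + 1) := by
  induction c with
  | zero =>
    intro X E h hc
    obtain ⟨X', E', h1, h2, h3, h4, h5, h6⟩ := vert_step h
    refine ⟨X', E', h1, ?_, h3, h4, h5, by omega⟩
    rw [h2]
    apply Finset.eq_of_subset_of_card_le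
    · rwa [← Finset.sdiff_eq_empty_iff_subset, ← Finset.card_eq_zero]
    · have := h.card; omega
  | succ c ih =>
    intro X E h hc
    obtain ⟨X', E', h1, h2, h3, h4, h5, h6⟩ := vert_step h
    have hcard := h.card
    obtain ⟨i, hi⟩ : (E.1 \ R).Nonempty := by rw [← Finset.card_pos]; omega
    have hcomm := Finset.card_sdiff_add_card_inter E.1 R
    have hcomm' := Finset.card_sdiff_add_card_inter R E.1
    rw [Finset.inter_comm] at hcomm'
    obtain ⟨j, hj⟩ : (R \ E.1).Nonempty := by rw [← Finset.card_pos]; omega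
    rw [Finset.mem_sdiff] at hi hj
    obtain ⟨X2, E2, g1, g2, g3, g4, g5, g6⟩ := exch_step h1 (i := i) (j := j) (by rw [h2]; exact hi.1)
      (by rw [h2]; exact hj.2) (fun hh => hRz (hh ▸ hj.1))
    have hE2 : E2.1 \ R = (E.1 \ R).erase i := by
      rw [g2, h2]
      ext x
      simp only [Finset.mem_sdiff, Finset.mem_erase, Finset.mem_insert]
      constructor
      · rintro ⟨⟨a, b | b⟩, c⟩
        · subst b; exact absurd hj.1 c
        · exact ⟨a, b, c⟩
      · rintro ⟨a, b, c⟩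
        exact ⟨⟨a, Or.inr b⟩, c⟩
    obtain ⟨X3, E3, k1, k2, k3, k4, k5, k6⟩ := ih X2 E2 g1 (by
      rw [hE2, Finset.card_erase_of_mem (by simpa using hi)]; omega)
    refine ⟨X3, E3, k1, k2, h3.trans (g3.trans k3), ?_, by omega, by omega⟩
    intro f hf hfX
    by_cases a : f ∈ X2
    · by_cases b : f ∈ X'
      · exact h4 f b hfX
      · exact h5.trans (g4 f a b)
    · exact (h5.trans g5).trans (k4 f hf a)

theorem extend {k : ℕ} {z : Fin d} (r : ℕ) : ∀ (X : Finset (Face d)) (E : Face d),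
    CleanCap k z X E →
    ∃ X' E', CleanCap k z X' E' ∧ E'.1 = E.1 ∧ X ⊆ X' ∧
      (∀ f ∈ X', f ∉ X → lev z E ≤ lev z f) ∧ lev z E ≤ lev z E' ∧
      X'.card = X.card + r := by
  induction r with
  | zero => intro X E h; exact ⟨X, E, h, rfl, subset_rfl, fun f h1 h2 => absurd h1 h2, le_rfl, rfl⟩
  | succ r ih =>
    intro X E h
    obtain ⟨X', E', h1, h2, h3, h4, h5, h6⟩ := vert_step h.toCap
    obtain ⟨X2, E2, g1, g2, g3, g4, g5, g6⟩ := ih X' E' h1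
    refine ⟨X2, E2, g1, g2.trans h2, h3.trans g3, ?_, by omega, by omega⟩
    intro f hf hfX
    by_cases b : f ∈ X'
    · exact h4 f b hfX
    · exact h5.trans (g4 f hf b)

structure Auto (φ : Face d → Face d) : Prop where
  inj : Function.Injective φ
  card : ∀ f, (φ f).1.card = f.1.card
  edges : ∀ f, faceEdges (φ f) = (faceEdges f).image φ

theorem Auto.mem {φ : Face d → Face d} (h : Auto φ) {e f : Face d} :
    φ e ∈ faceEdges (φ f) ↔ e ∈ faceEdges f := by
  rw [h.edges, Finset.mem_image]
  constructor
  · rintro ⟨a, ha, hh⟩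
    rwa [← h.inj hh]
  · intro he; exact ⟨e, he, rfl⟩

theorem Auto.mult {φ : Face d → Face d} (h : Auto φ) (M : Finset (Face d)) (e : Face d) :
    ((M.image φ).filter fun f => φ e ∈ faceEdges f).card =
      (M.filter fun f => e ∈ faceEdges f).card := by
  rw [Finset.filter_image, Finset.card_image_of_injective _ h.inj]
  simp only [h.mem]

theorem Auto.good {φ : Face d → Face d} (h : Auto φ) {k : ℕ} {M : Finset (Face d)}
    (hM : Good k M) : Good k (M.image φ) := by
  refine ⟨?_, ?_, ?_⟩
  · intro f hf
    obtain ⟨g, hg, rfl⟩ := Finset.mem_image.1 hf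
    rw [h.card]; exact hM.1 g hg
  · intro a ha b hb
    obtain ⟨a, ha, rfl⟩ := Finset.mem_image.1 ha
    obtain ⟨b, hb, rfl⟩ := Finset.mem_image.1 hb
    refine reach_lift φ ?_ (hM.2.1 a ‹_› b ‹_›)
    rintro x y ⟨hx, hy, hne, e, h1, h2⟩
    exact ⟨Finset.mem_image_of_mem _ hx, Finset.mem_image_of_mem _ hy, h.inj.ne hne, φ e,
      h.mem.2 h1, h.mem.2 h2⟩
  · intro e
    by_cases he : ∃ e', φ e' = e
    · obtain ⟨e', rfl⟩ := he
      rw [h.mult]; exact hM.2.2 e'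
    · have : ((M.image φ).filter fun f => e ∈ faceEdges f) = ∅ := by
        apply Finset.filter_eq_empty_iff.2
        intro f hf hef
        obtain ⟨g, hg, rfl⟩ := Finset.mem_image.1 hf
        rw [h.edges, Finset.mem_image] at hef
        obtain ⟨a, _, ha⟩ := hef
        exact he ⟨a, ha⟩
      rw [this]; simp

theorem auto_translate (t : Fin d → ℤ) : Auto (translateFace t) := by
  refine ⟨?_, fun _ => rfl, ?_⟩
  · intro a b h
    simp only [translateFace, Prod.mk.injEq, add_left_inj] at h
    exact Prod.ext h.1 h.2
  · intro f
    ext e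
    simp only [Finset.mem_image, mem_edges]
    constructor
    · rintro ⟨i, hi, h1, h2⟩
      refine ⟨(e.1, e.2 - t), ⟨i, hi, h1, ?_⟩, by simp [translateFace]⟩
      rcases h2 with h2 | h2
      · left; simp [h2, translateFace]
      · right; simp only [h2, translateFace]; abel
    · rintro ⟨a, ⟨i, hi, h1, h2⟩, rfl⟩
      refine ⟨i, hi, h1, ?_⟩
      rcases h2 with h2 | h2
      · left; simp [h2, translateFace]
      · right; simp only [h2, translateFace]; abel

def refl (z : Fin d) (f : Face d) : Face d :=
  (f.1, Function.update f.2 z (- f.2 z - if z ∈ f.1 then 1 else 0))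

theorem refl_refl (z : Fin d) (f : Face d) : refl z (refl z f) = f := by
  unfold refl
  refine Prod.ext rfl ?_
  simp

theorem lev_refl (z : Fin d) (f : Face d) : lev z (refl z f) = - lev z f := by
  by_cases h : z ∈ f.1
  · simp [lev, refl, h]; ring
  · simp [lev, refl, h]

theorem refl_edge (z : Fin d) {e f : Face d} (h : e ∈ faceEdges f) :
    refl z e ∈ faceEdges (refl z f) := by
  obtain ⟨i, hi, h1, h2⟩ := mem_edges.1 h
  refine mem_edges.2 ⟨i, hi, h1, ?_⟩
  by_cases hz : z = i
  · subst hz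
    rcases h2 with h2 | h2
    · right
      funext x
      by_cases hx : x = z
      · subst hx; simp [refl, h1, h2, hi]
      · simp [refl, h1, h2, hi, hx]
    · left
      funext x
      by_cases hx : x = z
      · subst hx; simp [refl, h1, h2, hi]; ring
      · simp [refl, h1, h2, hi, hx]
  · have hm : z ∈ e.1 ↔ z ∈ f.1 := by simp [h1, hz]
    rcases h2 with h2 | h2
    · left
      simp only [refl, hm, h2]
    · right
      funext x
      by_cases hx : x = z
      · subst hx; simp [refl, hm, h2, hz]
      · simp [refl, hm, h2, hx]

theorem auto_refl (z : Fin d) : Auto (refl z) := by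
  refine ⟨?_, fun _ => rfl, ?_⟩
  · intro a b h
    rw [← refl_refl z a, h, refl_refl]
  · intro f
    ext e
    rw [Finset.mem_image]
    constructor
    · intro h
      refine ⟨refl z e, ?_, refl_refl z e⟩
      have := refl_edge z h
      rwa [refl_refl] at this
    · rintro ⟨a, ha, rfl⟩
      exact refl_edge z ha

theorem lev_translate (z : Fin d) (t : Fin d → ℤ) (f : Face d) :
    lev z (translateFace t f) = lev z f + 2 * t z := by
  by_cases h : z ∈ f.1
  · simp [lev, translateFace, h]; ring
  · simp [lev, translateFace, h]; ring

def up (z : Fin d) (e : Face d) : Face d := (insert z e.1, e.2)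

def walls (z : Fin d) (f : Face d) : Finset (Face d) := (faceEdges f).image (up z)

theorem walls_translate (z : Fin d) (t : Fin d → ℤ) (f : Face d) :
    walls z (translateFace t f) = (walls z f).image (translateFace t) := by
  unfold walls
  rw [(auto_translate t).edges, Finset.image_image, Finset.image_image]
  rfl

theorem edge_flat {z : Fin d} {e f : Face d} (h : e ∈ faceEdges f) (hz : z ∉ f.1) : z ∉ e.1 := by
  obtain ⟨i, hi, h1, h2⟩ := mem_edges.1 h
  rw [h1]; simp [hz]

theorem up_inj {z : Fin d} {a b : Face d} (ha : z ∉ a.1) (hb : z ∉ b.1) (h : up z a = up z b) :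
    a = b := by
  simp only [up, Prod.mk.injEq] at h
  refine Prod.ext ?_ h.2
  rw [← Finset.erase_insert ha, h.1, Finset.erase_insert hb]

theorem edges_eq_of_walls {z : Fin d} {f g : Face d} (hf : z ∉ f.1) (hg : z ∉ g.1)
    (h : walls z f = walls z g) : faceEdges f ⊆ faceEdges g := by
  intro e he
  have : up z e ∈ walls z g := by rw [← h]; exact Finset.mem_image_of_mem _ he
  obtain ⟨a, ha, hh⟩ := Finset.mem_image.1 this
  rwa [← up_inj (edge_flat ha hg) (edge_flat he hf) hh]

theorem fst_sub {f g : Face d} (h : faceEdges f ⊆ faceEdges g) (hf : 2 ≤ f.1.card) :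
    f.1 ⊆ g.1 := by
  intro x hx
  obtain ⟨i, hi, hne⟩ := Finset.exists_mem_ne (by omega : 1 < f.1.card) x
  have h1 : ((f.1.erase i, f.2) : Face d) ∈ faceEdges g :=
    h (mem_edges.2 ⟨i, hi, rfl, Or.inl rfl⟩)
  obtain ⟨j, hj, h2, h3⟩ := mem_edges.1 h1
  have : x ∈ g.1.erase j := by rw [← h2]; simp [hne.symm, hx]
  exact Finset.mem_of_mem_erase this

theorem edges_inj {f g : Face d} (h : faceEdges f = faceEdges g) (hf : 2 ≤ f.1.card)
    (hg : 2 ≤ g.1.card) : f = g := by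
  have h1 : f.1 = g.1 := (fst_sub h.le hf).antisymm (fst_sub h.ge hg)
  obtain ⟨i, hi⟩ : f.1.Nonempty := by rw [← Finset.card_pos]; omega
  have key : ∀ a b : Face d, a.1 = b.1 → i ∈ a.1 → faceEdges a ⊆ faceEdges b →
      a.2 = b.2 ∨ a.2 = b.2 + Pi.single i 1 := by
    intro a b hab hia hsub
    have h1 : ((a.1.erase i, a.2) : Face d) ∈ faceEdges b :=
      hsub (mem_edges.2 ⟨i, hia, rfl, Or.inl rfl⟩)
    obtain ⟨j, hj, h2, h3⟩ := mem_edges.1 h1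
    have : i = j := by
      by_contra hne
      have : i ∈ b.1.erase j := by simp [hne, ← hab, hia]
      rw [← h2] at this
      simp at this
    subst this
    exact h3
  refine Prod.ext h1 ?_
  rcases key f g h1 hi h.le with a | a
  · exact a
  · rcases key g f h1.symm (h1 ▸ hi) h.ge with b | b
    · exact b.symm
    · have c := congrFun a i
      have c' := congrFun b i
      simp at c c'
      omega

theorem card_edges (f : Face d) : (faceEdges f).card = 2 * f.1.card := by
  unfold faceEdges
  rw [Finset.card_biUnion]
  · rw [Finset.sum_congr rfl (g := fun _ => 2), Finset.sum_const, smul_eq_mul, mul_comm]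
    intro i hi
    apply Finset.card_pair
    intro h
    have := congrFun (Prod.ext_iff.1 h).2 i
    simp at this
  · intro i hi j hj hij
    rw [Function.onFun, Finset.disjoint_left]
    intro e he he'
    have h1 : e.1 = f.1.erase i := by
      simp only [Finset.mem_insert, Finset.mem_singleton] at he
      rcases he with rfl | rfl <;> rfl
    have h2 : e.1 = f.1.erase j := by
      simp only [Finset.mem_insert, Finset.mem_singleton] at he'
      rcases he' with rfl | rfl <;> rfl
    have : i ∈ f.1.erase j := by simp [hij]; exact hi
    rw [← h2, h1] at this
    simp at this

theorem card_walls {z : Fin d} {f : Face d} (h : z ∉ f.1) : (walls z f).card = 2 * f.1.card := by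
  unfold walls
  rw [Finset.card_image_of_injOn, card_edges]
  intro a ha b hb hab
  exact up_inj (edge_flat ha h) (edge_flat hb h) hab

theorem lev_wall {z : Fin d} {f w : Face d} (h : z ∉ f.1) (hw : w ∈ walls z f) :
    lev z w = lev z f + 1 ∧ z ∈ w.1 := by
  obtain ⟨e, he, rfl⟩ := Finset.mem_image.1 hw
  have h1 : lev z e = lev z f := by
    rcases lev_edge (z := z) he with h2 | h2
    · exact h2.1
    · exact absurd h2.1 h
  have h2 := lev_flat (edge_flat he h)
  have h3 : z ∈ (up z e).1 := by simp [up]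
  refine ⟨?_, h3⟩
  rw [lev_vert h3, ← h1, h2]; rfl

def Dec (k n : ℕ) (z : Fin d) (U A : Finset (Face d)) : Prop :=
  A.card = n ∧ ((∃ h : ℤ, A = U.filter fun f => lev z f ≤ h) ∨
    ∃ (h : ℤ) (f : Face d), f ∈ A ∧ z ∉ f.1 ∧ f.1.card = k ∧
      (A.erase f = U.filter fun g => lev z g ≤ h) ∧
      (walls z f = U.filter fun g => lev z g = h + 1))

theorem dec_translate {k n : ℕ} {z : Fin d} {U A : Finset (Face d)} (h : Dec k n z U A)
    (t : Fin d → ℤ) : Dec k n z (U.image (translateFace t)) (A.image (translateFace t)) := by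
  have hinj := (auto_translate t).inj
  refine ⟨by rw [Finset.card_image_of_injective _ hinj, h.1], ?_⟩
  rcases h.2 with ⟨l, hl⟩ | ⟨l, f, h1, h2, h3, h4, h5⟩
  · left
    refine ⟨l + 2 * t z, ?_⟩
    rw [Finset.filter_image]
    simp only [lev_translate, add_le_add_iff_right]
    rw [← hl]
  · right
    refine ⟨l + 2 * t z, translateFace t f, Finset.mem_image_of_mem _ h1, h2, h3, ?_, ?_⟩
    · rw [Finset.filter_image]
      simp only [lev_translate, add_le_add_iff_right]
      rw [← h4, Finset.image_erase hinj]
    · rw [Finset.filter_image, walls_translate, h5]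
      simp only [lev_translate]
      congr 1
      apply Finset.filter_congr
      intro x _
      constructor <;> intro h <;> omega

theorem dec_aux {k n : ℕ} {z : Fin d} {U A : Finset (Face d)} {h l : ℤ} {f : Face d}
    (hA : A.card = n) (hk : 2 ≤ k) (h1 : f ∈ A) (h2 : z ∉ f.1) (h3 : f.1.card = k)
    (h4 : A.erase f = U.filter fun g => lev z g ≤ h)
    (h5 : walls z f = U.filter fun g => lev z g = h + 1) (hl : h < l) :
    n < (U.filter fun g => lev z g ≤ l).card := by
  have hs : (U.filter fun g => lev z g ≤ h) ∪ (U.filter fun g => lev z g = h + 1) ⊆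
      (U.filter fun g => lev z g ≤ l) := by
    intro x hx
    simp only [Finset.mem_union, Finset.mem_filter] at hx ⊢
    rcases hx with hx | hx
    · exact ⟨hx.1, by omega⟩
    · exact ⟨hx.1, by omega⟩
  have := Finset.card_le_card hs
  rw [Finset.card_union_of_disjoint, ← h4, ← h5, card_walls h2, Finset.card_erase_of_mem h1] at this
  · omega
  · rw [Finset.disjoint_left]
    intro x hx hx'
    simp only [Finset.mem_filter] at hx hx'
    omega

theorem dec_unique {k n : ℕ} {z : Fin d} {U A B : Finset (Face d)} (hk : 2 ≤ k) (hn : 1 ≤ n)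
    (hA : Dec k n z U A) (hB : Dec k n z U B) : A = B := by
  have mono : ∀ a b : ℤ, a ≤ b → (U.filter fun g => lev z g ≤ a) ⊆ (U.filter fun g => lev z g ≤ b) := by
    intro a b hab x hx
    simp only [Finset.mem_filter] at hx ⊢
    exact ⟨hx.1, by omega⟩
  obtain ⟨cA, hA⟩ := hA
  obtain ⟨cB, hB⟩ := hB
  rcases hA with ⟨l, hl⟩ | ⟨l, f, h1, h2, h3, h4, h5⟩
  · rcases hB with ⟨l', hl'⟩ | ⟨l', f', h1', h2', h3', h4', h5'⟩
    · rcases le_total l l' with hh | hh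
      · exact Finset.eq_of_subset_of_card_le (by rw [hl, hl']; exact mono _ _ hh) (by omega)
      · exact (Finset.eq_of_subset_of_card_le (by rw [hl, hl']; exact mono _ _ hh) (by omega)).symm
    · exfalso
      by_cases hh : l' < l
      · have := dec_aux cB hk h1' h2' h3' h4' h5' hh
        rw [← hl] at this; omega
      · have := Finset.card_le_card (mono l l' (by omega))
        rw [← hl, ← h4', Finset.card_erase_of_mem h1'] at this
        omega
  · rcases hB with ⟨l', hl'⟩ | ⟨l', f', h1', h2', h3', h4', h5'⟩
    · exfalso
      by_cases hh : l < l'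
      · have := dec_aux cA hk h1 h2 h3 h4 h5 hh
        rw [← hl'] at this; omega
      · have := Finset.card_le_card (mono l' l (by omega))
        rw [← hl', ← h4, Finset.card_erase_of_mem h1] at this
        omega
    · rcases lt_trichotomy l l' with hh | hh | hh
      · have := dec_aux cA hk h1 h2 h3 h4 h5 hh
        rw [← h4', Finset.card_erase_of_mem h1'] at this
        omega
      · subst hh
        have hff : f = f' := by
          have hw : walls z f = walls z f' := by rw [h5, h5']
          exact edges_inj ((edges_eq_of_walls h2 h2' hw).antisymm
            (edges_eq_of_walls h2' h2 hw.symm)) (by omega) (by omega)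
        subst hff
        rw [← Finset.insert_erase h1, h4, ← h4', Finset.insert_erase h1']
      · have := dec_aux cB hk h1' h2' h3' h4' h5' hh
        rw [← h4, Finset.card_erase_of_mem h1] at this
        omega

theorem top_unique {z : Fin d} {E w : Face d} (h : E ∈ faceEdges w) (hl : lev z E = lev z w + 1) :
    w = (insert z E.1, E.2 - Pi.single z 1) ∧ z ∈ w.1 := by
  rcases lev_edge (z := z) h with h2 | h2
  · omega
  · rcases h2.2.2.2 with h3 | h3
    · omega
    · refine ⟨Prod.ext ?_ ?_, h2.1⟩
      · simp only [h2.2.2.1, Finset.insert_erase h2.1]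
      · simp [h3.2]

theorem wall_adj {z : Fin d} {f e1 e2 : Face d} {i j : Fin d} (hz : z ∉ f.1) (hi : i ∈ f.1)
    (hj : j ∈ f.1) (hij : i ≠ j) (h1 : e1.1 = f.1.erase i)
    (h1' : e1.2 = f.2 ∨ e1.2 = f.2 + Pi.single i 1) (h2 : e2.1 = f.1.erase j)
    (h2' : e2.2 = f.2 ∨ e2.2 = f.2 + Pi.single j 1) : FaceAdj (up z e1) (up z e2) := by
  have zi : z ≠ i := fun h => hz (h ▸ hi)
  have zj : z ≠ j := fun h => hz (h ▸ hj)
  refine ⟨?_, (insert z ((f.1.erase i).erase j), e1.2 + e2.2 - f.2), ?_, ?_⟩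
  · intro h
    have h3 : insert z e1.1 = insert z e2.1 := (Prod.ext_iff.1 h).1
    have : j ∈ insert z e1.1 := by simp [h1, hj, hij.symm]
    rw [h3, h2] at this
    simp [zj.symm] at this
  · refine mem_edges.2 ⟨j, by simp [up, h1, hj, hij.symm], ?_, ?_⟩
    · simp only [up, h1]
      rw [Finset.erase_insert_of_ne zj]
    · rcases h2' with h | h
      · left; simp [up, h]
      · right; simp only [up, h]; abel
  · refine mem_edges.2 ⟨i, by simp [up, h2, hi, hij], ?_, ?_⟩
    · simp only [up, h2]
      rw [Finset.erase_insert_of_ne zi, Finset.erase_right_comm]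
    · rcases h1' with h | h
      · left; simp [up, h]
      · right; simp only [up, h]; abel

theorem side_mult {z : Fin d} {f e : Face d} (hz : z ∉ f.1) (_he : z ∈ e.1) :
    ((walls z f).filter fun w => e ∈ faceEdges w).card ≤ 2 := by
  classical
  by_cases h0 : ((walls z f).filter fun w => e ∈ faceEdges w) = ∅
  · rw [h0]; simp
  have hsub : ((walls z f).filter fun w => e ∈ faceEdges w) ⊆ (f.1 \ e.1).image fun i =>
      up z (f.1.erase i, if e.2 i = f.2 i then f.2 else f.2 + Pi.single i 1) := by
    intro w hw
    obtain ⟨hw, hew⟩ := Finset.mem_filter.1 hw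
    obtain ⟨e', he', rfl⟩ := Finset.mem_image.1 hw
    obtain ⟨i, hi, h1, h2⟩ := mem_edges.1 he'
    obtain ⟨j, hj, h3, h4⟩ := mem_edges.1 hew
    have zi : i ≠ z := fun h => hz (h ▸ hi)
    have hiw : i ∉ (up z e').1 := by simp [up, h1, zi]
    have hij : i ≠ j := fun h => hiw (h ▸ hj)
    have hie : e.2 i = e'.2 i := by
      rcases h4 with h4 | h4 <;> simp [h4, up, hij]
    refine Finset.mem_image.2 ⟨i, ?_, ?_⟩
    · rw [Finset.mem_sdiff]
      refine ⟨hi, ?_⟩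
      rw [h3]
      exact fun h => hiw (Finset.mem_of_mem_erase h)
    · congr 1
      refine Prod.ext h1.symm ?_
      rw [hie]
      rcases h2 with h2 | h2
      · simp [h2]
      · simp [h2]
  refine (Finset.card_le_card hsub).trans (Finset.card_image_le.trans ?_)
  obtain ⟨w, hw⟩ := Finset.nonempty_iff_ne_empty.2 h0
  obtain ⟨hw, hew⟩ := Finset.mem_filter.1 hw
  obtain ⟨e', he', rfl⟩ := Finset.mem_image.1 hw
  obtain ⟨i, hi, h1, h2⟩ := mem_edges.1 he'
  obtain ⟨j, hj, h3, h4⟩ := mem_edges.1 hew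
  have : f.1 \ e.1 ⊆ {i, j} := by
    intro x hx
    rw [Finset.mem_sdiff, h3] at hx
    by_contra hne
    simp only [Finset.mem_insert, Finset.mem_singleton, not_or] at hne
    apply hx.2
    simp [up, h1, hne, hx.1]
  exact (Finset.card_le_card this).trans Finset.card_le_two

theorem flat_good {k : ℕ} (hk : 2 ≤ k) {z : Fin d} {A : Finset (Face d)} (hA : Good k A)
    {f : Face d} (hf : f ∈ A) (hz : z ∉ f.1) (hmax : ∀ g ∈ A, lev z g ≤ lev z f) :
    Good k (A.erase f ∪ walls z f) := by
  have hfk := hA.1 f hf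
  refine ⟨?_, ?_, ?_⟩
  · intro g hg
    rcases Finset.mem_union.1 hg with hg | hg
    · exact hA.1 g (Finset.mem_of_mem_erase hg)
    · obtain ⟨e', he', rfl⟩ := Finset.mem_image.1 hg
      obtain ⟨i, hi, h1, h2⟩ := mem_edges.1 he'
      simp only [up]
      rw [Finset.card_insert_of_notMem (edge_flat he' hz), h1, Finset.card_erase_add_one hi, hfk]
  · obtain ⟨i0, hi0⟩ : f.1.Nonempty := by rw [← Finset.card_pos]; omega
    obtain ⟨j0, hj0, hne⟩ := Finset.exists_mem_ne (by omega : 1 < f.1.card) i0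
    have mw : ∀ e ∈ faceEdges f, up z e ∈ A.erase f ∪ walls z f := fun e he =>
      Finset.mem_union_right _ (Finset.mem_image_of_mem _ he)
    have m0 : ∀ i ∈ f.1, ((f.1.erase i, f.2) : Face d) ∈ faceEdges f := fun i hi =>
      mem_edges.2 ⟨i, hi, rfl, Or.inl rfl⟩
    have hwall : ∀ e ∈ faceEdges f, Relation.ReflTransGen (AdjIn (A.erase f ∪ walls z f))
        (up z e) (up z (f.1.erase i0, f.2)) := by
      intro e he
      obtain ⟨i, hi, h1, h2⟩ := mem_edges.1 he
      by_cases hii : i = i0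
      · subst hii
        refine .head (b := up z (f.1.erase j0, f.2)) ⟨mw e he, mw _ (m0 j0 hj0), ?_⟩
          (.single ⟨mw _ (m0 j0 hj0), mw _ (m0 i hi), ?_⟩)
        · exact wall_adj hz hi hj0 hne.symm h1 h2 rfl (Or.inl rfl)
        · exact wall_adj hz hj0 hi hne rfl (Or.inl rfl) rfl (Or.inl rfl)
      · exact .single ⟨mw e he, mw _ (m0 i0 hi0),
          wall_adj hz hi hi0 hii h1 h2 rfl (Or.inl rfl)⟩
    have hpath : ∀ g, Relation.ReflTransGen (AdjIn A) g f → g = f ∨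
        Relation.ReflTransGen (AdjIn (A.erase f ∪ walls z f)) g (up z (f.1.erase i0, f.2)) := by
      intro g hg
      induction hg using Relation.ReflTransGen.head_induction_on with
      | refl => left; rfl
      | head hab hr ih =>
        rename_i a b
        by_cases ha : a = f
        · left; exact ha
        right
        obtain ⟨haA, hbA, hab', e, hea, heb⟩ := hab
        have haX : a ∈ A.erase f ∪ walls z f :=
          Finset.mem_union_left _ (Finset.mem_erase.2 ⟨ha, haA⟩)
        by_cases hb : b = f
        · subst hb
          refine .head ⟨haX, mw e heb, ?_, e, hea, ?_⟩ (hwall e heb)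
          · intro h
            have h1 := (lev_wall hz (Finset.mem_image_of_mem (up z) heb)).1
            have h2 := hmax a haA
            rw [← h] at h1
            omega
          · exact mem_edges.2 ⟨z, by simp [up],
              by simp [up, Finset.erase_insert (edge_flat heb hz)], Or.inl rfl⟩
        · rcases ih with ih | ih
          · exact absurd ih hb
          · exact .head ⟨haX, Finset.mem_union_left _ (Finset.mem_erase.2 ⟨hb, hbA⟩), hab',
              e, hea, heb⟩ ih
    apply conn_of_hub (up z (f.1.erase i0, f.2))
    intro g hg
    rcases Finset.mem_union.1 hg with hg | hg
    · rcases hpath g (hA.2.1 g (Finset.mem_of_mem_erase hg) f hf) with h | h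
      · exact absurd h (Finset.ne_of_mem_erase hg)
      · exact h
    · obtain ⟨e, he, rfl⟩ := Finset.mem_image.1 hg
      exact hwall e he
  · intro e
    rw [Finset.filter_union]
    by_cases hW : ((walls z f).filter fun w => e ∈ faceEdges w) = ∅
    · rw [hW, Finset.union_empty]
      refine (Finset.card_le_card ?_).trans (hA.2.2 e)
      exact Finset.filter_subset_filter _ (Finset.erase_subset _ _)
    by_cases hle : lev z e ≤ lev z f
    · have key : ∀ w ∈ walls z f, e ∈ faceEdges w → e ∈ faceEdges f ∧ w = up z e := by
        intro w hw hew
        have hl := lev_wall hz hw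
        obtain ⟨e', he', rfl⟩ := Finset.mem_image.1 hw
        rcases lev_edge (z := z) hew with h2 | h2
        · omega
        · rcases h2.2.2.2 with h3 | h3
          · have : e = e' := by
              refine Prod.ext ?_ h3.2
              rw [h2.2.2.1]
              exact Finset.erase_insert (edge_flat he' hz)
            subst this
            exact ⟨he', rfl⟩
          · omega
      obtain ⟨w, hw⟩ := Finset.nonempty_iff_ne_empty.2 hW
      rw [Finset.mem_filter] at hw
      have hef := (key w hw.1 hw.2).1
      have c1 : ((walls z f).filter fun w => e ∈ faceEdges w).card ≤ 1 := by
        rw [Finset.card_le_one]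
        intro a ha b hb
        rw [Finset.mem_filter] at ha hb
        rw [(key a ha.1 ha.2).2, (key b hb.1 hb.2).2]
      have c2 : ((A.erase f).filter fun w => e ∈ faceEdges w).card ≤ 1 := by
        have := hA.2.2 e
        rw [Finset.filter_erase, Finset.card_erase_of_mem (by simp [hf, hef])]
        omega
      exact (Finset.card_union_le _ _).trans (by omega)
    · have hAe : ((A.erase f).filter fun w => e ∈ faceEdges w) = ∅ := by
        apply Finset.filter_eq_empty_iff.2
        intro g hg heg
        exact hle (lev_edge_le heg hz (hmax g (Finset.mem_of_mem_erase hg)))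
      rw [hAe, Finset.empty_union]
      by_cases hze : z ∈ e.1
      · exact side_mult hz hze
      · refine le_trans (?_ : _ ≤ 1) (by norm_num)
        have key : ∀ w ∈ walls z f, e ∈ faceEdges w →
            w = (insert z e.1, e.2 - Pi.single z 1) := by
          intro w hw hew
          have hl := lev_wall hz hw
          refine (top_unique (z := z) hew ?_).1
          rcases lev_edge (z := z) hew with h2 | h2
          · exact absurd (h2.2.2 hl.2) hze
          · rcases h2.2.2.2 with h3 | h3 <;> omega
        rw [Finset.card_le_one]
        intro a ha b hb
        rw [Finset.mem_filter] at ha hb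
        rw [key a ha.1 ha.2, key b hb.1 hb.2]

theorem base_cap {k n : ℕ} (hk : 2 ≤ k) (z : Fin d) {A : Finset (Face d)} (hA : Good k A)
    (hc : A.card = n) (hn : 1 ≤ n) :
    ∃ X E, Cap k z X E ∧ (∀ f ∈ X, lev z f < lev z E) ∧ (X.card = n ∨ X.card + 1 = n + 2 * k) ∧
      ∀ U, X ⊆ U → (∀ f ∈ U, f ∉ X → lev z E ≤ lev z f) → Dec k n z U A := by
  obtain ⟨f, hf, hmax⟩ := Finset.exists_max_image A (lev z)
    (by rw [← Finset.card_pos]; omega)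
  by_cases hz : z ∈ f.1
  · set E : Face d := (f.1.erase z, f.2 + Pi.single z 1) with hE
    have zE : z ∉ E.1 := by simp [hE]
    have lE : lev z E = lev z f + 1 := by
      rw [lev_flat zE, lev_vert hz]; simp [hE]; ring
    have hlt : ∀ g ∈ A, lev z g < lev z E := fun g hg => by have := hmax g hg; omega
    refine ⟨A, E, ⟨hA, fun g hg => (hlt g hg).le, ?_, zE, ?_⟩, hlt, Or.inl hc, ?_⟩
    · rw [← hA.1 f hf]; exact Finset.card_erase_add_one hz
    · have Ef : E ∈ faceEdges f := mem_edges.2 ⟨z, hz, rfl, Or.inr rfl⟩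
      have tf := (top_unique Ef lE).1
      rw [Finset.card_eq_one]
      refine ⟨f, ?_⟩
      ext g
      simp only [Finset.mem_filter, Finset.mem_singleton]
      constructor
      · rintro ⟨hg, hEg⟩
        rw [tf]
        refine (top_unique (z := z) hEg ?_).1
        have := hlt g hg
        rcases lev_edge (z := z) hEg with h2 | h2
        · omega
        · rcases h2.2.2.2 with h3 | h3 <;> omega
      · rintro rfl; exact ⟨hf, Ef⟩
    · intro U hU hUl
      refine ⟨hc, Or.inl ⟨lev z f, ?_⟩⟩
      ext g
      rw [Finset.mem_filter]
      constructor
      · intro hg; exact ⟨hU hg, hmax g hg⟩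
      · rintro ⟨hg, hl⟩
        by_contra hgA
        have := hUl g hg hgA
        omega
  · have hfk := hA.1 f hf
    obtain ⟨i0, hi0⟩ : f.1.Nonempty := by rw [← Finset.card_pos]; omega
    set E : Face d := (f.1.erase i0, f.2 + Pi.single z 1) with hE
    have zE : z ∉ E.1 := by simp [hE, hz]
    have lE : lev z E = lev z f + 2 := by
      rw [lev_flat zE, lev_flat hz]; simp [hE]; ring
    have hlA : ∀ g ∈ A.erase f, lev z g ≤ lev z f := fun g hg =>
      hmax g (Finset.mem_of_mem_erase hg)
    have hlW : ∀ g ∈ walls z f, lev z g = lev z f + 1 := fun g hg => (lev_wall hz hg).1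
    have hlt : ∀ g ∈ A.erase f ∪ walls z f, lev z g < lev z E := by
      intro g hg
      rcases Finset.mem_union.1 hg with hg | hg
      · have := hlA g hg; omega
      · have := hlW g hg; omega
    have hd : Disjoint (A.erase f) (walls z f) := by
      rw [Finset.disjoint_left]
      intro g h1 h2
      have := hlA g h1
      have := hlW g h2
      omega
    refine ⟨A.erase f ∪ walls z f, E, ⟨flat_good hk hA hf hz hmax, fun g hg => (hlt g hg).le,
      ?_, zE, ?_⟩, hlt, Or.inr ?_, ?_⟩
    · rw [← hfk]; exact Finset.card_erase_add_one hi0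
    · have we : ((f.1.erase i0, f.2) : Face d) ∈ faceEdges f :=
        mem_edges.2 ⟨i0, hi0, rfl, Or.inl rfl⟩
      rw [Finset.card_eq_one]
      refine ⟨up z (f.1.erase i0, f.2), ?_⟩
      ext g
      simp only [Finset.mem_filter, Finset.mem_singleton]
      constructor
      · rintro ⟨hg, hEg⟩
        rcases Finset.mem_union.1 hg with hg | hg
        · have := lev_edge_le hEg hz (hlA g hg)
          omega
        · have := hlW g hg
          rw [(top_unique (z := z) hEg (by omega)).1]
          simp [up, hE]
      · rintro rfl
        refine ⟨Finset.mem_union_right _ (Finset.mem_image_of_mem _ we), ?_⟩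
        refine mem_edges.2 ⟨z, by simp [up], ?_, Or.inr rfl⟩
        simp only [up, hE]
        rw [Finset.erase_insert (by simp [hz])]
    · rw [Finset.card_union_of_disjoint hd, card_walls hz, Finset.card_erase_of_mem hf, hfk]
      omega
    · intro U hU hUl
      refine ⟨hc, Or.inr ⟨lev z f, f, hf, hz, hfk, ?_, ?_⟩⟩
      · ext g
        rw [Finset.mem_filter]
        constructor
        · intro hg; exact ⟨hU (Finset.mem_union_left _ hg), hlA g hg⟩
        · rintro ⟨hg, hl⟩
          by_cases hgX : g ∈ A.erase f ∪ walls z f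
          · rcases Finset.mem_union.1 hgX with h | h
            · exact h
            · have := hlW g h; omega
          · have := hUl g hg hgX
            omega
      · ext g
        rw [Finset.mem_filter]
        constructor
        · intro hg; exact ⟨hU (Finset.mem_union_right _ hg), hlW g hg⟩
        · rintro ⟨hg, hl⟩
          by_cases hgX : g ∈ A.erase f ∪ walls z f
          · rcases Finset.mem_union.1 hgX with h | h
            · have := hlA g h; omega
            · exact h
          · have := hUl g hg hgX
            omega

theorem refl_translate (z : Fin d) (t : Fin d → ℤ) (f : Face d) :
    refl z (translateFace t f) = translateFace (Function.update t z (- t z)) (refl z f) := by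
  refine Prod.ext rfl ?_
  funext x
  by_cases hx : x = z
  · subst hx
    by_cases h : x ∈ f.1
    · simp [refl, translateFace, h]; ring
    · simp [refl, translateFace, h]; ring
  · simp [refl, translateFace, hx]

theorem translate_neg (t : Fin d → ℤ) (f : Face d) :
    translateFace t (translateFace (-t) f) = f := by
  simp [translateFace]

theorem neg_translate (t : Fin d → ℤ) (f : Face d) :
    translateFace (-t) (translateFace t f) = f := by
  simp [translateFace]

theorem construct {k n m : ℕ} (hk : 2 ≤ k) (z : Fin d) {A B : Finset (Face d)} (hA : Good k A)
    (hB : Good k B) (cA : A.card = n) (cB : B.card = m) (hn : 1 ≤ n) (hm : 1 ≤ m) :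
    ∃ U, IsSAM d k (n + m + 2 * (k ^ 2 + 3 * k - 1)) U ∧ Dec k n z U A ∧
      ∃ t, Dec k m z (U.image (refl z)) (B.image (translateFace t)) := by
  obtain ⟨X0, E0, hX0, ltX0, szX0, decA⟩ := base_cap hk z hA cA hn
  obtain ⟨Y0, F, hY0, ltY0, szY0, decB⟩ := base_cap hk z hB cB hm
  obtain ⟨X1, E1, hX1, e1, s1, l1, le1, c1⟩ := connect F.1 hY0.card hY0.flat _ X0 E0 hX0 rfl
  have hcle : (E0.1 \ F.1).card + 1 ≤ k := by
    have := Finset.card_le_card (Finset.sdiff_subset (s := E0.1) (t := F.1))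
    have := hX0.card
    omega
  obtain ⟨X2, E2, hX2, e2, s2, l2, le2, c2⟩ := extend
    ((n + m + 2 * (k ^ 2 + 3 * k - 1)) - X1.card - Y0.card) X1 E1 hX1
  set t : Fin d → ℤ := E2.2 - (refl z F).2 with ht
  have hFE : translateFace t (refl z F) = E2 := by
    refine Prod.ext ?_ ?_
    · simp only [translateFace, refl]; rw [e2, e1]
    · simp [translateFace, ht]
  have hlE : lev z E2 = - lev z F + 2 * t z := by rw [← hFE, lev_translate, lev_refl]
  set Y := (Y0.image (refl z)).image (translateFace t) with hY
  have memY : ∀ g, g ∈ Y ↔ ∃ y ∈ Y0, translateFace t (refl z y) = g := by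
    intro g
    rw [hY, Finset.image_image, Finset.mem_image]; rfl
  have ltY : ∀ g ∈ Y, lev z E2 < lev z g := by
    intro g hg
    obtain ⟨y, hy, rfl⟩ := (memY g).1 hg
    rw [lev_translate, lev_refl]
    have := ltY0 y hy
    omega
  have hd : Disjoint X2 Y := by
    rw [Finset.disjoint_left]
    intro g h1 h2
    have := ltY g h2
    have := hX2.lt g h1
    omega
  have hcY : Y.card = Y0.card := by
    rw [hY, Finset.card_image_of_injective _ (auto_translate t).inj,
      Finset.card_image_of_injective _ (auto_refl z).inj]
  have hgood : Good k (X2 ∪ Y) := by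
    refine glue (E := E2) hX2.good
      ((auto_translate t).good ((auto_refl z).good hY0.good)) hd hX2.mult ?_ ?_
    · have h := (auto_translate t).mult (Y0.image (refl z)) (refl z F)
      rw [hFE, (auto_refl z).mult, hY0.mult] at h
      exact h
    · intro f hf g hg e hef heg
      obtain ⟨y, hy, rfl⟩ := (memY g).1 hg
      have h1 := lev_edge_le hef hX2.flat (hX2.lev_le f hf)
      rw [(auto_translate t).edges, (auto_refl z).edges, Finset.mem_image] at heg
      obtain ⟨a, ha, rfl⟩ := heg
      obtain ⟨b, hb, rfl⟩ := Finset.mem_image.1 ha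
      have h2 := lev_edge_le hb hY0.flat (hY0.lev_le y hy)
      refine hX2.clean f hf _ hef ?_
      rw [lev_translate, lev_refl] at h1 ⊢
      omega
  have hq : 2 * k ≤ k ^ 2 := by nlinarith
  refine ⟨X2 ∪ Y, ⟨?_, hgood⟩, ?_, Function.update t z (- t z), ?_⟩
  · rw [Finset.card_union_of_disjoint hd, c2, hcY]
    generalize k ^ 2 = q at *
    omega
  · refine decA _ ((s1.trans s2).trans Finset.subset_union_left) ?_
    intro f hf hfX
    rcases Finset.mem_union.1 hf with h | h
    · by_cases h' : f ∈ X1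
      · exact l1 f h' hfX
      · exact le1.trans (l2 f h h')
    · have := ltY f h
      omega
  · set t' := Function.update t z (- t z) with ht'
    have htz : t' z = - t z := by simp [ht']
    have h1 : Dec k m z (((X2 ∪ Y).image (refl z)).image (translateFace (-t'))) B := by
      apply decB
      · intro y hy
        rw [Finset.mem_image]
        refine ⟨translateFace t' y, ?_, neg_translate _ _⟩
        rw [Finset.mem_image]
        refine ⟨translateFace t (refl z y), Finset.mem_union_right _ ((memY _).2 ⟨y, hy, rfl⟩), ?_⟩
        rw [refl_translate, refl_refl]
      · intro v hv hvY
        rw [Finset.image_image, Finset.mem_image] at hv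
        obtain ⟨u, hu, rfl⟩ := hv
        rcases Finset.mem_union.1 hu with h | h
        · have := hX2.lt u h
          simp only [Function.comp]
          rw [lev_translate, lev_refl, Pi.neg_apply, htz]
          omega
        · obtain ⟨y, hy, rfl⟩ := (memY u).1 h
          refine absurd ?_ hvY
          simp only [Function.comp]
          rw [refl_translate, refl_refl, neg_translate]
          exact hy
    have h2 := dec_translate h1 t'
    rw [Finset.image_image] at h2
    have h3 : translateFace t' ∘ translateFace (-t') = id := by
      funext f; exact translate_neg t' f
    rwa [h3, Finset.image_id] at h2

theorem transEquiv_equiv : Equivalence (TransEquiv (d := d)) := by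
  refine ⟨fun A => ⟨0, ?_⟩, ?_, ?_⟩
  · have : translateFace (0 : Fin d → ℤ) = id := by funext f; simp [translateFace]
    rw [this, Finset.image_id]
  · rintro A B ⟨t, rfl⟩
    refine ⟨-t, ?_⟩
    rw [Finset.image_image]
    have : translateFace (-t) ∘ translateFace t = id := by funext f; exact neg_translate t f
    rw [this, Finset.image_id]
  · rintro A B C ⟨t, rfl⟩ ⟨s, rfl⟩
    refine ⟨t + s, ?_⟩
    rw [Finset.image_image]
    congr 1
    funext f
    simp [translateFace, add_assoc]

theorem edge_coord {e f : Face d} (h : e ∈ faceEdges f) (i : Fin d) :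
    f.2 i ≤ e.2 i ∧ e.2 i ≤ f.2 i + 1 := by
  obtain ⟨j, hj, h1, h2⟩ := mem_edges.1 h
  rcases h2 with h2 | h2
  · simp [h2]
  · by_cases hij : i = j
    · subst hij; simp [h2]
    · simp [h2, hij]

theorem attained {M : Finset (Face d)} {f g : Face d} {i : Fin d}
    (h : Relation.ReflTransGen (AdjIn M) f g) (hf : f ∈ M) (c : ℤ) (h1 : f.2 i ≤ c)
    (h2 : c ≤ g.2 i) : c ∈ M.image fun x => x.2 i := by
  by_contra hc
  have hne : ∀ x ∈ M, x.2 i ≠ c := fun x hx hh => hc (Finset.mem_image.2 ⟨x, hx, hh⟩)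
  have key : g ∈ M ∧ g.2 i < c := by
    clear h2
    induction h with
    | refl => exact ⟨hf, lt_of_le_of_ne h1 (hne _ hf)⟩
    | tail _ hab ih =>
      obtain ⟨ha, hb, _, e, hea, heb⟩ := hab
      have := edge_coord hea i
      have := edge_coord heb i
      have := hne _ hb
      exact ⟨hb, by omega⟩
  omega

theorem spread {M : Finset (Face d)} (hM : ConnectedFaces M) {f g : Face d} (hf : f ∈ M)
    (hg : g ∈ M) (i : Fin d) : g.2 i ≤ f.2 i + M.card := by
  by_contra hlt
  have hsub : Finset.Icc (f.2 i) (f.2 i + M.card) ⊆ M.image fun x => x.2 i := by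
    intro c hc
    rw [Finset.mem_Icc] at hc
    exact attained (hM f hf g hg) hf c hc.1 (by omega)
  have := (Finset.card_le_card hsub).trans Finset.card_image_le
  rw [Int.card_Icc] at this
  omega

theorem finite_quot (k N : ℕ) :
    Finite (Quot fun A B : {M : Finset (Face d) // IsSAM d k N M} => TransEquiv A.val B.val) := by
  classical
  let K : Finset (Face d) := Finset.univ ×ˢ Fintype.piFinset fun _ => Finset.Icc (-(N : ℤ)) N
  let S := {M : {M : Finset (Face d) // IsSAM d k N M} // M.val ⊆ K}
  have : Finite S := by
    refine Finite.of_injective (β := {M // M ∈ K.powerset})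
      (fun M => ⟨M.1.1, Finset.mem_powerset.2 M.2⟩) ?_
    intro a b hab
    apply Subtype.ext
    apply Subtype.ext
    exact (Subtype.ext_iff.1 hab :)
  refine Finite.of_surjective (fun M : S => Quot.mk _ M.1) ?_
  intro q
  induction q using Quot.ind with
  | mk M =>
  obtain ⟨M, hM⟩ := M
  have hM' := hM
  obtain ⟨hc, hg⟩ := hM
  rcases M.eq_empty_or_nonempty with h0 | ⟨f, hf⟩
  · exact ⟨⟨⟨M, hM'⟩, by simp [h0]⟩, rfl⟩
  · have hS : IsSAM d k N (M.image (translateFace (-f.2))) := by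
      refine ⟨?_, (auto_translate _).good hg⟩
      rw [Finset.card_image_of_injective _ (auto_translate _).inj, hc]
    refine ⟨⟨⟨_, hS⟩, ?_⟩, ?_⟩
    · intro x hx
      obtain ⟨g, hgM, rfl⟩ := Finset.mem_image.1 hx
      simp only [K, Finset.mem_product, Finset.mem_univ, true_and, Fintype.mem_piFinset,
        Finset.mem_Icc]
      intro i
      have h1 := spread hg.2.1 hf hgM i
      have h2 := spread hg.2.1 hgM hf i
      simp only [translateFace, Pi.add_apply, Pi.neg_apply]
      omega
    · apply Quot.sound
      exact transEquiv_equiv.symm ⟨-f.2, rfl⟩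

theorem quot_exact {k N : ℕ} {A B : {M : Finset (Face d) // IsSAM d k N M}}
    (h : Quot.mk (fun A B : {M : Finset (Face d) // IsSAM d k N M} => TransEquiv A.val B.val) A =
      Quot.mk _ B) : TransEquiv A.val B.val := by
  have := Quot.eqvGen_exact h
  refine (Equivalence.eqvGen_iff (r := fun A B : {M : Finset (Face d) // IsSAM d k N M} =>
    TransEquiv A.val B.val) ?_).1 this
  exact ⟨fun a => transEquiv_equiv.refl _, fun h => transEquiv_equiv.symm h,
    fun h h' => transEquiv_equiv.trans h h'⟩

theorem main (d k : ℕ) (hk : 1 < k) (hkd : k < d)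
    (n m : ℕ) (hn : 1 ≤ n) (hm : 1 ≤ m) :
    samCount d k n * samCount d k m ≤ samCount d k (n + m + 2 * (k ^ 2 + 3 * k - 1)) := by
  have z : Fin d := ⟨0, by omega⟩
  have hcon : ∀ (A : {M : Finset (Face d) // IsSAM d k n M})
      (B : {M : Finset (Face d) // IsSAM d k m M}), _ := fun A B =>
    construct (k := k) hk z A.2.2 B.2.2 A.2.1 B.2.1 hn hm
  choose U hU hUA t hUB using hcon
  unfold samCount
  rw [← Nat.card_prod]
  have := finite_quot (d := d) k (n + m + 2 * (k ^ 2 + 3 * k - 1))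
  refine Nat.card_le_card_of_injective
    (fun q => Quot.mk _ ⟨U q.1.out q.2.out, hU q.1.out q.2.out⟩) ?_
  rintro ⟨a, b⟩ ⟨a', b'⟩ h
  obtain ⟨s, hs⟩ := quot_exact h
  simp only at hs
  have hA : TransEquiv a.out.val a'.out.val := by
    refine ⟨s, ?_⟩
    have h1 := dec_translate (hUA a.out b.out) s
    rw [hs] at h1
    exact dec_unique hk hn h1 (hUA a'.out b'.out)
  have hB : TransEquiv b.out.val b'.out.val := by
    have h1 := dec_translate (hUB a.out b.out) (Function.update s z (- s z))
    have h2 : ((U a.out b.out).image (refl z)).image (translateFace (Function.update s z (- s z))) =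
        (U a'.out b'.out).image (refl z) := by
      rw [← hs, Finset.image_image, Finset.image_image]
      congr 1
      funext f
      exact (refl_translate z s f).symm
    rw [h2] at h1
    have h3 := dec_unique hk hm h1 (hUB a'.out b'.out)
    refine transEquiv_equiv.trans ⟨t a.out b.out, rfl⟩ (transEquiv_equiv.trans ⟨_, h3⟩ ?_)
    exact transEquiv_equiv.symm ⟨_, rfl⟩
  have h1 : a = a' := by
    rw [← Quot.out_eq a, ← Quot.out_eq a']; exact Quot.sound hA
  have h2 : b = b' := by
    rw [← Quot.out_eq b, ← Quot.out_eq b']; exact Quot.sound hB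
  rw [h1, h2]

end SAMAux

theorem samCount_pseudo_superadditive (d k : ℕ) (hk : 1 < k) (hkd : k < d)
    (n m : ℕ) (hn : 1 ≤ n) (hm : 1 ≤ m) :
    samCount d k n * samCount d k m ≤ samCount d k (n + m + 2 * (k ^ 2 + 3 * k - 1)) := by
  exact SAMAux.main d k hk hkd n m hn hm
end

section
/- For all integers d, k with 1 < k < d and all n, m ≥ 1, the numbers of (d,k)-fixed polyominoids satisfy the pseudo-superadditivity c^XD_{(d,k),n} · c^XD_{(d,k),m} ≤ c^XD_{(d,k), n+m+2(k²+3k−1)}. -/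
open Filter

namespace XDAux

variable {d : ℕ}

def key (f : Face d) : Lex (Fin d → ℤ) :=
  toLex (fun i => 2 * f.2 i + if i ∈ f.1 then 1 else 0)

theorem key_inj {f g : Face d} (h : key f = key g) : f = g := by
  have h1 : ∀ i, 2 * f.2 i + (if i ∈ f.1 then 1 else 0)
      = 2 * g.2 i + if i ∈ g.1 then 1 else 0 := fun i => congrFun h i
  refine Prod.ext ?_ ?_
  · ext i
    have := h1 i
    split_ifs at this <;> first | omega | simp_all
  · ext i
    have := h1 i
    split_ifs at this <;> omega

theorem key_translate (t : Fin d → ℤ) (f : Face d) :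
    key (translateFace t f) = key f + toLex (fun i => 2 * t i) := by
  apply toLex.symm.injective
  funext i
  have h : ∀ a b c : ℤ, 2 * (a + b) + c = 2 * a + c + 2 * b := by intros; ring
  exact h _ _ _

theorem key_translate_lt (t : Fin d → ℤ) (f g : Face d) :
    key (translateFace t f) < key (translateFace t g) ↔ key f < key g := by
  rw [key_translate, key_translate, add_lt_add_iff_right]

theorem key_lt {f g : Face d}
    (h : ∀ i, 2 * f.2 i + (if i ∈ f.1 then 1 else 0)
      ≤ 2 * g.2 i + if i ∈ g.1 then 1 else 0) (hne : f ≠ g) : key f < key g := by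
  refine lt_of_le_of_ne (Pi.toLex_monotone h) (fun e => hne (key_inj e))

theorem translate_inj (t : Fin d → ℤ) : Function.Injective (translateFace t) := by
  intro f g h
  simp only [translateFace, Prod.mk.injEq, add_left_inj] at h
  exact Prod.ext h.1 h.2

theorem translate_translate (s t : Fin d → ℤ) (f : Face d) :
    translateFace s (translateFace t f) = translateFace (t + s) f := by
  simp [translateFace, add_assoc]

theorem image_image (s t : Fin d → ℤ) (M : Finset (Face d)) :
    (M.image (translateFace t)).image (translateFace s) = M.image (translateFace (t + s)) := by
  rw [Finset.image_image]
  congr 1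
  funext f
  exact translate_translate s t f

theorem image_zero (M : Finset (Face d)) : M.image (translateFace 0) = M := by
  have : (translateFace 0 : Face d → Face d) = id := by
    funext f; simp [translateFace]
  rw [this, Finset.image_id]

theorem te_equiv : Equivalence (TransEquiv (d := d)) where
  refl M := ⟨0, image_zero M⟩
  symm := by
    rintro A B ⟨t, rfl⟩
    exact ⟨-t, by rw [image_image, add_neg_cancel, image_zero]⟩
  trans := by
    rintro A B C ⟨t, rfl⟩ ⟨s, rfl⟩
    exact ⟨t + s, by rw [image_image]⟩

theorem adj_symm {f g : Face d} (h : FaceAdj f g) : FaceAdj g f :=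
  ⟨h.1.symm, h.2.imp fun _ he => ⟨he.2, he.1⟩⟩

theorem mem_edges {e f : Face d} : e ∈ faceEdges f ↔
    ∃ i ∈ f.1, e = (f.1.erase i, f.2) ∨ e = (f.1.erase i, f.2 + Pi.single i 1) := by
  simp [faceEdges]

theorem edge_translate {e f : Face d} (t : Fin d → ℤ) (h : e ∈ faceEdges f) :
    translateFace t e ∈ faceEdges (translateFace t f) := by
  rw [mem_edges] at h ⊢
  obtain ⟨i, hi, rfl | rfl⟩ := h
  · exact ⟨i, hi, Or.inl rfl⟩
  · refine ⟨i, hi, Or.inr ?_⟩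
    simp [translateFace, add_right_comm]

theorem adj_translate {f g : Face d} (t : Fin d → ℤ) (h : FaceAdj f g) :
    FaceAdj (translateFace t f) (translateFace t g) := by
  obtain ⟨hne, e, h1, h2⟩ := h
  exact ⟨fun h => hne (translate_inj t h), _, edge_translate t h1, edge_translate t h2⟩

theorem isXD_translate {k n : ℕ} {M : Finset (Face d)} (t : Fin d → ℤ) (h : IsXD d k n M) :
    IsXD d k n (M.image (translateFace t)) := by
  obtain ⟨h1, h2, h3⟩ := h
  refine ⟨by rw [Finset.card_image_of_injective _ (translate_inj t), h1], ?_, ?_⟩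
  · intro f hf
    rcases Finset.mem_image.1 hf with ⟨f, hfm, rfl⟩
    exact h2 f hfm
  · intro f hf g hg
    rcases Finset.mem_image.1 hf with ⟨f, hfm, rfl⟩
    rcases Finset.mem_image.1 hg with ⟨g, hgm, rfl⟩
    refine Relation.ReflTransGen.lift (translateFace t) ?_ _ _ (h3 f hfm g hgm)
    rintro a b ⟨ha, hb, hab⟩
    exact ⟨Finset.mem_image_of_mem _ ha, Finset.mem_image_of_mem _ hb, adj_translate t hab⟩

theorem edge_bound {e f : Face d} (h : e ∈ faceEdges f) (i : Fin d) :
    f.2 i ≤ e.2 i ∧ e.2 i ≤ f.2 i + 1 := by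
  rw [mem_edges] at h
  obtain ⟨j, _, rfl | rfl⟩ := h
  · simp
  · by_cases hij : i = j
    · subst hij; simp
    · simp [hij]

theorem adj_bound {f g : Face d} (h : FaceAdj f g) (i : Fin d) :
    f.2 i ≤ g.2 i + 1 ∧ g.2 i ≤ f.2 i + 1 := by
  obtain ⟨_, e, h1, h2⟩ := h
  have := edge_bound h1 i
  have := edge_bound h2 i
  omega

theorem connected_span {M : Finset (Face d)} (h : ConnectedFaces M) {f g : Face d}
    (hf : f ∈ M) (hg : g ∈ M) (i : Fin d) : |g.2 i - f.2 i| ≤ M.card := by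
  have key : ∀ z ∈ Finset.uIcc (f.2 i) (g.2 i), z ∈ M.image (fun x => x.2 i) := by
    have hr := h f hf g hg
    clear hg
    induction hr with
    | refl =>
      intro z hz
      simp only [Finset.uIcc_self, Finset.mem_singleton] at hz
      exact Finset.mem_image.2 ⟨f, hf, hz.symm⟩
    | @tail b c _ hbc ih =>
      intro z hz
      obtain ⟨_, hc, hadj⟩ := hbc
      have hb := adj_bound hadj i
      by_cases hzc : z = c.2 i
      · exact Finset.mem_image.2 ⟨c, hc, hzc.symm⟩
      · apply ih
        rw [Finset.mem_uIcc] at hz ⊢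
        simp only [inf_le_iff, le_sup_iff] at hz ⊢
        omega
  have h1 := Finset.card_le_card (show Finset.uIcc (f.2 i) (g.2 i) ⊆ _ from key)
  have h2 := h1.trans Finset.card_image_le
  rw [Int.card_uIcc] at h2
  rw [Int.abs_eq_natAbs]
  omega

theorem finite_quot (k n : ℕ) :
    Finite (Quot fun A B : {M : Finset (Face d) // IsXD d k n M} =>
      TransEquiv A.val B.val) := by
  classical
  let box : Finset (Face d) :=
    Finset.univ ×ˢ Fintype.piFinset (fun _ => Finset.Icc (-(n : ℤ)) n)
  have hfin : Finite {M : {M : Finset (Face d) // IsXD d k n M} // M.val ⊆ box} := by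
    refine Finite.of_injective (β := {M // M ∈ box.powerset})
      (fun M => ⟨M.1.1, Finset.mem_powerset.2 M.2⟩) ?_
    intro M N h
    simp only [Subtype.mk.injEq] at h
    exact Subtype.ext (Subtype.ext h)
  refine Finite.of_surjective
    (fun M : {M : {M : Finset (Face d) // IsXD d k n M} // M.val ⊆ box} => Quot.mk _ M.1) ?_
  intro q
  induction q using Quot.ind with
  | mk M =>
  obtain ⟨M, hM⟩ := M
  rcases M.eq_empty_or_nonempty with rfl | ⟨f, hf⟩
  · exact ⟨⟨⟨∅, hM⟩, by simp⟩, rfl⟩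
  · refine ⟨⟨⟨M.image (translateFace (-f.2)), isXD_translate _ hM⟩, ?_⟩, ?_⟩
    · intro g hg
      rcases Finset.mem_image.1 hg with ⟨g, hgm, rfl⟩
      simp only [box, Finset.mem_product, Finset.mem_univ, true_and, Fintype.mem_piFinset,
        Finset.mem_Icc, translateFace, Pi.add_apply, Pi.neg_apply]
      intro i
      have := connected_span hM.2.2 hf hgm i
      rw [hM.1, abs_le] at this
      omega
    · exact (Quot.sound ⟨-f.2, rfl⟩).symm

theorem mono_rel {M N : Finset (Face d)} (h : M ⊆ N) {f g : Face d}
    (hr : Relation.ReflTransGen (fun a b => a ∈ M ∧ b ∈ M ∧ FaceAdj a b) f g) :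
    Relation.ReflTransGen (fun a b => a ∈ N ∧ b ∈ N ∧ FaceAdj a b) f g := by
  induction hr with
  | refl => exact .refl
  | tail _ hab ih => exact ih.tail ⟨h hab.1, h hab.2.1, hab.2.2⟩

theorem connected_union {A B : Finset (Face d)} (hA : ConnectedFaces A) (hB : ConnectedFaces B)
    {f g : Face d} (hf : f ∈ A) (hg : g ∈ B) (hfg : f = g ∨ FaceAdj f g) :
    ConnectedFaces (A ∪ B) := by
  have hAs : A ⊆ A ∪ B := Finset.subset_union_left
  have hBs : B ⊆ A ∪ B := Finset.subset_union_right
  have l1 : Relation.ReflTransGen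
      (fun a b => a ∈ A ∪ B ∧ b ∈ A ∪ B ∧ FaceAdj a b) f g := by
    rcases hfg with rfl | h
    · exact .refl
    · exact .single ⟨hAs hf, hBs hg, h⟩
  have l2 : Relation.ReflTransGen
      (fun a b => a ∈ A ∪ B ∧ b ∈ A ∪ B ∧ FaceAdj a b) g f := by
    rcases hfg with rfl | h
    · exact .refl
    · exact .single ⟨hBs hg, hAs hf, adj_symm h⟩
  intro x hx y hy
  rcases Finset.mem_union.1 hx with hx | hx <;> rcases Finset.mem_union.1 hy with hy | hy
  · exact mono_rel hAs (hA x hx y hy)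
  · exact ((mono_rel hAs (hA x hx f hf)).trans l1).trans (mono_rel hBs (hB g hg y hy))
  · exact ((mono_rel hBs (hB x hx g hg)).trans l2).trans (mono_rel hAs (hA f hf y hy))
  · exact mono_rel hBs (hB x hx y hy)

theorem connected_singleton (f : Face d) : ConnectedFaces {f} := by
  intro x hx y hy
  rw [Finset.mem_singleton] at hx hy
  subst hx; subst hy; exact .refl

theorem exists_step {k L : ℕ} (hk : 1 ≤ k) {T : Finset (Fin d)} (hT : T.card = k)
    (f : Face d) (hf : f.1.card = k) (hL : (f.1 \ T).card ≤ L + 1) :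
    ∃ f' : Face d, f'.1.card = k ∧ (f'.1 \ T).card ≤ L ∧ FaceAdj f f' ∧ key f < key f' := by
  classical
  obtain ⟨S, v⟩ := f
  simp only at hf hL
  by_cases hST : S = T
  · subst hST
    obtain ⟨i, hi⟩ : S.Nonempty := Finset.card_pos.1 (by omega)
    have hne : ((S, v) : Face d) ≠ (S, v + Pi.single i 1) := by
      intro h
      have := congrFun (Prod.ext_iff.1 h).2 i
      simp at this
    refine ⟨(S, v + Pi.single i 1), hf, by simp, ⟨hne, (S.erase i, v + Pi.single i 1), ?_, ?_⟩, ?_⟩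
    · exact mem_edges.2 ⟨i, hi, Or.inr rfl⟩
    · exact mem_edges.2 ⟨i, hi, Or.inl rfl⟩
    · refine key_lt (fun j => ?_) hne
      by_cases hij : j = i
      · subst hij; simp
      · simp [hij]
  · obtain ⟨i, hiS, hiT⟩ : ∃ i ∈ S, i ∉ T := by
      by_contra! h
      exact hST (Finset.eq_of_subset_of_card_le h (by omega))
    obtain ⟨j, hjT, hjS⟩ : ∃ j ∈ T, j ∉ S := by
      by_contra! h
      exact hST (Finset.eq_of_subset_of_card_le h (by omega)).symm
    have hij : i ≠ j := fun h => hiT (h ▸ hjT)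
    have hjE : j ∉ S.erase i := fun h => hjS (Finset.mem_of_mem_erase h)
    have hne : ((S, v) : Face d) ≠ (insert j (S.erase i), v + Pi.single i 1) := by
      intro h
      have := congrFun (Prod.ext_iff.1 h).2 i
      simp at this
    refine ⟨(insert j (S.erase i), v + Pi.single i 1), ?_, ?_,
      ⟨hne, (S.erase i, v + Pi.single i 1), ?_, ?_⟩, ?_⟩
    · simp only
      rw [Finset.card_insert_of_notMem hjE, Finset.card_erase_of_mem hiS]
      omega
    · have : insert j (S.erase i) \ T = (S \ T).erase i := by
        ext x
        simp only [Finset.mem_sdiff, Finset.mem_insert, Finset.mem_erase]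
        constructor
        · rintro ⟨rfl | h, h2⟩
          · exact absurd hjT h2
          · exact ⟨h.1, h.2, h2⟩
        · rintro ⟨h1, h2, h3⟩
          exact ⟨Or.inr ⟨h1, h2⟩, h3⟩
      simp only [this]
      rw [Finset.card_erase_of_mem (Finset.mem_sdiff.2 ⟨hiS, hiT⟩)]
      omega
    · exact mem_edges.2 ⟨i, hiS, Or.inr rfl⟩
    · refine mem_edges.2 ⟨j, Finset.mem_insert_self _ _, Or.inl ?_⟩
      simp only [Finset.erase_insert hjE]
    · refine key_lt (fun x => ?_) hne
      by_cases hxi : x = i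
      · subst hxi
        simp only [Pi.add_apply, Pi.single_eq_same]
        split_ifs <;> omega
      · by_cases hxj : x = j
        · subst hxj; simp [hxi, hjS]
        · simp [hxi, hxj]

theorem exists_chain {k : ℕ} (hk : 1 ≤ k) {T : Finset (Fin d)} (hT : T.card = k) (L : ℕ) :
    ∀ f : Face d, f.1.card = k → (f.1 \ T).card ≤ L →
      ∃ (C : Finset (Face d)) (g : Face d), g.1 = T ∧ C.card = L ∧ (∀ x ∈ C, x.1.card = k) ∧
        (∀ x ∈ C, key f ≤ key x ∧ key x < key g) ∧ f ∈ insert g C ∧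
        ConnectedFaces (insert g C) := by
  classical
  induction L with
  | zero =>
    intro f hf h
    have hs : f.1 ⊆ T := Finset.sdiff_eq_empty_iff_subset.1 (Finset.card_eq_zero.1 (by omega))
    refine ⟨∅, f, Finset.eq_of_subset_of_card_le hs (by omega), rfl, by simp, by simp, by simp, ?_⟩
    simpa using connected_singleton f
  | succ L ih =>
    intro f hf h
    obtain ⟨f', h1, h2, h3, h4⟩ := exists_step hk hT f hf h
    obtain ⟨C, g, hg, hC, hCk, hCl, hfC, hcon⟩ := ih f' h1 h2
    have hfg : key f < key g := by
      rcases Finset.mem_insert.1 hfC with h | h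
      · exact h ▸ h4
      · exact h4.trans (hCl _ h).2
    have hfn : f ∉ C := fun h => absurd (hCl f h).1 (not_le.2 h4)
    refine ⟨insert f C, g, hg, by rw [Finset.card_insert_of_notMem hfn, hC], ?_, ?_, ?_, ?_⟩
    · intro x hx
      rcases Finset.mem_insert.1 hx with rfl | hx
      · exact hf
      · exact hCk x hx
    · intro x hx
      rcases Finset.mem_insert.1 hx with rfl | hx
      · exact ⟨le_rfl, hfg⟩
      · exact ⟨h4.le.trans (hCl x hx).1, (hCl x hx).2⟩
    · simp
    · have := connected_union (connected_singleton f) hcon (Finset.mem_singleton_self f) hfC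
        (Or.inr h3)
      rwa [← Finset.insert_eq, Finset.insert_comm] at this

/-- `A` is an initial segment of `M` and a translate of `B` a final one. -/
def Joins (A B M : Finset (Face d)) : Prop :=
  (A ⊆ M ∧ ∀ a ∈ A, ∀ x ∈ M, x ∉ A → key a < key x) ∧
  ∃ t, B.image (translateFace t) ⊆ M ∧
    ∀ b ∈ B.image (translateFace t), ∀ x ∈ M, x ∉ B.image (translateFace t) → key x < key b

theorem exists_join {k n m c : ℕ} (hk : 1 ≤ k) (hn : 1 ≤ n) (hm : 1 ≤ m) (hc : k ≤ c + 1)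
    {A B : Finset (Face d)} (hA : IsXD d k n A) (hB : IsXD d k m B) :
    ∃ M, IsXD d k (n + m + c) M ∧ Joins A B M := by
  classical
  obtain ⟨f, hfA, hfmax⟩ := Finset.exists_max_image A key (Finset.card_pos.1 (by rw [hA.1]; omega))
  obtain ⟨g₀, hgB, hgmin⟩ := Finset.exists_min_image B key (Finset.card_pos.1 (by rw [hB.1]; omega))
  have hfk := hA.2.1 f hfA
  obtain ⟨C, g, hg, hC, hCk, hCl, hfC, hcon⟩ := exists_chain hk (hB.2.1 g₀ hgB) (c + 1) f hfk
    ((Finset.card_le_card Finset.sdiff_subset).trans (by omega))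
  have hfg : key f < key g := by
    obtain ⟨x, hx⟩ : C.Nonempty := Finset.card_pos.1 (by omega)
    exact (hCl x hx).1.trans_lt (hCl x hx).2
  have hfC' : f ∈ C := by
    rcases Finset.mem_insert.1 hfC with h | h
    · rw [h] at hfg; exact absurd hfg (lt_irrefl _)
    · exact h
  set t := g.2 - g₀.2 with ht
  have htg : translateFace t g₀ = g := by
    refine Prod.ext hg.symm ?_
    simp [translateFace, ht]
  set B' := B.image (translateFace t) with hB'
  have hB'X : IsXD d k m B' := isXD_translate t hB
  have hgB' : g ∈ B' := htg ▸ Finset.mem_image_of_mem _ hgB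
  have hgmin' : ∀ b ∈ B', key g ≤ key b := by
    intro b hb
    rcases Finset.mem_image.1 hb with ⟨b, hbm, rfl⟩
    rw [← htg]
    exact not_lt.1 fun h => absurd (hgmin b hbm) (not_le.2 ((key_translate_lt t b g₀).1 h))
  have hD : ∀ x ∈ C.erase f, key f < key x ∧ key x < key g := by
    intro x hx
    obtain ⟨hx1, hx2⟩ := Finset.mem_erase.1 hx
    exact ⟨lt_of_le_of_ne (hCl x hx2).1 (fun e => hx1 (key_inj e).symm), (hCl x hx2).2⟩
  have d1 : Disjoint A (C.erase f) := by
    rw [Finset.disjoint_left]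
    intro x hx hx'
    exact absurd (hfmax x hx) (not_le.2 (hD x hx').1)
  have d2 : Disjoint (A ∪ C.erase f) B' := by
    rw [Finset.disjoint_left]
    intro x hx hx'
    have h1 := hgmin' x hx'
    rcases Finset.mem_union.1 hx with hx | hx
    · exact absurd ((hfmax x hx).trans_lt hfg) (not_lt.2 h1)
    · exact absurd (hD x hx).2 (not_lt.2 h1)
  refine ⟨A ∪ C.erase f ∪ B', ⟨?_, ?_, ?_⟩, ⟨?_, ?_⟩, t, ?_, ?_⟩
  · rw [Finset.card_union_of_disjoint d2, Finset.card_union_of_disjoint d1, hA.1, hB'X.1,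
      Finset.card_erase_of_mem hfC', hC]
    omega
  · intro x hx
    rcases Finset.mem_union.1 hx with hx | hx
    · rcases Finset.mem_union.1 hx with hx | hx
      · exact hA.2.1 x hx
      · exact hCk x (Finset.mem_of_mem_erase hx)
    · exact hB'X.2.1 x hx
  · have h1 := connected_union hA.2.2 hcon hfA hfC (Or.inl rfl)
    have h2 := connected_union h1 hB'X.2.2
      (Finset.mem_union_right _ (Finset.mem_insert_self g C)) hgB' (Or.inl rfl)
    convert h2 using 1
    ext x
    simp only [Finset.mem_union, Finset.mem_erase, Finset.mem_insert]
    by_cases hxf : x = f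
    · subst hxf; simp [hfA]
    · by_cases hxg : x = g
      · subst hxg; simp [hgB']
      · simp [hxf, hxg]
  · exact Finset.subset_union_left.trans Finset.subset_union_left
  · intro a ha x hx hxA
    refine (hfmax a ha).trans_lt ?_
    rcases Finset.mem_union.1 hx with hx | hx
    · rcases Finset.mem_union.1 hx with hx | hx
      · exact absurd hx hxA
      · exact (hD x hx).1
    · exact hfg.trans_le (hgmin' x hx)
  · exact Finset.subset_union_right
  · intro b hb x hx hxB
    refine lt_of_lt_of_le ?_ (hgmin' b hb)
    rcases Finset.mem_union.1 hx with hx | hx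
    · rcases Finset.mem_union.1 hx with hx | hx
      · exact (hfmax x hx).trans_lt hfg
      · exact (hD x hx).2
    · exact absurd hx hxB

theorem seg_unique {M A A' : Finset (Face d)} (r : Face d → Face d → Prop)
    (hr : ∀ a b, r a b → ¬ r b a) (hc : A.card = A'.card)
    (h1 : A ⊆ M) (h2 : ∀ a ∈ A, ∀ x ∈ M, x ∉ A → r a x)
    (h1' : A' ⊆ M) (h2' : ∀ a ∈ A', ∀ x ∈ M, x ∉ A' → r a x) : A = A' := by
  by_cases h : A ⊆ A'
  · exact Finset.eq_of_subset_of_card_le h hc.ge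
  by_cases h' : A' ⊆ A
  · exact (Finset.eq_of_subset_of_card_le h' hc.le).symm
  obtain ⟨x, hx, hx'⟩ := Finset.not_subset.1 h
  obtain ⟨y, hy, hy'⟩ := Finset.not_subset.1 h'
  exact absurd (h2' y hy x (h1 hx) hx') (hr _ _ (h2 x hx y (h1' hy) hy'))

theorem joins_inj {A B A' B' M M' : Finset (Face d)} (h : Joins A B M) (h' : Joins A' B' M')
    (hA : A.card = A'.card) (hB : B.card = B'.card) (hM : TransEquiv M M') :
    TransEquiv A A' ∧ TransEquiv B B' := by
  obtain ⟨s, rfl⟩ := hM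
  obtain ⟨⟨a1, a2⟩, t, b1, b2⟩ := h
  obtain ⟨⟨a1', a2'⟩, t', b1', b2'⟩ := h'
  have tr : ∀ X : Finset (Face d), ∀ x, translateFace s x ∉ X.image (translateFace s) → x ∉ X :=
    fun X x h hx => h (Finset.mem_image_of_mem _ hx)
  constructor
  · refine ⟨s, seg_unique (fun a b => key a < key b) (fun a b h => lt_asymm h) ?_
      (Finset.image_subset_image a1) ?_ a1' a2'⟩
    · rw [Finset.card_image_of_injective _ (translate_inj s), hA]
    · intro a ha x hx hxA
      rcases Finset.mem_image.1 ha with ⟨a, ham, rfl⟩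
      rcases Finset.mem_image.1 hx with ⟨x, hxm, rfl⟩
      exact (key_translate_lt s a x).2 (a2 a ham x hxm (tr _ _ hxA))
  · have : (B.image (translateFace t)).image (translateFace s) = B'.image (translateFace t') := by
      refine seg_unique (fun a b => key b < key a) (fun a b h => lt_asymm h) ?_
        (Finset.image_subset_image b1) ?_ b1' b2'
      · rw [Finset.card_image_of_injective _ (translate_inj s),
          Finset.card_image_of_injective _ (translate_inj t),
          Finset.card_image_of_injective _ (translate_inj t'), hB]
      · intro a ha x hx hxA
        rcases Finset.mem_image.1 ha with ⟨a, ham, rfl⟩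
        rcases Finset.mem_image.1 hx with ⟨x, hxm, rfl⟩
        exact (key_translate_lt s x a).2 (b2 a ham x hxm (tr _ _ hxA))
    exact te_equiv.trans ⟨t, rfl⟩ (te_equiv.trans ⟨s, rfl⟩
      (this ▸ te_equiv.symm ⟨t', rfl⟩))

end XDAux

open XDAux

theorem xdCount_pseudo_superadditive (d k : ℕ) (hk : 1 < k) (hkd : k < d)
    (n m : ℕ) (hn : 1 ≤ n) (hm : 1 ≤ m) :
    xdCount d k n * xdCount d k m ≤ xdCount d k (n + m + 2 * (k ^ 2 + 3 * k - 1)) := by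
  have hc : k ≤ 2 * (k ^ 2 + 3 * k - 1) + 1 := by
    have : 0 ≤ k ^ 2 := Nat.zero_le _
    omega
  generalize 2 * (k ^ 2 + 3 * k - 1) = c at hc ⊢
  unfold xdCount
  rw [← Nat.card_prod]
  have hfin := finite_quot (d := d) k (n + m + c)
  have hex : ∀ (A : {M : Finset (Face d) // IsXD d k n M})
      (B : {M : Finset (Face d) // IsXD d k m M}),
      ∃ M : {M : Finset (Face d) // IsXD d k (n + m + c) M}, Joins A.1 B.1 M.1 := by
    intro A B
    obtain ⟨M, h1, h2⟩ := exists_join (by omega) hn hm hc A.2 B.2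
    exact ⟨⟨M, h1⟩, h2⟩
  choose F hF using hex
  refine Nat.card_le_card_of_injective
    (fun p => Quot.mk _ (F (Quot.out p.1) (Quot.out p.2))) ?_
  rintro ⟨a, b⟩ ⟨a', b'⟩ h
  have hE : Equivalence (fun A B : {M : Finset (Face d) // IsXD d k (n + m + c) M} =>
      TransEquiv A.val B.val) :=
    ⟨fun A => te_equiv.refl A.1, fun h => te_equiv.symm h, fun h h' => te_equiv.trans h h'⟩
  have h' := (hE.eqvGen_iff).1 (Quot.eqvGen_exact h)
  obtain ⟨h1, h2⟩ := joins_inj (hF _ _) (hF _ _)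
    ((Quot.out a).2.1.trans (Quot.out a').2.1.symm)
    ((Quot.out b).2.1.trans (Quot.out b').2.1.symm) h'
  refine Prod.ext ?_ ?_
  · show a = a'
    rw [← Quot.out_eq a, ← Quot.out_eq a']
    exact Quot.sound h1
  · show b = b'
    rw [← Quot.out_eq b, ← Quot.out_eq b']
    exact Quot.sound h2
end

section
/- For all integers d, k with 1 < k < d, the growth constant of (d,k)-self-avoiding manifolds exists: the limit μ^SAM_{(d,k)} = lim_{n→∞} (c^SAM_{(d,k),n})^{1/n} exists. -/
open Filter

theorem mem_fe {d : ℕ} {e f : Face d} : e ∈ faceEdges f ↔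
    ∃ i ∈ f.1, e.1 = f.1.erase i ∧ (e.2 = f.2 ∨ e.2 = f.2 + Pi.single i 1) := by
  obtain ⟨E, w⟩ := e
  simp only [faceEdges, Finset.mem_biUnion, Finset.mem_insert, Finset.mem_singleton, Prod.mk.injEq]
  constructor
  · rintro ⟨i, hi, h⟩
    exact ⟨i, hi, by tauto⟩
  · rintro ⟨i, hi, h⟩
    exact ⟨i, hi, by tauto⟩

theorem faceAdj_symm {d : ℕ} {f g : Face d} (h : FaceAdj f g) : FaceAdj g f := by
  obtain ⟨h1, e, h2, h3⟩ := h
  exact ⟨h1.symm, e, h3, h2⟩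

def RelIn {d : ℕ} (M : Finset (Face d)) (a b : Face d) : Prop := a ∈ M ∧ b ∈ M ∧ FaceAdj a b

theorem relIn_symm {d : ℕ} (M : Finset (Face d)) {a b : Face d}
    (h : Relation.ReflTransGen (RelIn M) a b) : Relation.ReflTransGen (RelIn M) b a := by
  have : Std.Symm (RelIn M) := ⟨fun a b h => ⟨h.2.1, h.1, faceAdj_symm h.2.2⟩⟩
  exact Relation.ReflTransGen.stdSymm.symm _ _ h

theorem conn_of_root {d : ℕ} {M : Finset (Face d)} (r : Face d)
    (h : ∀ f ∈ M, Relation.ReflTransGen (RelIn M) f r) : ConnectedFaces M := by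
  intro f hf g hg
  exact (h f hf).trans (relIn_symm M (h g hg))

theorem relIn_mono {d : ℕ} {M N : Finset (Face d)} (hMN : M ⊆ N) {a b : Face d}
    (h : Relation.ReflTransGen (RelIn M) a b) : Relation.ReflTransGen (RelIn N) a b :=
  Relation.ReflTransGen.mono (fun _ _ h => ⟨hMN h.1, hMN h.2.1, h.2.2⟩) _ _ h

/-- symmetries -/
theorem isSAM_image {d k n : ℕ} (φ : Face d ≃ Face d)
    (h1 : ∀ f e, e ∈ faceEdges f ↔ φ e ∈ faceEdges (φ f))
    (hc : ∀ f, (φ f).1.card = f.1.card) {M : Finset (Face d)} (hM : IsSAM d k n M) :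
    IsSAM d k n (M.image φ) := by
  obtain ⟨a1, a2, a3, a4⟩ := hM
  refine ⟨by rw [Finset.card_image_of_injective _ φ.injective, a1], ?_, ?_, ?_⟩
  · intro f hf
    obtain ⟨g, hg, rfl⟩ := Finset.mem_image.1 hf
    rw [hc, a2 g hg]
  · intro f hf g hg
    obtain ⟨f, hf', rfl⟩ := Finset.mem_image.1 hf
    obtain ⟨g, hg', rfl⟩ := Finset.mem_image.1 hg
    refine (a3 f hf' g hg').lift φ ?_
    rintro a b ⟨ha, hb, hab, e, he1, he2⟩
    exact ⟨Finset.mem_image_of_mem _ ha, Finset.mem_image_of_mem _ hb,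
      fun h => hab (φ.injective h), φ e, (h1 _ _).1 he1, (h1 _ _).1 he2⟩
  · intro e
    refine le_trans ?_ (a4 (φ.symm e))
    rw [Finset.filter_image, Finset.card_image_of_injective _ φ.injective]
    apply le_of_eq
    congr 1
    apply Finset.filter_congr
    intro f _
    rw [h1 f (φ.symm e)]
    simp

def trE {d : ℕ} (t : Fin d → ℤ) : Face d ≃ Face d where
  toFun := translateFace t
  invFun := translateFace (-t)
  left_inv f := by simp [translateFace]
  right_inv f := by simp [translateFace]

theorem trE_edge {d : ℕ} (t : Fin d → ℤ) (f e : Face d) :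
    e ∈ faceEdges f ↔ trE t e ∈ faceEdges (trE t f) := by
  simp only [mem_fe, trE, Equiv.coe_fn_mk, translateFace]
  have : ∀ i : Fin d, f.2 + t + Pi.single i 1 = f.2 + Pi.single i 1 + t := fun i => by abel
  simp only [this, add_left_inj]

theorem isSAM_tr {d k n : ℕ} (t : Fin d → ℤ) {M : Finset (Face d)} (hM : IsSAM d k n M) :
    IsSAM d k n (M.image (translateFace t)) :=
  isSAM_image (trE t) (trE_edge t) (fun _ => rfl) hM

theorem tr_tr {d : ℕ} (s t : Fin d → ℤ) (M : Finset (Face d)) :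
    (M.image (translateFace s)).image (translateFace t) = M.image (translateFace (s + t)) := by
  rw [Finset.image_image]
  congr 1
  funext f
  simp [translateFace, add_assoc]

theorem tr_zero {d : ℕ} (M : Finset (Face d)) : M.image (translateFace 0) = M := by
  have : (translateFace 0 : Face d → Face d) = id := by funext f; simp [translateFace]
  rw [this, Finset.image_id]

theorem transEquiv_equivalence {d : ℕ} : Equivalence (TransEquiv (d := d)) where
  refl M := ⟨0, tr_zero M⟩
  symm := by
    rintro A B ⟨t, rfl⟩
    exact ⟨-t, by rw [tr_tr, add_neg_cancel, tr_zero]⟩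
  trans := by
    rintro A B C ⟨t, rfl⟩ ⟨s, rfl⟩
    exact ⟨t + s, by rw [tr_tr]⟩

abbrev SQ (d k n : ℕ) := Quot fun A B : {M : Finset (Face d) // IsSAM d k n M} =>
    TransEquiv A.val B.val

theorem sq_eq_iff {d k n : ℕ} (A B : {M : Finset (Face d) // IsSAM d k n M}) :
    (Quot.mk _ A : SQ d k n) = Quot.mk _ B ↔ TransEquiv A.val B.val := by
  have : Equivalence (fun A B : {M : Finset (Face d) // IsSAM d k n M} =>
    TransEquiv A.val B.val) := ⟨fun A => transEquiv_equivalence.refl _,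
      fun h => transEquiv_equivalence.symm h, fun h h' => transEquiv_equivalence.trans h h'⟩
  exact this.quot_mk_eq_iff A B

theorem card_le_of_dec {d k n : ℕ} {X : Type} [Finite X] (dec : X → Finset (Face d))
    (h : ∀ M, IsSAM d k n M → ∃ x, TransEquiv (dec x) M) :
    Finite (SQ d k n) ∧ samCount d k n ≤ Nat.card X := by
  choose c hc using fun q : SQ d k n => h q.out.1 q.out.2
  have hinj : Function.Injective c := by
    intro p q hpq
    have h1 := hc p
    have h2 := hc q
    rw [hpq] at h1
    have := (sq_eq_iff p.out q.out).2
      (transEquiv_equivalence.trans (transEquiv_equivalence.symm h1) h2)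
    rwa [Quot.out_eq, Quot.out_eq] at this
  exact ⟨Finite.of_injective c hinj, Nat.card_le_card_of_injective c hinj⟩

/-! exponential upper bound -/

abbrev St (d : ℕ) := Finset (Fin d) × (Fin d → Fin 3)

def act {d : ℕ} (s : St d) (f : Face d) : Face d := (s.1, f.2 + fun i => ((s.2 i : ℕ) : ℤ) - 1)

theorem adj_act {d : ℕ} {f g : Face d} (h : FaceAdj f g) : ∃ s, act s f = g := by
  obtain ⟨_, e, h1, h2⟩ := h
  obtain ⟨i, _, _, h1⟩ := mem_fe.1 h1
  obtain ⟨j, _, _, h2⟩ := mem_fe.1 h2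
  have key : ∀ x, -1 ≤ g.2 x - f.2 x ∧ g.2 x - f.2 x ≤ 1 := by
    intro x
    have e1 : e.2 x = f.2 x ∨ e.2 x = f.2 x + 1 := by
      rcases h1 with h | h
      · simp [h]
      · rw [h]; by_cases hx : x = i <;> simp [hx]
    have e2 : e.2 x = g.2 x ∨ e.2 x = g.2 x + 1 := by
      rcases h2 with h | h
      · simp [h]
      · rw [h]; by_cases hx : x = j <;> simp [hx]
    omega
  refine ⟨(g.1, fun x => ⟨(g.2 x - f.2 x + 1).toNat, by have := key x; omega⟩), ?_⟩
  refine Prod.ext rfl ?_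
  funext x
  have := key x
  simp only [act, Pi.add_apply]
  omega

def walk {d : ℕ} : Face d → List (St d) → List (Face d)
  | f, [] => [f]
  | f, s :: ss => f :: walk (act s f) ss

theorem walk_of_chain {d : ℕ} (l : List (Face d)) : ∀ f, List.IsChain FaceAdj (f :: l) →
    ∃ ss : List (St d), ss.length = l.length ∧ walk f ss = f :: l := by
  induction l with
  | nil => intro f _; exact ⟨[], rfl, rfl⟩
  | cons g l ih =>
    intro f h
    rw [List.isChain_cons_cons] at h
    obtain ⟨s, hs⟩ := adj_act h.1
    obtain ⟨ss, h1, h2⟩ := ih g h.2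
    exact ⟨s :: ss, by simp [h1], by simp [walk, hs, h2]⟩

theorem exists_cover {d : ℕ} {M : Finset (Face d)} (hM : ConnectedFaces M) {r : Face d}
    (hr : r ∈ M) (m : ℕ) (hm : m + 1 ≤ M.card) :
    ∃ l : List (Face d), l.length = 2 * m ∧ List.IsChain FaceAdj (r :: l) ∧
      (r :: l).toFinset ⊆ M ∧ (r :: l).toFinset.card = m + 1 := by
  induction m with
  | zero => exact ⟨[], by simp, by simp, by simpa using hr, by simp⟩
  | succ m ih =>
    obtain ⟨l, h1, h2, h3, h4⟩ := ih (by omega)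
    -- find adjacent
    obtain ⟨p, q, hp, hqM, hq, hpq⟩ : ∃ p q, p ∈ (r :: l).toFinset ∧ q ∈ M ∧
        q ∉ (r :: l).toFinset ∧ FaceAdj p q := by
      by_contra hcon
      push Not at hcon
      have : M ⊆ (r :: l).toFinset := by
        intro f hf
        have := hM r hr f hf
        induction this with
        | refl => simp
        | tail _ hab ih =>
          by_contra hb
          exact hcon _ _ (ih hab.1) hab.2.1 hb hab.2.2
      have := Finset.card_le_card this
      omega
    obtain ⟨l1, l2, hl⟩ := List.append_of_mem (List.mem_toFinset.1 hp)
    have hset : (l1 ++ p :: q :: p :: l2).toFinset = insert q (r :: l).toFinset := by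
      rw [hl]; ext x; simp only [List.mem_toFinset, List.mem_append, List.mem_cons, Finset.mem_insert]; tauto
    have hch : List.IsChain FaceAdj (l1 ++ p :: q :: p :: l2) := by
      rw [hl] at h2
      rw [List.isChain_split] at h2 ⊢
      exact ⟨h2.1, by
        rw [List.isChain_cons_cons, List.isChain_cons_cons]
        exact ⟨hpq, faceAdj_symm hpq, h2.2⟩⟩
    have hlen : (l1 ++ p :: q :: p :: l2).length = 2 * (m + 1) + 1 := by
      have := congrArg List.length hl
      simp at this ⊢
      omega
    obtain ⟨l', hl'⟩ : ∃ l', l1 ++ p :: q :: p :: l2 = r :: l' := by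
      cases l1 with
      | nil => simp at hl; exact ⟨_, by simp [hl.1]; rfl⟩
      | cons a t => simp at hl; exact ⟨_, by simp [hl.1]; rfl⟩
    rw [hl'] at hset hch hlen
    refine ⟨l', by simpa using hlen, hch, ?_, ?_⟩
    · rw [hset]; exact Finset.insert_subset hqM h3
    · rw [hset, Finset.card_insert_of_notMem hq, h4]

theorem samCount_upper (d k : ℕ) (m : ℕ) : Finite (SQ d k (m + 1)) ∧
    samCount d k (m + 1) ≤ Nat.card (Finset (Fin d)) * (Nat.card (St d)) ^ (2 * m) := by
  have := card_le_of_dec (d := d) (k := k) (n := m + 1)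
    (X := Finset (Fin d) × (Fin (2 * m) → St d))
    (fun x => (walk (x.1, 0) (List.ofFn x.2)).toFinset) ?_
  · refine ⟨this.1, this.2.trans ?_⟩
    simp
  · intro M hM
    have hne : M.Nonempty := by rw [← Finset.card_pos, hM.1]; omega
    obtain ⟨r, hr⟩ := hne
    have hM' := isSAM_tr (-r.2) hM
    have hr' : ((r.1, 0) : Face d) ∈ M.image (translateFace (-r.2)) :=
      Finset.mem_image.2 ⟨r, hr, by simp [translateFace]⟩
    obtain ⟨l, h1, h2, h3, h4⟩ := exists_cover hM'.2.2.1 hr' m (by rw [hM'.1])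
    obtain ⟨ss, h5, h6⟩ := walk_of_chain l _ h2
    rw [h1] at h5
    refine ⟨(r.1, fun i => ss.get (i.cast h5.symm)), ?_⟩
    have : List.ofFn (fun i : Fin (2 * m) => ss.get (i.cast h5.symm)) = ss := by
      apply List.ext_getElem <;> simp [h5]
    simp only [this, h6]
    rw [Finset.eq_of_subset_of_card_le h3 (by rw [hM'.1, h4])]
    exact transEquiv_equivalence.symm ⟨_, rfl⟩

def hi {d : ℕ} (i0 : Fin d) (f : Face d) : ℤ := f.2 i0 + if i0 ∈ f.1 then 1 else 0

theorem hi_le {d : ℕ} (i0 : Fin d) (f : Face d) : hi i0 f ≤ f.2 i0 + 1 := by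
  unfold hi; split_ifs <;> omega

theorem le_hi {d : ℕ} (i0 : Fin d) (f : Face d) : f.2 i0 ≤ hi i0 f := by
  unfold hi; split_ifs <;> omega

theorem edge_levels {d : ℕ} (i0 : Fin d) {e f : Face d} (h : e ∈ faceEdges f) :
    f.2 i0 ≤ e.2 i0 ∧ hi i0 e ≤ hi i0 f := by
  obtain ⟨i, hi', h1, h2⟩ := mem_fe.1 h
  unfold hi
  rw [h1]
  by_cases hii : i0 = i
  · subst hii
    rcases h2 with h2 | h2 <;> simp [h2, hi']
  · rcases h2 with h2 | h2 <;> simp [h2, hii]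

theorem edge_flat {d : ℕ} (i0 : Fin d) {e f : Face d} (h : e ∈ faceEdges f)
    (hlt : f.2 i0 < e.2 i0) :
    f = (insert i0 e.1, e.2 - Pi.single i0 1) := by
  obtain ⟨i, hi', h1, h2⟩ := mem_fe.1 h
  rcases h2 with h2 | h2
  · rw [h2] at hlt; omega
  · by_cases hii : i0 = i
    · subst hii
      refine Prod.ext ?_ ?_
      · simp [h1, Finset.insert_erase hi']
      · simp [h2]
    · simp [h2, hii] at hlt

theorem extend_sam {d k n : ℕ} (i0 : Fin d) {M : Finset (Face d)} (hM : IsSAM d k n M)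
    {T : Finset (Fin d)} {v : Fin d → ℤ} (hT : i0 ∈ T) (hf : (T, v) ∈ M)
    (hlow : ∀ f ∈ M, f.2 i0 < v i0 + 1) :
    IsSAM d k (n + 1) (insert (T, v + Pi.single i0 1) M) := by
  obtain ⟨a1, a2, a3, a4⟩ := hM
  have hnot : (T, v + Pi.single i0 1) ∉ M := fun h => by
    have := hlow _ h
    simp at this
  refine ⟨by rw [Finset.card_insert_of_notMem hnot, a1], ?_, ?_, ?_⟩
  · intro f h
    rcases Finset.mem_insert.1 h with rfl | h
    · exact a2 (T, v) hf
    · exact a2 _ h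
  · apply conn_of_root (T, v)
    intro f h
    rcases Finset.mem_insert.1 h with rfl | h
    · apply Relation.ReflTransGen.single
      refine ⟨Finset.mem_insert_self _ _, Finset.mem_insert_of_mem hf, ?_,
        (T.erase i0, v + Pi.single i0 1), ?_, ?_⟩
      · intro h; rw [h] at hnot; exact hnot hf
      · exact mem_fe.2 ⟨i0, hT, rfl, Or.inl rfl⟩
      · exact mem_fe.2 ⟨i0, hT, rfl, Or.inr rfl⟩
    · exact relIn_mono (Finset.subset_insert _ _) (a3 f h _ hf)
  · intro e
    rw [Finset.filter_insert]
    split_ifs with he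
    · have hsub : M.filter (fun f => e ∈ faceEdges f) ⊆ {(T, v)} := by
        intro f hfm
        obtain ⟨hfM, hfe⟩ := Finset.mem_filter.1 hfm
        have l1 := edge_levels i0 hfe
        have l2 := edge_levels i0 he
        have l3 := hlow f hfM
        have l4 := hi_le i0 f
        simp at l2
        have h0 : i0 ∉ e.1 := by
          intro h0
          have : hi i0 e = e.2 i0 + 1 := by simp [hi, h0]
          omega
        have := edge_flat i0 hfe (by omega)
        obtain ⟨i, hi', h1, h2⟩ := mem_fe.1 he
        simp only at h1 h2 hi'
        have hii : i = i0 := by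
          by_contra hne
          rw [h1] at h0
          exact h0 (Finset.mem_erase.2 ⟨fun h => hne h.symm, hT⟩)
        subst hii
        have l5 := le_hi i e
        rcases h2 with h2 | h2
        · rw [this, h1, h2]
          simp [Finset.insert_erase hT]
        · rw [h2] at l5; simp at l5; omega
      calc _ ≤ _ := Finset.card_insert_le _ _
        _ ≤ 1 + 1 := by
          have := Finset.card_le_card hsub
          simp only [Finset.card_singleton] at this
          omega
    · exact a4 e

def sides {d : ℕ} (i0 : Fin d) (S : Finset (Fin d)) (v : Fin d → ℤ) : Finset (Face d) :=
  S.biUnion fun i => {(insert i0 (S.erase i), v), (insert i0 (S.erase i), v + Pi.single i 1)}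

theorem mem_sides {d : ℕ} {i0 : Fin d} {S : Finset (Fin d)} {v : Fin d → ℤ} {f : Face d} :
    f ∈ sides i0 S v ↔ ∃ i ∈ S, f.1 = insert i0 (S.erase i) ∧ (f.2 = v ∨ f.2 = v + Pi.single i 1) := by
  obtain ⟨E, w⟩ := f
  simp only [sides, Finset.mem_biUnion, Finset.mem_insert, Finset.mem_singleton, Prod.mk.injEq]
  constructor
  · rintro ⟨i, hi, h⟩
    exact ⟨i, hi, by tauto⟩
  · rintro ⟨i, hi, h⟩
    exact ⟨i, hi, by tauto⟩

theorem card_sides {d : ℕ} {i0 : Fin d} {S : Finset (Fin d)} (v : Fin d → ℤ) (h0 : i0 ∉ S) :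
    (sides i0 S v).card = 2 * S.card := by
  unfold sides
  rw [Finset.card_biUnion]
  · rw [Finset.sum_congr rfl (g := fun _ => 2)]
    · simp [mul_comm]
    · intro i hi
      rw [Finset.card_pair]
      intro h
      have := congrFun (Prod.ext_iff.1 h).2 i
      simp at this
  · intro i hi j hj hij
    rw [Finset.mem_coe] at hi hj
    refine Finset.disjoint_left.2 ?_
    intro f hf hf'
    have h1 : f.1 = insert i0 (S.erase i) := by
      simp only [Finset.mem_insert, Finset.mem_singleton] at hf
      rcases hf with rfl | rfl <;> rfl
    have h2 : f.1 = insert i0 (S.erase j) := by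
      simp only [Finset.mem_insert, Finset.mem_singleton] at hf'
      rcases hf' with rfl | rfl <;> rfl
    have : i ∈ f.1 := by rw [h2]; simp [hi, hij]
    rw [h1] at this
    simp at this
    exact h0 (this ▸ hi)

theorem side_edge {d : ℕ} {i0 : Fin d} {S : Finset (Fin d)} {v : Fin d → ℤ} (h0 : i0 ∉ S)
    {e : Face d} :
    (sides i0 S v).filter (fun f => e ∈ faceEdges f) ⊆
      (S \ e.1).image fun i => (insert i0 (S.erase i), v + Pi.single i (e.2 i - v i)) := by
  intro s hs
  obtain ⟨hs, he⟩ := Finset.mem_filter.1 hs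
  obtain ⟨i, hiS, h1, h2⟩ := mem_sides.1 hs
  obtain ⟨j, hj, h3, h4⟩ := mem_fe.1 he
  have hi1 : i ∉ s.1 := by
    rw [h1]; simp; rintro rfl; exact h0 hiS
  have hji : i ≠ j := by rintro rfl; exact hi1 hj
  have e2 : e.2 i = s.2 i := by
    rcases h4 with h4 | h4 <;> simp [h4, hji]
  refine Finset.mem_image.2 ⟨i, ?_, ?_⟩
  · rw [Finset.mem_sdiff]
    refine ⟨hiS, ?_⟩
    rw [h3]
    intro h
    exact hi1 (Finset.mem_of_mem_erase h)
  · refine Prod.ext h1.symm ?_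
    rw [e2]
    rcases h2 with h2 | h2 <;> simp [h2]

theorem side_edge_card {d : ℕ} {i0 : Fin d} {S : Finset (Fin d)} {v : Fin d → ℤ} (h0 : i0 ∉ S)
    {e s : Face d} (hs : s ∈ sides i0 S v) (he : e ∈ faceEdges s) :
    ((sides i0 S v).filter (fun f => e ∈ faceEdges f)).card ≤ 2 ∧
    (i0 ∉ e.1 → ((sides i0 S v).filter (fun f => e ∈ faceEdges f)).card ≤ 1) := by
  have hc := (Finset.card_le_card (side_edge (v := v) h0 (e := e))).trans Finset.card_image_le
  obtain ⟨i, hiS, h1, h2⟩ := mem_sides.1 hs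
  obtain ⟨j, hj, h3, h4⟩ := mem_fe.1 he
  have hsub : S \ e.1 ⊆ {i, j} := by
    intro x hx
    rw [Finset.mem_sdiff, h3, h1] at hx
    simp only [Finset.mem_erase, Finset.mem_insert, Finset.mem_singleton] at hx ⊢
    tauto
  constructor
  · exact hc.trans ((Finset.card_le_card hsub).trans Finset.card_le_two)
  · intro h
    have hj0 : j = i0 := by
      by_contra hne
      rw [h3, h1] at h
      simp at h
      exact hne h.symm
    subst hj0
    have hsub : S \ e.1 ⊆ {i} := by
      intro x hx
      have := hsub hx
      simp only [Finset.mem_insert, Finset.mem_singleton] at this ⊢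
      rcases this with h | h
      · exact h
      · subst h; exact absurd (Finset.mem_sdiff.1 hx).1 h0
    exact hc.trans ((Finset.card_le_card hsub).trans (by simp))

theorem side_levels {d : ℕ} {i0 : Fin d} {S : Finset (Fin d)} {v : Fin d → ℤ} (h0 : i0 ∉ S)
    {s : Face d} (hs : s ∈ sides i0 S v) : s.2 i0 = v i0 ∧ hi i0 s = v i0 + 1 := by
  obtain ⟨i, hiS, h1, h2⟩ := mem_sides.1 hs
  have : i0 ≠ i := by rintro rfl; exact h0 hiS
  have h3 : s.2 i0 = v i0 := by
    rcases h2 with h2 | h2 <;> simp [h2, this]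
  refine ⟨h3, ?_⟩
  simp [hi, h3, h1]

theorem sides_adj {d : ℕ} {i0 : Fin d} {S : Finset (Fin d)} {v : Fin d → ℤ} (h0 : i0 ∉ S)
    {i j : Fin d} (hiS : i ∈ S) (hjS : j ∈ S) (hij : i ≠ j) (s t : Face d)
    (hs1 : s.1 = insert i0 (S.erase i)) (hs2 : s.2 = v ∨ s.2 = v + Pi.single i 1)
    (ht1 : t.1 = insert i0 (S.erase j)) (ht2 : t.2 = v ∨ t.2 = v + Pi.single j 1) :
    FaceAdj s t := by
  have hi0 : i ≠ i0 := by rintro rfl; exact h0 hiS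
  have hj0 : j ≠ i0 := by rintro rfl; exact h0 hjS
  refine ⟨?_, (s.1.erase j, s.2 + t.2 - v), ?_, ?_⟩
  · rintro rfl
    have : i ∈ s.1 := by rw [ht1]; simp [hiS, hij]
    rw [hs1] at this
    simp [hi0] at this
  · refine mem_fe.2 ⟨j, by rw [hs1]; simp [hjS, hij.symm], rfl, ?_⟩
    rcases ht2 with h | h
    · left; simp [h]
    · right; simp only [h]; abel
  · refine mem_fe.2 ⟨i, by rw [ht1]; simp [hiS, hij], ?_, ?_⟩
    · rw [hs1, ht1]
      ext x
      simp only [Finset.mem_erase, Finset.mem_insert]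
      by_cases x = i0
      · subst x; simp [hi0.symm, hj0.symm]
      · tauto
    rcases hs2 with h | h
    · left; simp [h]
    · right; simp only [h]; abel

theorem sides_conn {d : ℕ} {i0 : Fin d} {S : Finset (Fin d)} {v : Fin d → ℤ} (h0 : i0 ∉ S)
    (hS : 1 < S.card) {s t : Face d} (hs : s ∈ sides i0 S v) (ht : t ∈ sides i0 S v) :
    Relation.ReflTransGen (RelIn (sides i0 S v)) s t := by
  obtain ⟨i, hiS, h1, h2⟩ := mem_sides.1 hs
  obtain ⟨j, hjS, h3, h4⟩ := mem_sides.1 ht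
  by_cases hij : i = j
  · subst hij
    obtain ⟨l, hl, hli⟩ := Finset.exists_mem_ne hS i
    have hu : ((insert i0 (S.erase l), v) : Face d) ∈ sides i0 S v :=
      mem_sides.2 ⟨l, hl, rfl, Or.inl rfl⟩
    exact (Relation.ReflTransGen.single ⟨hs, hu,
      sides_adj h0 hiS hl hli.symm _ _ h1 h2 rfl (Or.inl rfl)⟩).tail ⟨hu, ht,
      sides_adj h0 hl hiS hli _ _ rfl (Or.inl rfl) h3 h4⟩
  · exact Relation.ReflTransGen.single ⟨hs, ht, sides_adj h0 hiS hjS hij _ _ h1 h2 h3 h4⟩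

theorem tower_sam {d k n : ℕ} (hk : 1 < k) (i0 : Fin d) {M : Finset (Face d)}
    (hM : IsSAM d k (n + 1) M)
    {S : Finset (Fin d)} {v : Fin d → ℤ} (h0 : i0 ∉ S) (hf : (S, v) ∈ M)
    (hhi : ∀ f ∈ M, hi i0 f ≤ v i0) :
    IsSAM d k (n + 2 * k) (M.erase (S, v) ∪ sides i0 S v) := by
  obtain ⟨a1, a2, a3, a4⟩ := hM
  have hSk : S.card = k := a2 _ hf
  have hdis : ∀ s ∈ sides i0 S v, s ∉ M := by
    intro s hs hsM
    have := hhi s hsM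
    have := (side_levels h0 hs).2
    omega
  have hfedge : ∀ e ∈ faceEdges ((S, v) : Face d), ∃ s ∈ sides i0 S v, e ∈ faceEdges s := by
    intro e he
    obtain ⟨i, hiS, h1, h2⟩ := mem_fe.1 he
    refine ⟨(insert i0 (S.erase i), e.2), mem_sides.2 ⟨i, hiS, rfl, h2⟩,
      mem_fe.2 ⟨i0, by simp, ?_, Or.inl rfl⟩⟩
    rw [h1, Finset.erase_insert]
    simp [h0]
  obtain ⟨i1, hi1⟩ : S.Nonempty := by rw [← Finset.card_pos]; omega
  have hr : ((insert i0 (S.erase i1), v) : Face d) ∈ sides i0 S v :=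
    mem_sides.2 ⟨i1, hi1, rfl, Or.inl rfl⟩
  refine ⟨?_, ?_, ?_, ?_⟩
  · rw [Finset.card_union_of_disjoint, Finset.card_erase_of_mem hf, a1, card_sides v h0, hSk]
    · omega
    · rw [Finset.disjoint_right]
      intro s hs h
      exact hdis s hs (Finset.mem_of_mem_erase h)
  · intro f h
    rcases Finset.mem_union.1 h with h | h
    · exact a2 _ (Finset.mem_of_mem_erase h)
    · obtain ⟨i, hiS, h1, h2⟩ := mem_sides.1 h
      rw [h1, Finset.card_insert_of_notMem (by simp [h0]), Finset.card_erase_of_mem hiS, hSk]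
      omega
  · apply conn_of_root (insert i0 (S.erase i1), v)
    have hside : ∀ s ∈ sides i0 S v, Relation.ReflTransGen
        (RelIn (M.erase (S, v) ∪ sides i0 S v)) s (insert i0 (S.erase i1), v) := by
      intro s hs
      exact relIn_mono Finset.subset_union_right (sides_conn h0 (by omega) hs hr)
    intro f h
    rcases Finset.mem_union.1 h with h | h
    · have hconn := a3 f (Finset.mem_of_mem_erase h) _ hf
      have hne := Finset.ne_of_mem_erase h
      clear h
      induction hconn using Relation.ReflTransGen.head_induction_on with
      | refl => exact absurd rfl hne
      | head hab hbc ih =>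
        rename_i a b
        have ha : a ∈ M.erase (S, v) ∪ sides i0 S v :=
          Finset.mem_union_left _ (Finset.mem_erase.2 ⟨hne, hab.1⟩)
        by_cases hb : b = (S, v)
        · subst hb
          obtain ⟨_, e, he1, he2⟩ := hab.2.2
          obtain ⟨s, hs, hse⟩ := hfedge e he2
          refine Relation.ReflTransGen.head ⟨ha, Finset.mem_union_right _ hs, ?_, e, he1, hse⟩
            (hside s hs)
          rintro rfl
          exact hdis _ hs hab.1
        · have hb' : b ∈ M.erase (S, v) ∪ sides i0 S v :=
            Finset.mem_union_left _ (Finset.mem_erase.2 ⟨hb, hab.2.1⟩)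
          exact Relation.ReflTransGen.head ⟨ha, hb', hab.2.2⟩ (ih hb' hb)
    · exact hside f h
  · intro e
    rw [Finset.filter_union]
    refine (Finset.card_union_le _ _).trans ?_
    by_cases hs : ∃ s ∈ sides i0 S v, e ∈ faceEdges s
    · obtain ⟨s, hs, he⟩ := hs
      obtain ⟨c1, c2⟩ := side_edge_card h0 hs he
      by_cases hg : ∃ g ∈ M, e ∈ faceEdges g
      · obtain ⟨g, hg, hge⟩ := hg
        have l1 := edge_levels i0 hge
        have l2 := hhi g hg
        have l3 := edge_levels i0 he
        have l4 := side_levels h0 hs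
        have l5 := le_hi i0 e
        have he0 : i0 ∉ e.1 := by
          intro h
          have : hi i0 e = e.2 i0 + 1 := by simp [hi, h]
          omega
        have hef : e ∈ faceEdges ((S, v) : Face d) := by
          obtain ⟨i, hiS, h1, h2⟩ := mem_sides.1 hs
          obtain ⟨j, hj, h3, h4⟩ := mem_fe.1 he
          have hj0 : j = i0 := by
            by_contra hne
            rw [h3, h1] at he0
            simp at he0
            exact hne he0.symm
          subst hj0
          refine mem_fe.2 ⟨i, hiS, ?_, ?_⟩
          · rw [h3, h1, Finset.erase_insert (by simp [h0])]
          · rcases h4 with h4 | h4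
            · rw [h4]; exact h2
            · rw [h4] at l5; simp at l5; omega
        have c3 := c2 he0
        have c4 := a4 e
        rw [Finset.filter_erase, Finset.card_erase_of_mem (Finset.mem_filter.2 ⟨hf, hef⟩)]
        omega
      · have : (M.erase (S, v)).filter (fun f => e ∈ faceEdges f) = ∅ := by
          rw [Finset.filter_eq_empty_iff]
          intro g hgm h
          exact hg ⟨g, Finset.mem_of_mem_erase hgm, h⟩
        rw [this]
        simpa using c1
    · have : (sides i0 S v).filter (fun f => e ∈ faceEdges f) = ∅ := by
        rw [Finset.filter_eq_empty_iff]
        intro g hgm h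
        exact hs ⟨g, hgm, h⟩
      rw [this]
      refine le_trans ?_ (a4 e)
      simp only [Finset.card_empty, add_zero]
      exact Finset.card_le_card (Finset.filter_subset_filter _ (Finset.erase_subset _ _))

/-! reflection -/
def reflF {d : ℕ} (i0 : Fin d) (f : Face d) : Face d := (f.1, Function.update f.2 i0 (-hi i0 f))

theorem reflF_lo {d : ℕ} (i0 : Fin d) (f : Face d) : (reflF i0 f).2 i0 = - hi i0 f := by
  simp [reflF]

theorem reflF_hi {d : ℕ} (i0 : Fin d) (f : Face d) : hi i0 (reflF i0 f) = - f.2 i0 := by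
  by_cases h : i0 ∈ f.1 <;> simp [hi, reflF, h]

theorem reflF_invol {d : ℕ} (i0 : Fin d) (f : Face d) : reflF i0 (reflF i0 f) = f := by
  have := reflF_hi i0 f
  rw [reflF, this]
  simp [reflF]

def reflE {d : ℕ} (i0 : Fin d) : Face d ≃ Face d where
  toFun := reflF i0
  invFun := reflF i0
  left_inv := reflF_invol i0
  right_inv := reflF_invol i0

theorem reflF_edge {d : ℕ} (i0 : Fin d) (f e : Face d) (h : e ∈ faceEdges f) :
    reflF i0 e ∈ faceEdges (reflF i0 f) := by
  obtain ⟨i, hiS, h1, h2⟩ := mem_fe.1 h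
  refine mem_fe.2 ⟨i, hiS, h1, ?_⟩
  by_cases hii : i = i0
  · subst hii
    have h3 : i ∉ e.1 := by rw [h1]; simp
    rcases h2 with h2 | h2
    · right
      funext x
      by_cases hx : x = i
      · subst hx; simp [reflF, hi, h3, hiS, h2]
      · simp [reflF, hx, h2]
    · left
      funext x
      by_cases hx : x = i
      · subst hx; simp [reflF, hi, h3, hiS, h2]
      · simp [reflF, hx, h2]
  · have h3 : i0 ∈ e.1 ↔ i0 ∈ f.1 := by rw [h1]; simp [Ne.symm hii]
    rcases h2 with h2 | h2
    · left
      funext x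
      by_cases hx : x = i0
      · subst hx; simp [reflF, hi, h3, h2]
      · simp [reflF, hx, h2]
    · right
      funext x
      by_cases hx : x = i0
      · subst hx; simp [reflF, hi, h3, h2, Ne.symm hii]
      · simp [reflF, hx, h2]

theorem isSAM_refl {d k n : ℕ} (i0 : Fin d) {M : Finset (Face d)} (hM : IsSAM d k n M) :
    IsSAM d k n (M.image (reflF i0)) :=
  isSAM_image (reflE i0) (fun f e => ⟨reflF_edge i0 f e, fun h => by
    have := reflF_edge i0 _ _ h
    simpa [reflE, reflF_invol] using this⟩) (fun _ => rfl) hM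

/-! permutations -/
def permF {d : ℕ} (σ : Equiv.Perm (Fin d)) (f : Face d) : Face d :=
  (f.1.map σ.toEmbedding, fun x => f.2 (σ.symm x))

theorem permF_inv {d : ℕ} (σ : Equiv.Perm (Fin d)) (f : Face d) :
    permF σ.symm (permF σ f) = f := by
  refine Prod.ext ?_ ?_
  · ext x; simp [permF]
  · funext x; simp [permF]

def permE {d : ℕ} (σ : Equiv.Perm (Fin d)) : Face d ≃ Face d where
  toFun := permF σ
  invFun := permF σ.symm
  left_inv := permF_inv σ
  right_inv := permF_inv σ.symm

theorem permF_edge {d : ℕ} (σ : Equiv.Perm (Fin d)) (f e : Face d) (h : e ∈ faceEdges f) :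
    permF σ e ∈ faceEdges (permF σ f) := by
  obtain ⟨i, hiS, h1, h2⟩ := mem_fe.1 h
  refine mem_fe.2 ⟨σ i, by simpa [permF] using hiS, ?_, ?_⟩
  · simp only [permF, h1, Finset.map_erase]; rfl
  · rcases h2 with h2 | h2
    · left; simp [permF, h2]
    · right
      funext x
      simp [permF, h2, Pi.single_apply, Equiv.symm_apply_eq]

theorem isSAM_perm {d k n : ℕ} (σ : Equiv.Perm (Fin d)) {M : Finset (Face d)}
    (hM : IsSAM d k n M) : IsSAM d k n (M.image (permF σ)) :=
  isSAM_image (permE σ) (fun f e => ⟨permF_edge σ f e, fun h => by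
    have := permF_edge σ.symm _ _ h
    simpa [permE, permF_inv] using this⟩) (fun f => by simp [permE, permF]) hM

theorem permF_hi {d : ℕ} (σ : Equiv.Perm (Fin d)) {i0 : Fin d} (h0 : σ i0 = i0) (f : Face d) :
    hi i0 (permF σ f) = hi i0 f := by
  have h1 : σ.symm i0 = i0 := by rw [Equiv.symm_apply_eq, h0]
  simp [hi, permF, h1]

theorem exists_perm {d : ℕ} {i0 : Fin d} {S T : Finset (Fin d)} (hS : i0 ∈ S) (hT : i0 ∈ T)
    (hc : T.card = S.card) : ∃ σ : Equiv.Perm (Fin d), σ i0 = i0 ∧ T.map σ.toEmbedding = S := by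
  let e : T ≃ S := Finset.equivOfCardEq hc
  let τ : Equiv.Perm (Fin d) := e.extendSubtype
  have hτ : ∀ x ∈ T, τ x ∈ S := fun x hx => e.extendSubtype_mem x hx
  refine ⟨τ.trans (Equiv.swap (τ i0) i0), by simp, ?_⟩
  apply Finset.eq_of_subset_of_card_le
  · intro y hy
    obtain ⟨x, hx, rfl⟩ := Finset.mem_map.1 hy
    simp only [Equiv.toEmbedding_apply, Equiv.trans_apply]
    rw [Equiv.swap_apply_def]
    split_ifs
    · exact hS
    · exact hτ _ hT
    · exact hτ _ hx
  · simp [hc]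

theorem limit_abs (c p : ℕ → ℕ) (K a B D : ℕ) (ha : 1 ≤ a) (hmono : ∀ n, p n ≤ p (n + 1))
    (hp1 : 1 ≤ p 1) (hlow : ∀ n m, p n * p m ≤ c (n + m))
    (hup : ∀ n, c (n + 1) ≤ K * p (n + 1 + a)) (hexp : ∀ n, c (n + 1) ≤ D * B ^ n) :
    ∃ μ : ℝ, Tendsto (fun n : ℕ => (c n : ℝ) ^ (1 / (n : ℝ))) atTop (nhds μ) := by
  have hm : Monotone p := monotone_nat_of_le_succ hmono
  have hpos : ∀ n, 1 ≤ p (n + 1) := fun n => hp1.trans (hm (by omega))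
  have hc2 : 1 ≤ c (1 + 1) := (Nat.mul_le_mul hp1 hp1).trans (hlow 1 1)
  have hK : 1 ≤ K := by
    by_contra h
    have h0 : K = 0 := by omega
    have h1 := hc2.trans (hup 1)
    rw [h0, zero_mul] at h1
    omega
  have hD : 1 ≤ D := by
    by_contra h
    have h0 : D = 0 := by omega
    have h1 := hc2.trans (hexp 1)
    rw [h0, zero_mul] at h1
    omega
  have hB : 1 ≤ B := by
    by_contra h
    have h0 : B = 0 := by omega
    have h1 := hc2.trans (hexp 1)
    rw [h0, pow_one, mul_zero] at h1
    omega
  let b : ℕ → ℕ := fun n => p (n - (a + 1) + 1)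
  have hb1 : ∀ n, 1 ≤ b n := fun n => hpos _
  have hbm : ∀ n m, b n * b m ≤ (K + p 1) * b (n + m) := by
    intro n m
    have aux : ∀ n m, n ≤ a + 1 → b n * b m ≤ (K + p 1) * b (n + m) := by
      intro n m h
      have e1 : b n = p 1 := by simp only [b]; congr 1; omega
      have e2 : b m ≤ b (n + m) := hm (by omega)
      rw [e1]
      exact Nat.mul_le_mul (by omega) e2
    rcases le_total n (a + 1) with h | h
    · exact aux n m h
    rcases le_total m (a + 1) with h' | h'
    · rw [mul_comm, add_comm n m]; exact aux m n h'
    · have h1 := hlow (n - (a + 1) + 1) (m - (a + 1) + 1)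
      have h2 := hup (n - (a + 1) + 1 + (m - (a + 1)))
      have e : n - (a + 1) + 1 + (m - (a + 1)) + 1 + a = n + m - (a + 1) + 1 := by omega
      rw [e] at h2
      calc b n * b m ≤ K * p (n + m - (a + 1) + 1) := h1.trans h2
        _ ≤ _ := Nat.mul_le_mul (by omega) le_rfl
  have hbR : ∀ n, (1 : ℝ) ≤ b n := fun n => by exact_mod_cast hb1 n
  have hK' : (1 : ℝ) ≤ (K + p 1 : ℕ) := by exact_mod_cast (by omega : 1 ≤ K + p 1)
  let u : ℕ → ℝ := fun n => Real.log (K + p 1 : ℕ) - Real.log (b n)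
  have hsub : Subadditive u := by
    intro m n
    have h := hbm m n
    have h' : ((b m : ℝ) * b n) ≤ (K + p 1 : ℕ) * b (m + n) := by exact_mod_cast h
    have := Real.log_le_log (by have := hbR m; have := hbR n; positivity) h'
    rw [Real.log_mul (by linarith [hbR m]) (by linarith [hbR n]),
      Real.log_mul (by linarith) (by linarith [hbR (m + n)])] at this
    simp only [u]
    linarith
  have hlogK : 0 ≤ Real.log (K + p 1 : ℕ) := Real.log_nonneg hK'
  have hlogD : 0 ≤ Real.log D := Real.log_nonneg (by exact_mod_cast hD)
  have hlogB : 0 ≤ Real.log B := Real.log_nonneg (by exact_mod_cast hB)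
  have hbdd : BddBelow (Set.range fun n => u n / n) := by
    refine ⟨-(Real.log D + 2 * Real.log B), ?_⟩
    rintro _ ⟨n, rfl⟩
    rcases Nat.eq_zero_or_pos n with rfl | hn
    · simp; linarith
    · have h1 : b n ≤ D * B ^ (n + 1) := by
        calc b n ≤ p (n + 1) := hm (by omega)
          _ ≤ p (n + 1) * p 1 := Nat.le_mul_of_pos_right _ hp1
          _ ≤ c (n + 1 + 1) := hlow _ _
          _ ≤ _ := hexp _
      have h2 : (b n : ℝ) ≤ D * B ^ (n + 1) := by exact_mod_cast h1
      have h3 := Real.log_le_log (by linarith [hbR n]) h2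
      have hD' : (D : ℝ) ≠ 0 := by positivity
      have hB' : (B : ℝ) ^ (n + 1) ≠ 0 := by positivity
      rw [Real.log_mul hD' hB', Real.log_pow] at h3
      have hn' : (1 : ℝ) ≤ n := by exact_mod_cast hn
      simp only
      rw [le_div_iff₀ (by linarith)]
      simp only [u]
      push_cast at h3 hlogK ⊢
      nlinarith
  have hlim := hsub.tendsto_lim hbdd
  set L := hsub.lim
  have hlogb : Tendsto (fun n : ℕ => Real.log (b n) / n) atTop (nhds (-L)) := by
    have h1 : Tendsto (fun n : ℕ => Real.log (K + p 1 : ℕ) / (n : ℝ)) atTop (nhds 0) :=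
      tendsto_const_div_atTop_nhds_zero_nat _
    have := h1.sub hlim
    rw [zero_sub] at this
    refine this.congr fun n => ?_
    simp only [u]
    ring
  have hshift : ∀ s : ℕ, Tendsto (fun n : ℕ => Real.log (b (n + s)) / n) atTop (nhds (-L)) := by
    intro s
    have h1 := hlogb.comp (tendsto_add_atTop_nat s)
    have h2 : Tendsto (fun n : ℕ => 1 + (s : ℝ) / (n : ℝ)) atTop (nhds (1 + 0)) :=
      tendsto_const_nhds.add (tendsto_const_div_atTop_nhds_zero_nat _)
    have h3 := h1.mul h2
    rw [add_zero, mul_one] at h3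
    refine h3.congr' ?_
    filter_upwards [eventually_ge_atTop 1] with n hn
    have hn' : (1 : ℝ) ≤ n := by exact_mod_cast hn
    simp only [Function.comp]
    push_cast
    have : (n : ℝ) + s ≠ 0 := by positivity
    field_simp
  have hcpos : ∀ n, 2 ≤ n → 1 ≤ c n ∧ b (n + (a - 1)) ≤ c n ∧ c n ≤ K * b (n + 2 * a) := by
    intro n hn
    have h1 := hlow (n - 1) 1
    have e1 : n - 1 + 1 = n := by omega
    rw [e1] at h1
    have h2 := hup (n - 1)
    rw [e1] at h2
    have e2 : b (n + (a - 1)) = p (n - 1) := by simp only [b]; congr 1; omega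
    have e3 : b (n + 2 * a) = p (n + a) := by simp only [b]; congr 1; omega
    have h3 : p (n - 1) ≤ c n := (Nat.le_mul_of_pos_right _ hp1).trans h1
    refine ⟨?_, by rw [e2]; exact h3, by rw [e3]; exact h2⟩
    have := hb1 (n + (a - 1))
    omega
  have hlogc : Tendsto (fun n : ℕ => Real.log (c n) / n) atTop (nhds (-L)) := by
    have hu : Tendsto (fun n : ℕ => Real.log K / (n : ℝ) + Real.log (b (n + 2 * a)) / n) atTop
        (nhds (0 + -L)) :=
      (tendsto_const_div_atTop_nhds_zero_nat _).add (hshift (2 * a))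
    rw [zero_add] at hu
    refine tendsto_of_tendsto_of_tendsto_of_le_of_le' (hshift (a - 1)) hu ?_ ?_
    · filter_upwards [eventually_ge_atTop 2] with n hn
      obtain ⟨h1, h2, h3⟩ := hcpos n hn
      apply div_le_div_of_nonneg_right _ (Nat.cast_nonneg n)
      exact Real.log_le_log (by linarith [hbR (n + (a - 1))]) (by exact_mod_cast h2)
    · filter_upwards [eventually_ge_atTop 2] with n hn
      obtain ⟨h1, h2, h3⟩ := hcpos n hn
      rw [← add_div]
      apply div_le_div_of_nonneg_right _ (Nat.cast_nonneg n)
      have hKne : (K : ℝ) ≠ 0 := by positivity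
      rw [← Real.log_mul hKne (by linarith [hbR (n + 2 * a)])]
      exact Real.log_le_log (by exact_mod_cast h1) (by exact_mod_cast h3)
  refine ⟨Real.exp (-L), ?_⟩
  refine ((Real.continuous_exp.tendsto _).comp hlogc).congr' ?_
  filter_upwards [eventually_ge_atTop 2] with n hn
  have h1 : (0 : ℝ) < c n := by exact_mod_cast (hcpos n hn).1
  rw [Function.comp, Real.rpow_def_of_pos h1]
  congr 1
  ring

abbrev f0 {d : ℕ} (i0 : Fin d) (S0 : Finset (Fin d)) : Face d := (S0, Pi.single i0 (-1))

def Prep (d k : ℕ) (i0 : Fin d) (S0 : Finset (Fin d)) (n : ℕ) : Set (Finset (Face d)) :=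
  {M | IsSAM d k n M ∧ f0 i0 S0 ∈ M ∧ ∀ f ∈ M, f ≠ f0 i0 S0 → hi i0 f ≤ -1}

theorem hi_f0 {d : ℕ} {i0 : Fin d} {S0 : Finset (Fin d)} (h0 : i0 ∈ S0) :
    hi i0 (f0 i0 S0) = 0 := by
  simp [hi, h0]

theorem refl_f0 {d : ℕ} {i0 : Fin d} {S0 : Finset (Fin d)} (h0 : i0 ∈ S0) :
    reflF i0 (f0 i0 S0) = (S0, 0) := by
  unfold reflF
  rw [hi_f0 h0]
  refine Prod.ext rfl ?_
  funext x
  by_cases hx : x = i0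
  · subst hx; simp
  · simp [hx]

theorem reflF_inj {d : ℕ} (i0 : Fin d) : Function.Injective (reflF i0) := (reflE i0).injective

theorem prep_lo {d k n : ℕ} {i0 : Fin d} {S0 : Finset (Fin d)}
    {M : Finset (Face d)} (hM : M ∈ Prep d k i0 S0 n) {f : Face d} (hf : f ∈ M) : f.2 i0 < 0 := by
  by_cases h : f = f0 i0 S0
  · rw [h]; simp
  · have := hM.2.2 f hf h
    have := le_hi i0 f
    omega

theorem prep_hi {d k n : ℕ} {i0 : Fin d} {S0 : Finset (Fin d)} (h0 : i0 ∈ S0)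
    {M : Finset (Face d)} (hM : M ∈ Prep d k i0 S0 n) {f : Face d} (hf : f ∈ M) : hi i0 f ≤ 0 := by
  by_cases h : f = f0 i0 S0
  · rw [h, hi_f0 h0]
  · have := hM.2.2 f hf h
    omega

theorem glue_sam {d k n m : ℕ} {i0 : Fin d} {S0 : Finset (Fin d)} (h0 : i0 ∈ S0)
    {A B : Finset (Face d)} (hA : A ∈ Prep d k i0 S0 n) (hB : B ∈ Prep d k i0 S0 m) :
    IsSAM d k (n + m) (A ∪ B.image (reflF i0)) := by
  have hRB := isSAM_refl i0 hB.1
  have hlo : ∀ g ∈ B.image (reflF i0), 0 ≤ g.2 i0 := by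
    intro g hg
    obtain ⟨g, hg', rfl⟩ := Finset.mem_image.1 hg
    rw [reflF_lo]
    have := prep_hi h0 hB hg'
    omega
  have hlo' : ∀ g ∈ B.image (reflF i0), g ≠ (S0, 0) → 1 ≤ g.2 i0 := by
    intro g hg hne
    obtain ⟨g, hg', rfl⟩ := Finset.mem_image.1 hg
    rw [reflF_lo]
    have := hB.2.2 g hg' (by rintro rfl; exact hne (refl_f0 h0))
    omega
  have hmem : ((S0, 0) : Face d) ∈ B.image (reflF i0) :=
    Finset.mem_image.2 ⟨_, hB.2.1, refl_f0 h0⟩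
  refine ⟨?_, ?_, ?_, ?_⟩
  · rw [Finset.card_union_of_disjoint, hA.1.1, hRB.1]
    rw [Finset.disjoint_left]
    intro f hf hf'
    have := prep_lo hA hf
    have := hlo f hf'
    omega
  · intro f hf
    rcases Finset.mem_union.1 hf with h | h
    · exact hA.1.2.1 f h
    · exact hRB.2.1 f h
  · apply conn_of_root (f0 i0 S0)
    intro f hf
    rcases Finset.mem_union.1 hf with h | h
    · exact relIn_mono Finset.subset_union_left (hA.1.2.2.1 f h _ hA.2.1)
    · refine Relation.ReflTransGen.tail
        (relIn_mono Finset.subset_union_right (hRB.2.2.1 f h _ hmem)) ?_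
      refine ⟨Finset.mem_union_right _ hmem, Finset.mem_union_left _ hA.2.1, ?_,
        (S0.erase i0, 0), mem_fe.2 ⟨i0, h0, rfl, Or.inl rfl⟩,
        mem_fe.2 ⟨i0, h0, rfl, Or.inr ?_⟩⟩
      · intro h
        have := congrFun (Prod.ext_iff.1 h).2 i0
        simp at this
      · simp [← Pi.single_add]
  · intro e
    rw [Finset.filter_union]
    refine (Finset.card_union_le _ _).trans ?_
    by_cases h1 : ∃ a ∈ A, e ∈ faceEdges a
    · by_cases h2 : ∃ b ∈ B.image (reflF i0), e ∈ faceEdges b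
      · obtain ⟨a, ha, hae⟩ := h1
        obtain ⟨b, hb, hbe⟩ := h2
        have l1 := edge_levels i0 hae
        have l2 := edge_levels i0 hbe
        have l3 := prep_hi h0 hA ha
        have l4 := hlo b hb
        have l5 := le_hi i0 e
        have s1 : A.filter (fun f => e ∈ faceEdges f) ⊆ {f0 i0 S0} := by
          intro f hf
          obtain ⟨hf, hfe⟩ := Finset.mem_filter.1 hf
          have l6 := edge_levels i0 hfe
          rw [Finset.mem_singleton]
          by_contra hne
          have := hA.2.2 f hf hne
          omega
        have s2 : (B.image (reflF i0)).filter (fun f => e ∈ faceEdges f) ⊆ {(S0, 0)} := by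
          intro f hf
          obtain ⟨hf, hfe⟩ := Finset.mem_filter.1 hf
          have l6 := edge_levels i0 hfe
          rw [Finset.mem_singleton]
          by_contra hne
          have := hlo' f hf hne
          omega
        have c1 := Finset.card_le_card s1
        have c2 := Finset.card_le_card s2
        rw [Finset.card_singleton] at c1 c2
        omega
      · have : (B.image (reflF i0)).filter (fun f => e ∈ faceEdges f) = ∅ := by
          rw [Finset.filter_eq_empty_iff]
          intro g hgm h
          exact h2 ⟨g, hgm, h⟩
        rw [this]
        simpa using hA.1.2.2.2 e
    · have : A.filter (fun f => e ∈ faceEdges f) = ∅ := by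
        rw [Finset.filter_eq_empty_iff]
        intro g hgm h
        exact h1 ⟨g, hgm, h⟩
      rw [this]
      simpa using hRB.2.2.2 e

theorem glue_low {d k n m : ℕ} {i0 : Fin d} {S0 : Finset (Fin d)} (h0 : i0 ∈ S0)
    {A B : Finset (Face d)} (hA : A ∈ Prep d k i0 S0 n) (hB : B ∈ Prep d k i0 S0 m) (f : Face d) :
    (f ∈ A ↔ f ∈ A ∪ B.image (reflF i0) ∧ f.2 i0 < 0) ∧
    (f ∈ B.image (reflF i0) ↔ f ∈ A ∪ B.image (reflF i0) ∧ 0 ≤ f.2 i0) := by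
  have h1 : f ∈ A → f.2 i0 < 0 := prep_lo hA
  have h2 : f ∈ B.image (reflF i0) → 0 ≤ f.2 i0 := by
    intro hg
    obtain ⟨g, hg', rfl⟩ := Finset.mem_image.1 hg
    rw [reflF_lo]
    have := prep_hi h0 hB hg'
    omega
  rw [Finset.mem_union]
  constructor
  · constructor
    · intro h; exact ⟨Or.inl h, h1 h⟩
    · rintro ⟨h | h, h'⟩
      · exact h
      · have := h2 h; omega
  · constructor
    · intro h; exact ⟨Or.inr h, h2 h⟩
    · rintro ⟨h | h, h'⟩
      · have := h1 h; omega
      · exact h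

theorem glue_t_le {d k n m : ℕ} {i0 : Fin d} {S0 : Finset (Fin d)} (h0 : i0 ∈ S0)
    {A B A' B' : Finset (Face d)} (hA : A ∈ Prep d k i0 S0 n) (hB : B ∈ Prep d k i0 S0 m)
    (hA' : A' ∈ Prep d k i0 S0 n) (hB' : B' ∈ Prep d k i0 S0 m) (t : Fin d → ℤ)
    (h : (A ∪ B.image (reflF i0)).image (translateFace t) = A' ∪ B'.image (reflF i0)) :
    t i0 ≤ 0 := by
  by_contra hpos
  push Not at hpos
  have hsub : A' ⊆ (A.erase (f0 i0 S0)).image (translateFace t) := by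
    intro f hf
    obtain ⟨h1, h2⟩ := ((glue_low h0 hA' hB' f).1).1 hf
    rw [← h] at h1
    obtain ⟨g, hg, rfl⟩ := Finset.mem_image.1 h1
    simp only [translateFace, Pi.add_apply] at h2
    refine Finset.mem_image_of_mem _ (Finset.mem_erase.2 ⟨?_, ?_⟩)
    · rintro rfl
      simp at h2
      omega
    · exact ((glue_low h0 hA hB g).1).2 ⟨hg, by omega⟩
  have := (Finset.card_le_card hsub).trans Finset.card_image_le
  rw [Finset.card_erase_of_mem hA.2.1, hA.1.1, hA'.1.1] at this
  have : 0 < A.card := Finset.card_pos.2 ⟨_, hA.2.1⟩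
  rw [hA.1.1] at this
  omega

theorem glue_inj {d k n m : ℕ} {i0 : Fin d} {S0 : Finset (Fin d)} (h0 : i0 ∈ S0)
    {A B A' B' : Finset (Face d)} (hA : A ∈ Prep d k i0 S0 n) (hB : B ∈ Prep d k i0 S0 m)
    (hA' : A' ∈ Prep d k i0 S0 n) (hB' : B' ∈ Prep d k i0 S0 m)
    (h : TransEquiv (A ∪ B.image (reflF i0)) (A' ∪ B'.image (reflF i0))) :
    A = A' ∧ B = B' := by
  obtain ⟨t, h⟩ := h
  have t1 := glue_t_le h0 hA hB hA' hB' t h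
  have t2 := glue_t_le h0 hA' hB' hA hB (-t) (by rw [← h, tr_tr, add_neg_cancel, tr_zero])
  simp only [Pi.neg_apply] at t2
  have ht0 : t = 0 := by
    obtain ⟨h1, h2⟩ := ((glue_low h0 hA' hB' (f0 i0 S0)).1).1 hA'.2.1
    rw [← h] at h1
    obtain ⟨g, hg, hgt⟩ := Finset.mem_image.1 h1
    have e1 : g.2 + t = Pi.single i0 (-1) := (Prod.ext_iff.1 hgt).2
    have e3 : g.1 = S0 := (Prod.ext_iff.1 hgt).1
    have e2 := congrFun e1 i0
    simp at e2
    have hgA : g ∈ A := ((glue_low h0 hA hB g).1).2 ⟨hg, by omega⟩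
    have hg0 : g = f0 i0 S0 := by
      by_contra hne
      have := hA.2.2 g hgA hne
      simp [hi, e3, h0] at this
      omega
    rw [hg0] at e1
    simpa using e1
  rw [ht0, tr_zero] at h
  constructor
  · ext f
    rw [(glue_low h0 hA hB f).1, (glue_low h0 hA' hB' f).1, h]
  · apply Finset.image_injective (reflF_inj i0)
    ext f
    rw [(glue_low h0 hA hB f).2, (glue_low h0 hA' hB' f).2, h]

theorem glue_count {d k : ℕ} {i0 : Fin d} {S0 : Finset (Fin d)} (h0 : i0 ∈ S0) (n m : ℕ)
    [Finite (SQ d k (n + m))] :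
    Nat.card (Prep d k i0 S0 n) * Nat.card (Prep d k i0 S0 m) ≤ samCount d k (n + m) ∧
    Finite (Prep d k i0 S0 n × Prep d k i0 S0 m) := by
  let F : Prep d k i0 S0 n × Prep d k i0 S0 m → SQ d k (n + m) :=
    fun x => Quot.mk _ ⟨x.1.1 ∪ x.2.1.image (reflF i0), glue_sam h0 x.1.2 x.2.2⟩
  have hF : Function.Injective F := by
    rintro ⟨⟨A, hA⟩, ⟨B, hB⟩⟩ ⟨⟨A', hA'⟩, ⟨B', hB'⟩⟩ h
    have h := (sq_eq_iff _ _).1 h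
    obtain ⟨rfl, rfl⟩ := glue_inj h0 hA hB hA' hB' h
    rfl
  refine ⟨?_, Finite.of_injective F hF⟩
  rw [← Nat.card_prod]
  exact Nat.card_le_card_of_injective F hF

theorem prep_one {d k : ℕ} {i0 : Fin d} {S0 : Finset (Fin d)} (hc : S0.card = k) :
    {f0 i0 S0} ∈ Prep d k i0 S0 1 := by
  refine ⟨⟨by simp, ?_, ?_, ?_⟩, by simp, ?_⟩
  · intro f hf; rw [Finset.mem_singleton.1 hf]; exact hc
  · intro f hf g hg
    rw [Finset.mem_singleton.1 hf, Finset.mem_singleton.1 hg]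
  · intro e
    exact (Finset.card_filter_le _ _).trans (by simp)
  · intro f hf hne
    exact absurd (Finset.mem_singleton.1 hf) hne

theorem prep_finite {d k : ℕ} {i0 : Fin d} {S0 : Finset (Fin d)} (h0 : i0 ∈ S0)
    (hc : S0.card = k) (n : ℕ) : Finite (Prep d k i0 S0 n) := by
  have := (samCount_upper d k n).1
  have := (glue_count (k := k) h0 n 1).2
  have : Nonempty (Prep d k i0 S0 1) := ⟨⟨_, prep_one hc⟩⟩
  exact Finite.prod_left (Prep d k i0 S0 1)

theorem tr_hi {d : ℕ} (i0 : Fin d) (t : Fin d → ℤ) (f : Face d) :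
    hi i0 (translateFace t f) = hi i0 f + t i0 := by
  simp only [hi, translateFace, Pi.add_apply]
  by_cases h : i0 ∈ f.1 <;> simp [h] <;> ring

theorem prep_mono {d k : ℕ} {i0 : Fin d} {S0 : Finset (Fin d)} (h0 : i0 ∈ S0)
    (hc : S0.card = k) (n : ℕ) :
    Nat.card (Prep d k i0 S0 n) ≤ Nat.card (Prep d k i0 S0 (n + 1)) := by
  have := prep_finite (k := k) h0 hc (n + 1)
  have hmem : ∀ A ∈ Prep d k i0 S0 n, (insert ((S0, 0) : Face d) A).image
      (translateFace (Pi.single i0 (-1))) ∈ Prep d k i0 S0 (n + 1) := by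
    intro A hA
    refine ⟨isSAM_tr _ ?_, ?_, ?_⟩
    · have := extend_sam i0 hA.1 h0 hA.2.1 (fun f hf => by simpa using prep_lo hA hf)
      rwa [← Pi.single_add, show (-1 : ℤ) + 1 = 0 by rfl, Pi.single_zero] at this
    · exact Finset.mem_image.2 ⟨(S0, 0), by simp, by simp [translateFace]⟩
    · intro f hf hne
      obtain ⟨g, hg, rfl⟩ := Finset.mem_image.1 hf
      rcases Finset.mem_insert.1 hg with rfl | hg
      · exact absurd (by simp [translateFace]) hne
      · rw [tr_hi]
        have := prep_hi h0 hA hg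
        simp
        omega
  refine Nat.card_le_card_of_injective (fun A => ⟨_, hmem A.1 A.2⟩) ?_
  rintro ⟨A, hA⟩ ⟨B, hB⟩ h
  have h := Finset.image_injective (trE (Pi.single i0 (-1))).injective (Subtype.ext_iff.1 h)
  have hn : ∀ A ∈ Prep d k i0 S0 n, ((S0, 0) : Face d) ∉ A := by
    intro A hA h
    have := prep_lo hA h
    simp at this
  have h2 := congrArg (fun X => X.erase (S0, 0)) h
  simp only [Finset.erase_insert (hn A hA), Finset.erase_insert (hn B hB)] at h2
  exact Subtype.ext h2

def dec1 {d : ℕ} (i0 : Fin d) (σ : Equiv.Perm (Fin d)) (S : Finset (Fin d)) (j : Fin d)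
    (N : Finset (Face d)) : Finset (Face d) :=
  insert (S, Pi.single i0 (-2)) ((N.image (permF σ.symm)) \
    insert (insert i0 (S.erase j), Pi.single i0 (-1)) (sides i0 S (Pi.single i0 (-2))))

def dec2 {d : ℕ} (i0 : Fin d) (S0 : Finset (Fin d)) (σ : Equiv.Perm (Fin d))
    (N : Finset (Face d)) : Finset (Face d) :=
  (N.erase (f0 i0 S0)).image (permF σ.symm)

theorem perm_image_inv {d : ℕ} (σ : Equiv.Perm (Fin d)) (M : Finset (Face d)) :
    (M.image (permF σ)).image (permF σ.symm) = M := by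
  rw [Finset.image_image]
  have : permF σ.symm ∘ permF σ = id := by funext f; exact permF_inv σ f
  rw [this, Finset.image_id]

theorem perm_f0 {d : ℕ} {i0 : Fin d} {S0 T : Finset (Fin d)} {σ : Equiv.Perm (Fin d)}
    (h0 : σ i0 = i0) (hT : T.map σ.toEmbedding = S0) : permF σ (f0 i0 T) = f0 i0 S0 := by
  refine Prod.ext hT ?_
  funext x
  have h1 : σ.symm i0 = i0 := by rw [Equiv.symm_apply_eq, h0]
  simp only [permF, Pi.single_apply, Equiv.symm_apply_eq, h0]

theorem prep_of_perm {d k n : ℕ} {i0 : Fin d} {S0 T : Finset (Fin d)} {σ : Equiv.Perm (Fin d)}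
    (h0 : σ i0 = i0) (hT : T.map σ.toEmbedding = S0) {M : Finset (Face d)}
    (hM : M ∈ Prep d k i0 T n) : M.image (permF σ) ∈ Prep d k i0 S0 n := by
  refine ⟨isSAM_perm σ hM.1, Finset.mem_image.2 ⟨_, hM.2.1, perm_f0 h0 hT⟩, ?_⟩
  intro f hf hne
  obtain ⟨g, hg, rfl⟩ := Finset.mem_image.1 hf
  rw [permF_hi σ h0]
  exact hM.2.2 g hg (by rintro rfl; exact hne (perm_f0 h0 hT))

/-- Extending below gives a prepared piece. -/
theorem prep_insert {d k n : ℕ} {i0 : Fin d} {T : Finset (Fin d)} (h0 : i0 ∈ T)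
    {M : Finset (Face d)} (hM : IsSAM d k n M) (hf : (T, Pi.single i0 (-2)) ∈ M)
    (hlo : ∀ f ∈ M, f.2 i0 < -1) : insert (f0 i0 T) M ∈ Prep d k i0 T (n + 1) := by
  refine ⟨?_, Finset.mem_insert_self _ _, ?_⟩
  · have := extend_sam i0 hM h0 hf (fun f hf => by simpa using hlo f hf)
    rwa [← Pi.single_add, show (-2 : ℤ) + 1 = -1 by rfl] at this
  · intro f hf hne
    rcases Finset.mem_insert.1 hf with h | h
    · exact absurd h hne
    · have := hlo f h
      have := hi_le i0 f
      omega

theorem exists_code {d k n : ℕ} (hk : 1 < k) {i0 : Fin d} {S0 : Finset (Fin d)} (h0 : i0 ∈ S0)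
    (hc : S0.card = k) {M : Finset (Face d)} (hM : IsSAM d k (n + 1) M) :
    (∃ σ S j, ∃ N ∈ Prep d k i0 S0 (n + 1 + 2 * k), TransEquiv (dec1 i0 σ S j N) M) ∨
    (∃ σ, ∃ N ∈ Prep d k i0 S0 (n + 1 + 1), TransEquiv (dec2 i0 S0 σ N) M) := by
  have hne : M.Nonempty := by rw [← Finset.card_pos, hM.1]; omega
  obtain ⟨f1, hf1, hmax⟩ := Finset.exists_max_image M (hi i0) hne
  by_cases hcase : ∃ f ∈ M, i0 ∉ f.1 ∧ f.2 i0 = hi i0 f1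
  · left
    obtain ⟨⟨S, w⟩, hf, hS, hw⟩ := hcase
    simp only at hS hw
    set t : Fin d → ℤ := Pi.single i0 (-2) - w with ht
    set M' := M.image (translateFace t) with hM'
    have hsam : IsSAM d k (n + 1) M' := isSAM_tr t hM
    have hfM : ((S, Pi.single i0 (-2)) : Face d) ∈ M' :=
      Finset.mem_image.2 ⟨_, hf, by simp [translateFace, ht]⟩
    have hhi : ∀ f ∈ M', hi i0 f ≤ -2 := by
      intro f hf
      obtain ⟨g, hg, rfl⟩ := Finset.mem_image.1 hf
      have := hmax g hg
      rw [tr_hi, ht]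
      simp
      omega
    have hSk : S.card = k := hM.2.1 _ hf
    obtain ⟨j, hj⟩ : S.Nonempty := by rw [← Finset.card_pos]; omega
    have htow := tower_sam hk i0 hsam hS hfM (by simpa using hhi)
    set T := insert i0 (S.erase j) with hT
    have hTk : T.card = k := by
      rw [hT, Finset.card_insert_of_notMem (by simp [hS]), Finset.card_erase_of_mem hj]; omega
    have hs2 : ∀ s ∈ sides i0 S (Pi.single i0 (-2)), s.2 i0 = -2 ∧ hi i0 s = -1 := by
      intro s hs
      have := side_levels hS hs
      simpa using this
    have hpre := prep_insert (T := T) (by simp [hT]) htow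
      (Finset.mem_union_right _ (mem_sides.2 ⟨j, hj, rfl, Or.inl rfl⟩)) (by
        intro f hf
        rcases Finset.mem_union.1 hf with h | h
        · have := hhi f (Finset.mem_of_mem_erase h)
          have := le_hi i0 f
          omega
        · have := hs2 f h
          omega)
    obtain ⟨σ, hσ0, hσ⟩ := exists_perm h0 (by simp [hT] : i0 ∈ T) (hTk.trans hc.symm)
    refine ⟨σ, S, j, _, by
      have := prep_of_perm hσ0 hσ hpre
      rwa [show n + 2 * k + 1 = n + 1 + 2 * k by ring] at this, ?_⟩
    have hdec : dec1 i0 σ S j ((insert (f0 i0 T) (M'.erase (S, Pi.single i0 (-2)) ∪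
        sides i0 S (Pi.single i0 (-2)))).image (permF σ)) = M' := by
      rw [dec1, perm_image_inv]
      have hx : ∀ x ∈ M', x ≠ f0 i0 T ∧ x ∉ sides i0 S (Pi.single i0 (-2)) := by
        intro x hx
        have h1 := hhi x hx
        constructor
        · rintro rfl
          have := le_hi i0 (f0 i0 T)
          simp at this
          omega
        · intro h
          have := hs2 x h
          omega
      ext x
      simp only [Finset.mem_insert, Finset.mem_sdiff, Finset.mem_union, Finset.mem_erase]
      constructor
      · rintro (rfl | ⟨h1, h2⟩)
        · exact hfM
        · rw [← hT] at h2
          tauto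
      · intro h
        have := hx x h
        rw [← hT]
        by_cases hxe : x = (S, Pi.single i0 (-2))
        · exact Or.inl hxe
        · right; tauto
    rw [hdec]
    exact transEquiv_equivalence.symm ⟨t, rfl⟩
  · right
    obtain ⟨T, w⟩ := f1
    have hT : i0 ∈ T := by
      by_contra h
      exact hcase ⟨_, hf1, h, by simp [hi, h]⟩
    have hhw : hi i0 (T, w) = w i0 + 1 := by simp [hi, hT]
    have hlt : ∀ g ∈ M, g.2 i0 < w i0 + 1 := by
      intro g hg
      have l1 := hmax g hg
      have l2 := le_hi i0 g
      rcases lt_or_eq_of_le (l2.trans l1) with h | h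
      · omega
      · exfalso
        refine hcase ⟨g, hg, ?_, h⟩
        intro hg0
        have : hi i0 g = g.2 i0 + 1 := by simp [hi, hg0]
        omega
    set t : Fin d → ℤ := Pi.single i0 (-2) - w with ht
    set M' := M.image (translateFace t) with hM'
    have hsam : IsSAM d k (n + 1) M' := isSAM_tr t hM
    have hfM : ((T, Pi.single i0 (-2)) : Face d) ∈ M' :=
      Finset.mem_image.2 ⟨_, hf1, by simp [translateFace, ht]⟩
    have hlo : ∀ f ∈ M', f.2 i0 < -1 := by
      intro f hf
      obtain ⟨g, hg, rfl⟩ := Finset.mem_image.1 hf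
      have := hlt g hg
      simp [translateFace, ht]
      omega
    have hpre := prep_insert hT hsam hfM hlo
    have hTk : T.card = k := hM.2.1 _ hf1
    obtain ⟨σ, hσ0, hσ⟩ := exists_perm h0 hT (hTk.trans hc.symm)
    refine ⟨σ, _, prep_of_perm hσ0 hσ hpre, ?_⟩
    have hnot : f0 i0 T ∉ M' := by
      intro h
      have := hlo _ h
      simp at this
    have hdec : dec2 i0 S0 σ ((insert (f0 i0 T) M').image (permF σ)) = M' := by
      rw [dec2, Finset.image_insert, perm_f0 hσ0 hσ, Finset.erase_insert, perm_image_inv]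
      rw [← perm_f0 hσ0 hσ]
      intro h
      obtain ⟨g, hg, hgg⟩ := Finset.mem_image.1 h
      rw [(permE σ).injective hgg] at hg
      exact hnot hg
    rw [hdec]
    exact transEquiv_equivalence.symm ⟨t, rfl⟩

theorem count_upper {d k : ℕ} (hk : 1 < k) {i0 : Fin d} {S0 : Finset (Fin d)} (h0 : i0 ∈ S0)
    (hc : S0.card = k) (n : ℕ) :
    samCount d k (n + 1) ≤ (Nat.card (Equiv.Perm (Fin d) × Finset (Fin d) × Fin d) +
      Nat.card (Equiv.Perm (Fin d))) * Nat.card (Prep d k i0 S0 (n + 1 + 2 * k)) := by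
  have f1 := prep_finite (k := k) h0 hc (n + 1 + 2 * k)
  have f2 := prep_finite (k := k) h0 hc (n + 1 + 1)
  have := (card_le_of_dec (d := d) (k := k) (n := n + 1)
    (X := ((Equiv.Perm (Fin d) × Finset (Fin d) × Fin d) × Prep d k i0 S0 (n + 1 + 2 * k)) ⊕
      (Equiv.Perm (Fin d) × Prep d k i0 S0 (n + 1 + 1)))
    (fun x => match x with
      | Sum.inl y => dec1 i0 y.1.1 y.1.2.1 y.1.2.2 y.2.1
      | Sum.inr y => dec2 i0 S0 y.1 y.2.1) (by
      intro M hM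
      rcases exists_code hk h0 hc hM with ⟨σ, S, j, N, hN, h⟩ | ⟨σ, N, hN, h⟩
      · exact ⟨Sum.inl ((σ, S, j), ⟨N, hN⟩), h⟩
      · exact ⟨Sum.inr (σ, ⟨N, hN⟩), h⟩)).2
  rw [Nat.card_sum, Nat.card_prod, Nat.card_prod (Equiv.Perm (Fin d)) (Prep _ _ _ _ _)] at this
  refine this.trans ?_
  rw [add_mul]
  gcongr
  exact monotone_nat_of_le_succ (prep_mono (k := k) h0 hc) (by omega)

theorem samCount_growth_constant_exists (d k : ℕ) (hk : 1 < k) (hkd : k < d) :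
    ∃ μ : ℝ, Tendsto (fun n : ℕ => (samCount d k n : ℝ) ^ (1 / (n : ℝ))) atTop (nhds μ) := by
  obtain ⟨S0, hc⟩ : ∃ S0 : Finset (Fin d), S0.card = k := by
    obtain ⟨S, _, h⟩ := Finset.exists_subset_card_eq
      (s := (Finset.univ : Finset (Fin d))) (n := k) (by simp; omega)
    exact ⟨S, h⟩
  obtain ⟨i0, h0⟩ : S0.Nonempty := by rw [← Finset.card_pos]; omega
  refine limit_abs (fun n => samCount d k n) (fun n => Nat.card (Prep d k i0 S0 n))
    _ (2 * k) (Nat.card (St d) ^ 2) (Nat.card (Finset (Fin d))) (by omega) (prep_mono h0 hc) ?_ ?_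
    (count_upper hk h0 hc) ?_
  · have := prep_finite (k := k) h0 hc 1
    have : Nonempty (Prep d k i0 S0 1) := ⟨⟨_, prep_one hc⟩⟩
    exact Nat.card_pos
  · intro n m
    rcases n with _ | n
    · have : Nat.card (Prep d k i0 S0 0) = 0 := by
        have : IsEmpty (Prep d k i0 S0 0) := ⟨fun A => by
          have h1 := A.2.1.1
          have h2 := Finset.card_pos.2 ⟨_, A.2.2.1⟩
          omega⟩
        simp
      simp [this]
    · have : Finite (SQ d k (n + 1 + m)) := by
        rw [show n + 1 + m = n + m + 1 by ring]
        exact (samCount_upper d k (n + m)).1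
      exact (glue_count h0 (n + 1) m).1
  · intro n
    have := (samCount_upper d k n).2
    rwa [pow_mul] at this
end

section
/- For all integers d, k with 1 < k < d, the growth constant of (d,k)-fixed polyominoids exists: the limit μ^XD_{(d,k)} = lim_{n→∞} (c^XD_{(d,k),n})^{1/n} exists. -/
open Filter

namespace XDG

def key {d : ℕ} (f : Face d) : ℤ := ∑ i, f.2 i

def tr {d : ℕ} (t : Fin d → ℤ) (A : Finset (Face d)) : Finset (Face d) := A.image (translateFace t)

theorem key_translate {d : ℕ} (t : Fin d → ℤ) (f : Face d) :
    key (translateFace t f) = key f + ∑ i, t i := by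
  simp [key, translateFace, Finset.sum_add_distrib]

theorem tf_inj {d : ℕ} (t : Fin d → ℤ) : Function.Injective (translateFace t) := by
  intro a b h
  simp only [translateFace, Prod.mk.injEq, add_left_inj] at h
  exact Prod.ext h.1 h.2

theorem tf_tf {d : ℕ} (s t : Fin d → ℤ) (f : Face d) :
    translateFace s (translateFace t f) = translateFace (t + s) f := by
  simp [translateFace, add_assoc]

theorem tf_zero {d : ℕ} (f : Face d) : translateFace 0 f = f := by
  simp [translateFace]

theorem tr_tr {d : ℕ} (s t : Fin d → ℤ) (A : Finset (Face d)) : tr s (tr t A) = tr (t + s) A := by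
  simp only [tr, Finset.image_image]
  congr 1
  funext f
  exact tf_tf s t f

theorem tr_zero {d : ℕ} (A : Finset (Face d)) : tr 0 A = A := by
  ext f; simp [tr, tf_zero]

theorem tr_card {d : ℕ} (t : Fin d → ℤ) (A : Finset (Face d)) : (tr t A).card = A.card :=
  Finset.card_image_of_injective _ (tf_inj t)

theorem mem_tr {d : ℕ} (t : Fin d → ℤ) (A : Finset (Face d)) (f : Face d) :
    f ∈ tr t A ↔ ∃ a ∈ A, translateFace t a = f := by simp [tr]

theorem transEquiv_iff {d : ℕ} (A B : Finset (Face d)) : TransEquiv A B ↔ ∃ t, tr t A = B := Iff.rfl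

theorem te_equiv (d k n : ℕ) : Equivalence (fun A B : {M : Finset (Face d) // IsXD d k n M} =>
    TransEquiv A.val B.val) where
  refl A := ⟨0, tr_zero _⟩
  symm := by
    rintro A B ⟨t, h⟩
    refine ⟨-t, ?_⟩
    rw [← h]
    change tr (-t) (tr t A.1) = _
    rw [tr_tr]; simp [tr_zero]
  trans := by
    rintro A B C ⟨t, h⟩ ⟨s, h'⟩
    refine ⟨t + s, ?_⟩
    rw [← h', ← h]
    exact (tr_tr _ _ _).symm

abbrev Cls (d k n : ℕ) := Quot fun A B : {M : Finset (Face d) // IsXD d k n M} =>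
    TransEquiv A.val B.val

theorem cls_eq {d k n : ℕ} (A B : {M : Finset (Face d) // IsXD d k n M}) :
    (Quot.mk _ A : Cls d k n) = Quot.mk _ B ↔ TransEquiv A.val B.val := by
  constructor
  · intro h
    have := Quot.eqvGen_exact h
    rwa [(te_equiv d k n).eqvGen_iff] at this
  · intro h; exact Quot.sound h

/-! edges and translation -/
theorem mem_edges {d : ℕ} (f e : Face d) : e ∈ faceEdges f ↔
    ∃ i ∈ f.1, e = (f.1.erase i, f.2) ∨ e = (f.1.erase i, f.2 + Pi.single i 1) := by
  simp [faceEdges]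

theorem edges_tr {d : ℕ} (t : Fin d → ℤ) (f e : Face d) (h : e ∈ faceEdges f) :
    translateFace t e ∈ faceEdges (translateFace t f) := by
  rw [mem_edges] at *
  obtain ⟨i, hi, h | h⟩ := h
  · exact ⟨i, hi, Or.inl (by simp [h, translateFace])⟩
  · exact ⟨i, hi, Or.inr (by simp [h, translateFace, add_right_comm])⟩

theorem adj_tr {d : ℕ} (t : Fin d → ℤ) (f g : Face d) (h : FaceAdj f g) :
    FaceAdj (translateFace t f) (translateFace t g) := by
  obtain ⟨h1, e, h2, h3⟩ := h
  exact ⟨fun h => h1 (tf_inj t h), _, edges_tr t f e h2, edges_tr t g e h3⟩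

theorem adj_symm {d : ℕ} {f g : Face d} (h : FaceAdj f g) : FaceAdj g f :=
  ⟨h.1.symm, h.2.imp fun _ h => h.symm⟩

theorem conn_tr {d : ℕ} (t : Fin d → ℤ) (A : Finset (Face d)) (h : ConnectedFaces A) :
    ConnectedFaces (tr t A) := by
  intro f hf g hg
  rw [mem_tr] at hf hg
  obtain ⟨a, ha, rfl⟩ := hf
  obtain ⟨b, hb, rfl⟩ := hg
  refine Relation.ReflTransGen.lift (translateFace t) ?_ _ _ (h a ha b hb)
  rintro x y ⟨hx, hy, hxy⟩
  exact ⟨(mem_tr _ _ _).2 ⟨x, hx, rfl⟩, (mem_tr _ _ _).2 ⟨y, hy, rfl⟩, adj_tr t x y hxy⟩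

theorem xd_tr {d k n : ℕ} (t : Fin d → ℤ) (A : Finset (Face d)) (h : IsXD d k n A) :
    IsXD d k n (tr t A) := by
  refine ⟨by rw [tr_card]; exact h.1, ?_, conn_tr t A h.2.2⟩
  intro f hf
  obtain ⟨a, ha, rfl⟩ := (mem_tr _ _ _).1 hf
  exact h.2.1 a ha

theorem conn_union {d : ℕ} {A B : Finset (Face d)} (hA : ConnectedFaces A) (hB : ConnectedFaces B)
    {f g : Face d} (hf : f ∈ A) (hg : g ∈ B) (hfg : FaceAdj f g) : ConnectedFaces (A ∪ B) := by
  have monoA : ∀ x ∈ A, ∀ y ∈ A,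
      Relation.ReflTransGen (fun a b => a ∈ A ∪ B ∧ b ∈ A ∪ B ∧ FaceAdj a b) x y := fun x hx y hy =>
    Relation.ReflTransGen.mono (fun a b h => ⟨Finset.mem_union_left _ h.1,
      Finset.mem_union_left _ h.2.1, h.2.2⟩) _ _ (hA x hx y hy)
  have monoB : ∀ x ∈ B, ∀ y ∈ B,
      Relation.ReflTransGen (fun a b => a ∈ A ∪ B ∧ b ∈ A ∪ B ∧ FaceAdj a b) x y := fun x hx y hy =>
    Relation.ReflTransGen.mono (fun a b h => ⟨Finset.mem_union_right _ h.1,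
      Finset.mem_union_right _ h.2.1, h.2.2⟩) _ _ (hB x hx y hy)
  have h1 : (fun a b => a ∈ A ∪ B ∧ b ∈ A ∪ B ∧ FaceAdj a b) f g :=
    ⟨Finset.mem_union_left _ hf, Finset.mem_union_right _ hg, hfg⟩
  have h2 : (fun a b => a ∈ A ∪ B ∧ b ∈ A ∪ B ∧ FaceAdj a b) g f :=
    ⟨Finset.mem_union_right _ hg, Finset.mem_union_left _ hf, adj_symm hfg⟩
  intro x hx y hy
  rcases Finset.mem_union.1 hx with hx | hx <;> rcases Finset.mem_union.1 hy with hy | hy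
  · exact monoA x hx y hy
  · exact ((monoA x hx f hf).tail h1).trans (monoB g hg y hy)
  · exact ((monoB x hx g hg).tail h2).trans (monoA f hf y hy)
  · exact monoB x hx y hy

theorem conn_single {d : ℕ} (x : Face d) : ConnectedFaces {x} := by
  intro f hf g hg
  rw [Finset.mem_singleton] at hf hg
  subst hf; subst hg; exact Relation.ReflTransGen.refl

/-! the step -/
theorem step_adj {d : ℕ} (f : Face d) (i j : Fin d) (hi : i ∈ f.1) (hj : j ∉ f.1.erase i) :
    FaceAdj f (insert j (f.1.erase i), f.2 + Pi.single i 1) := by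
  constructor
  · intro h
    have := congrFun (congrArg Prod.snd h) i
    simp at this
  · refine ⟨(f.1.erase i, f.2 + Pi.single i 1), (mem_edges _ _).2 ⟨i, hi, Or.inr rfl⟩,
      (mem_edges _ _).2 ⟨j, by simp, Or.inl ?_⟩⟩
    simp only [Prod.mk.injEq, and_true]
    rw [Finset.erase_insert hj]

theorem key_step {d : ℕ} (S : Finset (Fin d)) (f : Face d) (i : Fin d) :
    key (S, f.2 + Pi.single i 1) = key f + 1 := by
  simp [key, Finset.sum_add_distrib]

theorem exists_step {d k r : ℕ} (hk : 1 < k) (f : Face d) (hf : f.1.card = k)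
    (T : Finset (Fin d)) (hT : T.card = k) (hr : (f.1 \ T).card ≤ k - r) :
    ∃ g : Face d, FaceAdj f g ∧ g.1.card = k ∧ key g = key f + 1 ∧
      (g.1 \ T).card ≤ k - (r + 1) := by
  rcases Finset.eq_empty_or_nonempty (f.1 \ T) with h | ⟨i, hi⟩
  · have hst : f.1 = T := Finset.eq_of_subset_of_card_le (Finset.sdiff_eq_empty_iff_subset.1 h)
      (by omega)
    obtain ⟨i, hi⟩ : f.1.Nonempty := Finset.card_pos.1 (by omega)
    refine ⟨_, step_adj f i i hi (by simp), ?_, key_step _ _ _, ?_⟩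
    · simp [Finset.insert_erase hi, hf]
    · simp only [Finset.insert_erase hi, h, Finset.card_empty]; omega
  · rw [Finset.mem_sdiff] at hi
    have : (T \ f.1).card = (f.1 \ T).card := by
      have h1 := Finset.card_sdiff_add_card_inter T f.1
      have h2 := Finset.card_sdiff_add_card_inter f.1 T
      rw [Finset.inter_comm] at h2
      omega
    obtain ⟨j, hj⟩ : (T \ f.1).Nonempty := by
      rw [← Finset.card_pos, this, Finset.card_pos]
      exact ⟨i, by simpa using hi⟩
    rw [Finset.mem_sdiff] at hj
    have hj' : j ∉ f.1.erase i := fun h => hj.2 (Finset.mem_of_mem_erase h)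
    refine ⟨_, step_adj f i j hi.1 hj', ?_, key_step _ _ _, ?_⟩
    · simp only []
      rw [Finset.card_insert_of_notMem hj', Finset.card_erase_of_mem hi.1]; omega
    · have : (insert j (f.1.erase i)) \ T = (f.1 \ T).erase i := by
        ext x; simp only [Finset.mem_sdiff, Finset.mem_insert, Finset.mem_erase]
        constructor
        · rintro ⟨rfl | h, h'⟩
          · exact absurd hj.1 h'
          · exact ⟨h.1, h.2, h'⟩
        · rintro ⟨h, h', h''⟩; exact ⟨Or.inr ⟨h, h'⟩, h''⟩
      simp only [this]
      rw [Finset.card_erase_of_mem (Finset.mem_sdiff.2 hi)]; omega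

theorem extend {d k n : ℕ} (hk : 1 < k) (hn : 1 ≤ n) (A : Finset (Face d)) (hA : IsXD d k n A)
    (T : Finset (Fin d)) (hT : T.card = k) (r : ℕ) :
    ∃ A' f, A ⊆ A' ∧ IsXD d k (n + r) A' ∧ f ∈ A' ∧ (∀ x ∈ A', key x ≤ key f) ∧
      (∀ x ∈ A, ∀ y ∈ A', y ∉ A → key x < key y) ∧ (f.1 \ T).card ≤ k - r := by
  induction r with
  | zero =>
    obtain ⟨f, hf, hm⟩ := Finset.exists_max_image A key (Finset.card_pos.1 (by rw [hA.1]; omega))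
    refine ⟨A, f, subset_rfl, hA, hf, hm, fun _ _ y hy hy' => absurd hy hy', ?_⟩
    have := Finset.card_le_card (Finset.sdiff_subset (s := f.1) (t := T))
    rw [hA.2.1 f hf] at this
    simpa using this
  | succ r ih =>
    obtain ⟨A', f, h1, h2, h3, h4, h5, h6⟩ := ih
    obtain ⟨g, g1, g2, g3, g4⟩ := exists_step hk f (h2.2.1 f h3) T hT h6
    have hg : g ∉ A' := fun h => by have := h4 g h; omega
    refine ⟨A' ∪ {g}, g, h1.trans Finset.subset_union_left, ⟨?_, ?_, ?_⟩, by simp, ?_, ?_, g4⟩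
    · rw [Finset.card_union_of_disjoint (by simpa using hg), h2.1]; simp [add_assoc]
    · intro x hx
      rcases Finset.mem_union.1 hx with hx | hx
      · exact h2.2.1 x hx
      · rw [Finset.mem_singleton] at hx; rw [hx]; exact g2
    · exact conn_union h2.2.2 (conn_single g) h3 (Finset.mem_singleton_self g) g1
    · intro x hx
      rcases Finset.mem_union.1 hx with hx | hx
      · have := h4 x hx; omega
      · rw [Finset.mem_singleton] at hx; rw [hx]
    · intro x hx y hy hyA
      rcases Finset.mem_union.1 hy with hy | hy
      · exact h5 x hx y hy hyA
      · rw [Finset.mem_singleton] at hy; rw [hy]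
        have := h4 x (h1 hx); omega

theorem concat {d k n m : ℕ} (hk : 1 < k) (hn : 1 ≤ n) (hm : 1 ≤ m) (A B : Finset (Face d))
    (hA : IsXD d k n A) (hB : IsXD d k m B) :
    ∃ U s, IsXD d k (n + m + k) U ∧ A ⊆ U ∧ tr s B ⊆ U ∧
      (∀ x ∈ A, ∀ y ∈ U, y ∉ A → key x < key y) ∧
      (∀ x ∈ tr s B, ∀ y ∈ U, y ∉ tr s B → key y < key x) := by
  obtain ⟨b, hb, hmin⟩ := Finset.exists_min_image B key (Finset.card_pos.1 (by rw [hB.1]; omega))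
  obtain ⟨A', f, h1, h2, h3, h4, h5, h6⟩ := extend hk hn A hA b.1 (hB.2.1 b hb) k
  have hst : f.1 = b.1 := Finset.eq_of_subset_of_card_le
    (Finset.sdiff_eq_empty_iff_subset.1 (Finset.card_eq_zero.1 (by omega)))
    (by rw [h2.2.1 f h3, hB.2.1 b hb])
  obtain ⟨i, hi⟩ : f.1.Nonempty := Finset.card_pos.1 (by rw [h2.2.1 f h3]; omega)
  have hadj := step_adj f i i hi (by simp)
  rw [Finset.insert_erase hi] at hadj
  set s : Fin d → ℤ := f.2 + Pi.single i 1 - b.2 with hs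
  have hbs : translateFace s b = (f.1, f.2 + Pi.single i 1) := by
    simp [translateFace, hs, hst]
  have hkb : key (translateFace s b) = key f + 1 := by rw [hbs, key_step]
  have hlow : ∀ x ∈ tr s B, key f < key x := by
    intro x hx
    obtain ⟨y, hy, rfl⟩ := (mem_tr _ _ _).1 hx
    have := hmin y hy
    rw [key_translate] at hkb ⊢
    omega
  have hBs := xd_tr s B hB
  refine ⟨A' ∪ tr s B, s, ⟨?_, ?_, ?_⟩, h1.trans Finset.subset_union_left,
    Finset.subset_union_right, ?_, ?_⟩
  · rw [Finset.card_union_of_disjoint, h2.1, hBs.1]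
    · omega
    · rw [Finset.disjoint_left]
      intro x hx hx'
      have := h4 x hx; have := hlow x hx'; omega
  · intro x hx
    rcases Finset.mem_union.1 hx with hx | hx
    · exact h2.2.1 x hx
    · exact hBs.2.1 x hx
  · exact conn_union h2.2.2 hBs.2.2 h3 ((mem_tr _ _ _).2 ⟨b, hb, hbs⟩) hadj
  · intro x hx y hy hyA
    rcases Finset.mem_union.1 hy with hy | hy
    · exact h5 x hx y hy hyA
    · have := h4 x (h1 hx); have := hlow y hy; omega
  · intro x hx y hy hyA
    rcases Finset.mem_union.1 hy with hy | hy
    · have := h4 y hy; have := hlow x hx; omega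
    · exact absurd hy hyA

theorem lower_unique {d : ℕ} (κ : Face d → ℤ) {U A B : Finset (Face d)} (hA : A ⊆ U) (hB : B ⊆ U)
    (hc : A.card = B.card)
    (h1 : ∀ x ∈ A, ∀ y ∈ U, y ∉ A → κ x < κ y) (h2 : ∀ x ∈ B, ∀ y ∈ U, y ∉ B → κ x < κ y) :
    A = B := by
  by_contra hne
  have hAB : ¬ A ⊆ B := fun h => hne (Finset.eq_of_subset_of_card_le h hc.ge)
  have hBA : ¬ B ⊆ A := fun h => hne (Finset.eq_of_subset_of_card_le h hc.le).symm
  obtain ⟨a, ha, ha'⟩ := Finset.not_subset.1 hAB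
  obtain ⟨b, hb, hb'⟩ := Finset.not_subset.1 hBA
  have := h1 a ha b (hB hb) hb'
  have := h2 b hb a (hA ha) ha'
  omega

/-- transport of separation under translation -/
theorem sep_tr {d : ℕ} (σ : ℤ) (t : Fin d → ℤ) {U A : Finset (Face d)}
    (h1 : ∀ x ∈ A, ∀ y ∈ U, y ∉ A → σ * key x < σ * key y) :
    ∀ x ∈ tr t A, ∀ y ∈ tr t U, y ∉ tr t A → σ * key x < σ * key y := by
  intro x hx y hy hyA
  obtain ⟨a, ha, rfl⟩ := (mem_tr _ _ _).1 hx
  obtain ⟨b, hb, rfl⟩ := (mem_tr _ _ _).1 hy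
  have := h1 a ha b hb (fun h => hyA ((mem_tr _ _ _).2 ⟨b, h, rfl⟩))
  rw [key_translate, key_translate, mul_add, mul_add]
  omega

theorem tr_mono {d : ℕ} (t : Fin d → ℤ) {A U : Finset (Face d)} (h : A ⊆ U) : tr t A ⊆ tr t U :=
  Finset.image_subset_image h

theorem decode {d : ℕ} (σ : ℤ) (t : Fin d → ℤ) {U A U' A' : Finset (Face d)}
    (hA : A ⊆ U) (hA' : A' ⊆ U') (hc : A.card = A'.card) (hU : tr t U = U')
    (h1 : ∀ x ∈ A, ∀ y ∈ U, y ∉ A → σ * key x < σ * key y)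
    (h2 : ∀ x ∈ A', ∀ y ∈ U', y ∉ A' → σ * key x < σ * key y) : tr t A = A' := by
  subst hU
  exact lower_unique (fun f => σ * key f) (tr_mono t hA) hA' (by rw [tr_card, hc]) (sep_tr σ t h1) h2

/-! upper bound -/
abbrev Mv (d : ℕ) := Finset (Fin d) × (Fin d → Fin 3)

def act {d : ℕ} (a : Mv d) (f : Face d) : Face d := (a.1, fun i => f.2 i + ((a.2 i : ℕ) : ℤ) - 1)

def trace {d : ℕ} : List (Mv d) → Face d → Finset (Face d)
  | [], f => {f}
  | a :: L, f => insert f (trace L (act a f))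

theorem edge_range {d : ℕ} (f e : Face d) (h : e ∈ faceEdges f) (i : Fin d) :
    f.2 i ≤ e.2 i ∧ e.2 i ≤ f.2 i + 1 := by
  obtain ⟨j, hj, rfl | rfl⟩ := (mem_edges _ _).1 h
  · simp
  · by_cases hij : i = j
    · subst hij; simp
    · simp [hij]

theorem exists_act {d : ℕ} {f g : Face d} (h : FaceAdj f g) : ∃ a, act a f = g := by
  obtain ⟨_, e, he, he'⟩ := h
  refine ⟨(g.1, fun i => ⟨(g.2 i - f.2 i + 1).toNat, ?_⟩), ?_⟩
  · have := edge_range f e he i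
    have := edge_range g e he' i
    omega
  · refine Prod.ext rfl ?_
    funext i
    have := edge_range f e he i
    have := edge_range g e he' i
    simp only [act]
    omega

theorem self_mem_trace {d : ℕ} (L : List (Mv d)) (f : Face d) : f ∈ trace L f := by
  cases L <;> simp [trace]

theorem trace_insert {d : ℕ} (L : List (Mv d)) (f u x : Face d) (hu : u ∈ trace L f)
    (hux : FaceAdj u x) : ∃ L', L'.length = L.length + 2 ∧ trace L' f = insert x (trace L f) := by
  obtain ⟨a, ha⟩ := exists_act hux
  obtain ⟨b, hb⟩ := exists_act (adj_symm hux)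
  induction L generalizing f with
  | nil =>
    simp only [trace, Finset.mem_singleton] at hu
    subst hu
    refine ⟨[a, b], rfl, ?_⟩
    simp only [trace, ha, hb]
    ext y; simp
  | cons c L ih =>
    by_cases huf : u = f
    · subst huf
      refine ⟨a :: b :: c :: L, rfl, ?_⟩
      simp only [trace, ha, hb]
      ext y; simp
    · simp only [trace, Finset.mem_insert, huf, false_or] at hu
      obtain ⟨L', h1, h2⟩ := ih _ hu
      refine ⟨c :: L', by simp [h1], ?_⟩
      simp only [trace, h2]
      exact Finset.insert_comm _ _ _

theorem exists_boundary {d : ℕ} {M P : Finset (Face d)} (hM : ConnectedFaces M) (hP : P ⊆ M)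
    {f g : Face d} (hf : f ∈ P) (hg : g ∈ M) (hgP : g ∉ P) :
    ∃ u ∈ P, ∃ x ∈ M, x ∉ P ∧ FaceAdj u x := by
  by_contra hcon
  push Not at hcon
  have : ∀ y, Relation.ReflTransGen (fun a b => a ∈ M ∧ b ∈ M ∧ FaceAdj a b) f y → y ∈ P := by
    intro y hy
    induction hy with
    | refl => exact hf
    | tail _ h ih =>
      by_contra hc
      exact hcon _ ih _ h.2.1 hc h.2.2
  exact hgP (this g (hM f (hP hf) g hg))

theorem exists_trace {d n : ℕ} {M : Finset (Face d)} (hM : ConnectedFaces M) (hc : M.card = n + 1)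
    {f : Face d} (hf : f ∈ M) : ∃ L : List (Mv d), L.length = 2 * n ∧ trace L f = M := by
  have : ∀ j ≤ n, ∃ L : List (Mv d), L.length = 2 * j ∧ trace L f ⊆ M ∧
      (trace L f).card = j + 1 := by
    intro j hj
    induction j with
    | zero => exact ⟨[], rfl, by simpa [trace] using hf, by simp [trace]⟩
    | succ j ih =>
      obtain ⟨L, h1, h2, h3⟩ := ih (by omega)
      obtain ⟨g, hg, hg'⟩ : ∃ g ∈ M, g ∉ trace L f :=
        Finset.exists_mem_notMem_of_card_lt_card (by omega)
      obtain ⟨u, hu, x, hx, hx', hux⟩ := exists_boundary hM h2 (self_mem_trace L f) hg hg'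
      obtain ⟨L', h1', h2'⟩ := trace_insert L f u x hu hux
      refine ⟨L', by omega, ?_, ?_⟩
      · rw [h2']; exact Finset.insert_subset hx h2
      · rw [h2', Finset.card_insert_of_notMem hx', h3]
  obtain ⟨L, h1, h2, h3⟩ := this n le_rfl
  exact ⟨L, h1, Finset.eq_of_subset_of_card_le h2 (by omega)⟩

theorem exists_code {d k n : ℕ} (q : Cls d k (n + 1)) :
    ∃ c : Finset (Fin d) × List.Vector (Mv d) (2 * n),
      ∃ h : IsXD d k (n + 1) (trace c.2.1 (c.1, 0)), q = Quot.mk _ ⟨_, h⟩ := by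
  obtain ⟨⟨A, hA⟩, rfl⟩ := Quot.exists_rep q
  obtain ⟨f, hf⟩ : A.Nonempty := Finset.card_pos.1 (by rw [hA.1]; omega)
  have hA' := xd_tr (-f.2) A hA
  obtain ⟨L, h1, h2⟩ := exists_trace hA'.2.2 hA'.1 ((mem_tr _ _ _).2 ⟨f, hf, rfl⟩)
  have h3 : translateFace (-f.2) f = (f.1, 0) := by simp [translateFace]
  rw [h3] at h2
  refine ⟨(f.1, ⟨L, h1⟩), ?_, ?_⟩
  · simp only [h2]; exact hA'
  · rw [cls_eq]
    exact ⟨-f.2, h2.symm⟩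

theorem exists_inj (d k n : ℕ) : ∃ F : Cls d k (n + 1) → Finset (Fin d) × List.Vector (Mv d) (2 * n),
    Function.Injective F := by
  choose F hF h using exists_code (d := d) (k := k) (n := n)
  refine ⟨F, fun p q hpq => ?_⟩
  rw [h p, h q]
  congr 2
  rw [hpq]

theorem cls_finite (d k n : ℕ) : Finite (Cls d k (n + 1)) := by
  obtain ⟨F, hF⟩ := exists_inj d k n
  exact Finite.of_injective F hF

theorem upper (d k n : ℕ) : xdCount d k (n + 1) ≤ 2 ^ d * (Fintype.card (Mv d)) ^ (2 * n) := by
  obtain ⟨F, hF⟩ := exists_inj d k n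
  have := Nat.card_le_card_of_injective F hF
  refine this.trans (le_of_eq ?_)
  rw [Nat.card_eq_fintype_card, Fintype.card_prod, card_vector]
  simp

theorem mul_bound {d k n m : ℕ} (hk : 1 < k) (hn : 1 ≤ n) (hm : 1 ≤ m) :
    xdCount d k n * xdCount d k m ≤ xdCount d k (n + m + k) := by
  have hfin : Finite (Cls d k (n + m + k)) := by
    have := cls_finite d k (n + m + k - 1)
    rwa [Nat.sub_add_cancel (by omega)] at this
  have key0 : ∀ p : Cls d k n × Cls d k m, ∃ A B U : Finset (Face d), ∃ s,
      ∃ hA : IsXD d k n A, ∃ hB : IsXD d k m B, ∃ _ : IsXD d k (n + m + k) U,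
      p = (Quot.mk _ ⟨A, hA⟩, Quot.mk _ ⟨B, hB⟩) ∧ A ⊆ U ∧ tr s B ⊆ U ∧
      (∀ x ∈ A, ∀ y ∈ U, y ∉ A → key x < key y) ∧
      (∀ x ∈ tr s B, ∀ y ∈ U, y ∉ tr s B → key y < key x) := by
    rintro ⟨p, q⟩
    obtain ⟨⟨A, hA⟩, rfl⟩ := Quot.exists_rep p
    obtain ⟨⟨B, hB⟩, rfl⟩ := Quot.exists_rep q
    obtain ⟨U, s, hU, h⟩ := concat hk hn hm A B hA hB
    exact ⟨A, B, U, s, hA, hB, hU, rfl, h⟩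
  choose A B U s hA hB hU hp h1 h2 h3 h4 using key0
  let F : Cls d k n × Cls d k m → Cls d k (n + m + k) := fun p => Quot.mk _ ⟨U p, hU p⟩
  have hF : Function.Injective F := by
    intro p q hpq
    obtain ⟨t, ht⟩ := (cls_eq _ _).1 hpq
    change tr t (U p) = U q at ht
    rw [hp p, hp q]
    have e1 : tr t (A p) = A q := decode 1 t (h1 p) (h1 q) (by rw [(hA p).1, (hA q).1]) ht
      (by simpa using h3 p) (by simpa using h3 q)
    have e2 : tr t (tr (s p) (B p)) = tr (s q) (B q) := decode (-1) t (h2 p) (h2 q)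
      (by rw [tr_card, tr_card, (hB p).1, (hB q).1]) ht (by simpa using h4 p) (by simpa using h4 q)
    refine Prod.ext ((cls_eq _ _).2 ⟨t, e1⟩) ((cls_eq _ _).2 ⟨s p + t + -s q, ?_⟩)
    change tr _ (B p) = B q
    rw [← tr_tr, ← tr_tr, e2, tr_tr]
    simp [tr_zero]
  have := Nat.card_le_card_of_injective F hF
  rwa [Nat.card_prod] at this

theorem exists_T {d k : ℕ} (hkd : k < d) : ∃ T : Finset (Fin d), T.card = k := by
  obtain ⟨T, -, hT⟩ := Finset.exists_subset_card_eq (s := (Finset.univ : Finset (Fin d))) (n := k)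
    (by simpa using hkd.le)
  exact ⟨T, hT⟩

theorem mono_bound {d k n r : ℕ} (hk : 1 < k) (hkd : k < d) (hn : 1 ≤ n) :
    xdCount d k n ≤ xdCount d k (n + r) := by
  obtain ⟨T, hT⟩ := exists_T hkd
  have hfin : Finite (Cls d k (n + r)) := by
    have := cls_finite d k (n + r - 1)
    rwa [Nat.sub_add_cancel (by omega)] at this
  have key0 : ∀ p : Cls d k n, ∃ A U : Finset (Face d), 
      ∃ hA : IsXD d k n A, ∃ _ : IsXD d k (n + r) U,
      p = Quot.mk _ ⟨A, hA⟩ ∧ A ⊆ U ∧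
      (∀ x ∈ A, ∀ y ∈ U, y ∉ A → key x < key y) := by
    intro p
    obtain ⟨⟨A, hA⟩, rfl⟩ := Quot.exists_rep p
    obtain ⟨U, f, h, hU, -, -, h5, -⟩ := extend hk hn A hA T hT r
    exact ⟨A, U, hA, hU, rfl, h, h5⟩
  choose A U hA hU hp h1 h3 using key0
  let F : Cls d k n → Cls d k (n + r) := fun p => Quot.mk _ ⟨U p, hU p⟩
  have hF : Function.Injective F := by
    intro p q hpq
    obtain ⟨t, ht⟩ := (cls_eq _ _).1 hpq
    change tr t (U p) = U q at ht
    rw [hp p, hp q]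
    have e1 : tr t (A p) = A q := decode 1 t (h1 p) (h1 q) (by rw [(hA p).1, (hA q).1]) ht
      (by simpa using h3 p) (by simpa using h3 q)
    exact (cls_eq _ _).2 ⟨t, e1⟩
  exact Nat.card_le_card_of_injective F hF

theorem pos {d k n : ℕ} (hk : 1 < k) (hkd : k < d) (hn : 1 ≤ n) : 1 ≤ xdCount d k n := by
  obtain ⟨T, hT⟩ := exists_T hkd
  have h1 : 1 ≤ xdCount d k 1 := by
    have := cls_finite d k 0
    have hne : Nonempty (Cls d k 1) := ⟨Quot.mk _ ⟨{(T, 0)}, by simp, by simpa using hT,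
      conn_single _⟩⟩
    exact Nat.card_pos
  have h2 := mono_bound (r := n - 1) hk hkd (le_refl 1)
  rw [Nat.add_sub_cancel' hn] at h2
  omega

noncomputable def u (d k : ℕ) (n : ℕ) : ℝ := if n ≤ k then 0 else -Real.log (xdCount d k (n - k))

theorem u_sub {d k : ℕ} (hk : 1 < k) (hkd : k < d) : Subadditive (u d k) := by
  have lognn : ∀ n, 1 ≤ n → 0 ≤ Real.log (xdCount d k n) := fun n hn =>
    Real.log_nonneg (by exact_mod_cast pos hk hkd hn)
  have lpos : ∀ n, 1 ≤ n → (0 : ℝ) < xdCount d k n := fun n hn => by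
    exact_mod_cast pos hk hkd hn
  have hmono : ∀ n N, 1 ≤ n → n ≤ N → Real.log (xdCount d k n) ≤ Real.log (xdCount d k N) := by
    intro n N hn hN
    apply Real.log_le_log (lpos n hn)
    have := mono_bound (r := N - n) hk hkd hn
    rw [Nat.add_sub_cancel' hN] at this
    exact_mod_cast this
  intro m n
  unfold u
  by_cases hm : m ≤ k <;> by_cases hn : n ≤ k
  · rw [if_pos hm, if_pos hn]
    split_ifs with h
    · simp
    · have := lognn (m + n - k) (by omega); linarith
  · rw [if_pos hm, if_neg hn, if_neg (by omega)]
    have := hmono (n - k) (m + n - k) (by omega) (by omega); linarith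
  · rw [if_neg hm, if_pos hn, if_neg (by omega)]
    have := hmono (m - k) (m + n - k) (by omega) (by omega); linarith
  · rw [if_neg hm, if_neg hn, if_neg (by omega)]
    have h := mul_bound (d := d) (n := m - k) (m := n - k) hk (by omega) (by omega)
    rw [show m - k + (n - k) + k = m + n - k by omega] at h
    have h' : (xdCount d k (m - k) : ℝ) * xdCount d k (n - k) ≤ xdCount d k (m + n - k) := by
      exact_mod_cast h
    have p1 := lpos (m - k) (by omega)
    have p2 := lpos (n - k) (by omega)
    have := Real.log_le_log (mul_pos p1 p2) h'
    rw [Real.log_mul p1.ne' p2.ne'] at this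
    linarith

theorem u_bdd {d k : ℕ} (hk : 1 < k) (hkd : k < d) :
    BddBelow (Set.range fun n => u d k n / n) := by
  set K : ℝ := Real.log (Fintype.card (Mv d)) with hK
  have hKpos : 0 < Fintype.card (Mv d) := Fintype.card_pos
  have hK0 : 0 ≤ K := Real.log_natCast_nonneg _
  have hD0 : 0 ≤ Real.log 2 := Real.log_nonneg (by norm_num)
  refine ⟨-(d * Real.log 2 + 2 * K), ?_⟩
  rintro _ ⟨n, rfl⟩
  have hdd : (0 : ℝ) ≤ d * Real.log 2 := by positivity
  simp only [u]
  split_ifs with h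
  · simp; linarith
  · have hn : (1 : ℝ) ≤ n := by exact_mod_cast (by omega : 1 ≤ n)
    rw [le_div_iff₀ (by linarith)]
    obtain ⟨j, hj⟩ : ∃ j, n - k = j + 1 := ⟨n - k - 1, by omega⟩
    rw [hj]
    have hp : (0 : ℝ) < xdCount d k (j + 1) := by exact_mod_cast pos hk hkd (by omega)
    have hu : (xdCount d k (j + 1) : ℝ) ≤ 2 ^ d * (Fintype.card (Mv d) : ℝ) ^ (2 * j) := by
      exact_mod_cast upper d k j
    have hKp : (0 : ℝ) < Fintype.card (Mv d) := by exact_mod_cast hKpos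
    have := Real.log_le_log hp hu
    rw [Real.log_mul (by positivity) (by positivity), Real.log_pow, Real.log_pow, ← hK] at this
    push_cast at this
    have hjn : (j : ℝ) ≤ n := by exact_mod_cast (by omega : j ≤ n)
    nlinarith [mul_le_mul_of_nonneg_right hjn hK0, mul_le_mul_of_nonneg_right hn hdd]

end XDG

theorem xdCount_growth_constant_exists (d k : ℕ) (hk : 1 < k) (hkd : k < d) :
    ∃ μ : ℝ, Tendsto (fun n : ℕ => (xdCount d k n : ℝ) ^ (1 / (n : ℝ))) atTop (nhds μ) := by
  have hl := (XDG.u_sub hk hkd).tendsto_lim (XDG.u_bdd hk hkd)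
  set L := (XDG.u_sub hk hkd).lim
  refine ⟨Real.exp (-L), ?_⟩
  have h1 := (tendsto_add_atTop_iff_nat k).2 hl
  have h2 : Tendsto (fun n : ℕ => 1 + (k : ℝ) / n) atTop (nhds (1 + 0)) :=
    tendsto_const_nhds.add (tendsto_const_div_atTop_nhds_zero_nat _)
  have h3 := (Real.continuous_exp.tendsto _).comp (h1.mul h2).neg
  simp only [add_zero, mul_one] at h3
  refine h3.congr' ?_
  filter_upwards [eventually_ge_atTop 1] with n hn
  have hp : (0 : ℝ) < xdCount d k n := by exact_mod_cast XDG.pos hk hkd hn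
  rw [Real.rpow_def_of_pos hp]
  simp only [Function.comp, XDG.u]
  rw [if_neg (by omega), Nat.add_sub_cancel]
  congr 1
  have hn' : (n : ℝ) ≠ 0 := by exact_mod_cast (by omega : n ≠ 0)
  have hn2 : ((n : ℝ) + k) ≠ 0 := by positivity
  push_cast
  field_simp
end
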